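/- arXiv:1902.04054 — 2 statements merged into one kernel-verified Lean document; each statement's English description precedes it below -/
import Mathlib

section
/- (Kahane's convexity inequality.) Let K ⊂ ℝ^d be compact, let ρ be a finite Borel measure on K, and let X and Y be centered continuous Gaussian fields on K such that E[X(x)·X(y)] ≤ E[Y(x)·Y(y)] for all x, y ∈ K. Then for every convex function F : [0, ∞) → ℝ with at most polynomial growth at infinity (i.e. there exist A > 0 and N ∈ ℕ with |F(u)| ≤ A·(1 + u^N) for all u ≥ 0), one has E[ F( ∫_K exp( X(x) − (1/2)·E[X(x)²] ) ρ(dx) ) ] ≤ E[ F( ∫_K exp( Y(x) − (1/2)·E[Y(x)²] ) ρ(dx) ) ], both expectations being finite. -/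
open MeasureTheory ProbabilityTheory Filter

/-!
The proof replaces the covariance of `X` by that of `Y` in many small steps, in the manner of
Lindeberg, which avoids Gaussian integration by parts.

*Finite dimensions, smooth convex `f`.* Write `gexp f C p` for the expectation of
`f (∑ pᵢ exp (zᵢ - Cᵢᵢ / 2))`, where `z` is centered Gaussian with covariance `C` and `p ≥ 0`.
If `z` is the sum of independent Gaussian vectors with covariances `A` and `B`, the normalized
exponentials multiply. Conditionally on the first summand, put `qᵢ = pᵢ exp (xᵢ - Aᵢᵢ / 2)` and
`εᵢ = exp (yᵢ - Bᵢᵢ / 2)`, so that `E εᵢ = 1` and `E (εᵢ - 1)(εⱼ - 1) = exp Bᵢⱼ - 1`. A second-order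
Taylor expansion of `f` at `w = ∑ qᵢ` gives (`abs_gexp_sub_le`)

  `E f (∑ qᵢ εᵢ) = f w + f'' w / 2 * ∑ᵢⱼ qᵢ qⱼ (exp Bᵢⱼ - 1) + O (third moments)`.

The second-order term is monotone in `B` because `f'' ≥ 0` and `q ≥ 0`, and the remainder is
`O (h ^ (3 / 2))` when `B` is of size `h` (`gexp_step`). Going from `C` to `C'` in `N` steps of size
`h = 1 / N` costs `O (N ^ (-1 / 2))`, which tends to zero (`gexp_mono`).

*Fields.* Sampling the field at the values of simple functions converging to the identity
approximates the mass in `L¹` (`tendsto_mass_comp`); this gives the inequality for Lipschitz smooth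
convex `f`.

*General `F`.* A convex function continuous on `[0, ∞)` is an increasing limit of finite maxima of
affine functions (`exists_affMax_tendsto`), and each such maximum is a uniform limit of the smooth
convex functions `β⁻¹ log ∑ exp (β (aₖ u + bₖ))`. Finally `F` may jump at `0`; the mass is positive
unless `ρ` vanishes, and `u ↦ F (u + δ)` is continuous on `[0, ∞)` for `δ > 0`, so `δ → 0` concludes
by dominated convergence. Domination comes from the growth bound on `F` and the finiteness of all
moments of the mass (`integrable_mass_pow`).
-/

namespace KahaneConvexity

open Topology

/-! ### Smooth convex test functions -/

/-- `f` is a twice differentiable convex function on `ℝ` with derivatives `f1`, `f2`, such that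
both `f` and `f2` are Lipschitz with constant `L`. -/
structure IsTest (f f1 f2 : ℝ → ℝ) (L : ℝ) : Prop where
  deriv1 : ∀ u, HasDerivAt f (f1 u) u
  deriv2 : ∀ u, HasDerivAt f1 (f2 u) u
  bound1 : ∀ u, |f1 u| ≤ L
  nonneg2 : ∀ u, 0 ≤ f2 u
  lip2 : ∀ u v, |f2 u - f2 v| ≤ L * |u - v|

lemma abs_le_of_deriv_bound {h h' : ℝ → ℝ} {C : ℝ} {k : ℕ} (hC : 0 ≤ C)
    (hd : ∀ x, HasDerivAt h (h' x) x) (h0 : h 0 = 0) (hb : ∀ x, |h' x| ≤ C * |x| ^ k) (x : ℝ) :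
    |h x| ≤ C * |x| ^ (k + 1) := by
  have := (convex_closedBall (0 : ℝ) |x|).norm_image_sub_le_of_norm_hasDerivWithin_le
    (f := h) (f' := h') (C := C * |x| ^ k) (x := 0) (y := x)
    (fun y _ => (hd y).hasDerivWithinAt)
    (fun y hy => by
      have hy' : |y| ≤ |x| := by simpa using hy
      rw [Real.norm_eq_abs]
      refine (hb y).trans ?_
      gcongr)
    (by simp) (by simp)
  simpa [h0, pow_succ, mul_assoc] using this

namespace IsTest

variable {f f1 f2 : ℝ → ℝ} {L : ℝ}

lemma L_nonneg (hf : IsTest f f1 f2 L) : 0 ≤ L := (abs_nonneg _).trans (hf.bound1 0)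

lemma continuous (hf : IsTest f f1 f2 L) : Continuous f :=
  continuous_iff_continuousAt.2 fun u => (hf.deriv1 u).continuousAt

lemma lipschitz (hf : IsTest f f1 f2 L) (u v : ℝ) : |f u - f v| ≤ L * |u - v| := by
  have := abs_le_of_deriv_bound (h := fun x => f (v + x) - f v) (h' := fun x => f1 (v + x))
    (k := 0) hf.L_nonneg
    (fun x => by simpa using ((hf.deriv1 (v + x)).comp_const_add v x).sub_const (f v))
    (by simp) (fun x => by simpa using hf.bound1 _) (u - v)
  simpa using this

lemma abs_le (hf : IsTest f f1 f2 L) (u : ℝ) : |f u| ≤ |f 0| + L * |u| := by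
  have h1 := hf.lipschitz u 0
  have h2 := abs_sub_abs_le_abs_sub (f u) (f 0)
  rw [sub_zero] at h1
  linarith

lemma taylor (hf : IsTest f f1 f2 L) (w x : ℝ) :
    |f (w + x) - f w - f1 w * x - f2 w * x ^ 2 / 2| ≤ L * |x| ^ 3 := by
  refine abs_le_of_deriv_bound (k := 2)
    (h := fun x => f (w + x) - f w - f1 w * x - f2 w * x ^ 2 / 2)
    (h' := fun x => f1 (w + x) - f1 w - f2 w * x) hf.L_nonneg (fun x => ?_) (by simp)
    (fun x => ?_) x
  · have h1 := ((hf.deriv1 (w + x)).comp_const_add w x).sub_const (f w)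
    have h2 := (hasDerivAt_id x).const_mul (f1 w)
    have h3 := (((hasDerivAt_id x).pow 2).const_mul (f2 w)).div_const 2
    convert! (h1.sub h2).sub h3 using 1
    simp
    ring
  · refine abs_le_of_deriv_bound (k := 1) (h := fun x => f1 (w + x) - f1 w - f2 w * x)
      (h' := fun x => f2 (w + x) - f2 w) hf.L_nonneg (fun x => ?_) (by simp)
      (fun x => by simpa using hf.lip2 (w + x) w) x
    have h1 := ((hf.deriv2 (w + x)).comp_const_add w x).sub_const (f1 w)
    have h2 := (hasDerivAt_id x).const_mul (f2 w)
    convert! h1.sub h2 using 1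
    simp

end IsTest

/-- The weighted partition function `∑ₖ aₖʲ exp (β (aₖ u + bₖ))` over `k ≤ n`. -/
noncomputable def softSum (a b : ℕ → ℝ) (n : ℕ) (β : ℝ) (j : ℕ) (u : ℝ) : ℝ :=
  ∑ k ∈ Finset.range (n + 1), a k ^ j * Real.exp (β * (a k * u + b k))

/-- The soft maximum `β⁻¹ log ∑ₖ exp (β (aₖ u + bₖ))` of the affine functions `u ↦ aₖ u + bₖ`,
`k ≤ n`. -/
noncomputable def softMax (a b : ℕ → ℝ) (n : ℕ) (β : ℝ) (u : ℝ) : ℝ :=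
  Real.log (softSum a b n β 0 u) / β

/-- The maximum of the affine functions `u ↦ aₖ u + bₖ`, `k ≤ n`. -/
noncomputable def affMax (a b : ℕ → ℝ) (n : ℕ) (u : ℝ) : ℝ :=
  (Finset.range (n + 1)).sup' Finset.nonempty_range_add_one (fun k => a k * u + b k)

section soft

variable (a b : ℕ → ℝ) (n : ℕ) (β : ℝ)

lemma softSum_pos (u : ℝ) : 0 < softSum a b n β 0 u := by
  unfold softSum
  exact Finset.sum_pos (fun k _ => by positivity) Finset.nonempty_range_add_one

lemma hasDerivAt_softSum (j : ℕ) (u : ℝ) :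
    HasDerivAt (softSum a b n β j) (β * softSum a b n β (j + 1) u) u := by
  unfold softSum
  rw [Finset.mul_sum]
  refine HasDerivAt.fun_sum fun k _ => ?_
  have h : HasDerivAt (fun u => β * (a k * u + b k)) (β * a k) u := by
    simpa using (((hasDerivAt_id u).const_mul (a k)).add_const (b k)).const_mul β
  convert! (h.exp.const_mul (a k ^ j)) using 1
  ring

/-- The `j`-th moment of the slope under the Gibbs weights. -/
noncomputable def softMom (j : ℕ) (u : ℝ) : ℝ := softSum a b n β j u / softSum a b n β 0 u

lemma hasDerivAt_softMom (j : ℕ) (u : ℝ) :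
    HasDerivAt (softMom a b n β j)
      (β * (softMom a b n β (j + 1) u - softMom a b n β j u * softMom a b n β 1 u)) u := by
  have h0 := (softSum_pos a b n β u).ne'
  convert! (hasDerivAt_softSum a b n β j u).div (hasDerivAt_softSum a b n β 0 u) h0 using 1
  unfold softMom
  field_simp

lemma abs_softMom_le {c : ℝ} (hc : ∀ k ∈ Finset.range (n + 1), |a k| ≤ c) (j : ℕ) (u : ℝ) :
    |softMom a b n β j u| ≤ c ^ j := by
  have h0 := softSum_pos a b n β u
  unfold softMom
  rw [abs_div, abs_of_pos h0, div_le_iff₀ h0]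
  unfold softSum
  rw [Finset.mul_sum]
  refine (Finset.abs_sum_le_sum_abs _ _).trans (Finset.sum_le_sum fun k hk => ?_)
  rw [abs_mul, abs_of_pos (Real.exp_pos _), abs_pow, pow_zero, one_mul]
  gcongr
  exact hc k hk

/-- The variance of the slope under the Gibbs weights is nonnegative; up to the factor `β` it is
the second derivative of `softMax`. -/
lemma softMom_var_nonneg (u : ℝ) : 0 ≤ softMom a b n β 2 u - softMom a b n β 1 u ^ 2 := by
  have h0 := softSum_pos a b n β u
  unfold softMom
  rw [div_pow, sub_nonneg, div_le_div_iff₀ (by positivity) h0]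
  have := Finset.sum_mul_sq_le_sq_mul_sq (Finset.range (n + 1))
    (fun k => a k * Real.exp (β * (a k * u + b k) / 2))
    (fun k => Real.exp (β * (a k * u + b k) / 2))
  have e : ∀ k, Real.exp (β * (a k * u + b k) / 2) ^ 2 = Real.exp (β * (a k * u + b k)) := by
    intro k
    rw [← Real.exp_nat_mul]
    congr 1
    push_cast
    ring
  have e1 : ∀ k, a k * Real.exp (β * (a k * u + b k) / 2) * Real.exp (β * (a k * u + b k) / 2)
      = a k * Real.exp (β * (a k * u + b k)) := by
    intro k
    rw [← e k]
    ring
  simp only [mul_pow, e, e1] at this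
  unfold softSum
  simp only [pow_zero, one_mul, pow_one]
  calc _ ≤ _ := mul_le_mul_of_nonneg_right this (Finset.sum_nonneg fun k _ => (Real.exp_pos _).le)
    _ = _ := by ring

lemma isTest_softMax (hβ : 0 < β) : ∃ f1 f2 L, IsTest (softMax a b n β) f1 f2 L := by
  obtain ⟨c, hc⟩ : ∃ c, ∀ k ∈ Finset.range (n + 1), |a k| ≤ c :=
    ⟨_, fun k hk => Finset.single_le_sum (f := fun k => |a k|) (fun i _ => abs_nonneg _) hk⟩
  have hc0 : 0 ≤ c := (abs_nonneg _).trans (hc 0 (by simp))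
  have hm := abs_softMom_le a b n β hc
  have hD : ∀ u, HasDerivAt (fun u => β * (softMom a b n β 2 u - softMom a b n β 1 u ^ 2))
      (β * (β * (softMom a b n β 3 u - softMom a b n β 2 u * softMom a b n β 1 u)
        - 2 * softMom a b n β 1 u
          * (β * (softMom a b n β 2 u - softMom a b n β 1 u * softMom a b n β 1 u)))) u := by
    intro u
    have h1 := hasDerivAt_softMom a b n β 1 u
    have h2 := hasDerivAt_softMom a b n β 2 u
    convert! (h2.sub (h1.pow 2)).const_mul β using 1
    push_cast
    ring
  have hDb : ∀ u, ‖β * (β * (softMom a b n β 3 u - softMom a b n β 2 u * softMom a b n β 1 u)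
        - 2 * softMom a b n β 1 u
          * (β * (softMom a b n β 2 u - softMom a b n β 1 u * softMom a b n β 1 u)))‖
      ≤ 6 * β ^ 2 * c ^ 3 := by
    intro u
    have h1 : |softMom a b n β 1 u| ≤ c := by simpa using hm 1 u
    have h2 := hm 2 u
    have h3 := hm 3 u
    have h21 : |softMom a b n β 2 u * softMom a b n β 1 u| ≤ c ^ 3 := by
      rw [abs_mul, pow_succ]
      gcongr
    have h111 : |softMom a b n β 1 u ^ 3| ≤ c ^ 3 := by
      rw [abs_pow]
      gcongr
    rw [Real.norm_eq_abs]
    have e : β * (β * (softMom a b n β 3 u - softMom a b n β 2 u * softMom a b n β 1 u)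
        - 2 * softMom a b n β 1 u
          * (β * (softMom a b n β 2 u - softMom a b n β 1 u * softMom a b n β 1 u)))
        = β ^ 2 * (softMom a b n β 3 u - 3 * (softMom a b n β 2 u * softMom a b n β 1 u)
          + 2 * softMom a b n β 1 u ^ 3) := by ring
    rw [e, abs_mul, abs_of_pos (by positivity : 0 < β ^ 2)]
    have : |softMom a b n β 3 u - 3 * (softMom a b n β 2 u * softMom a b n β 1 u)
          + 2 * softMom a b n β 1 u ^ 3| ≤ 6 * c ^ 3 := by
      rw [_root_.abs_le] at *
      constructor <;> linarith
    calc _ ≤ β ^ 2 * (6 * c ^ 3) := by gcongr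
      _ = _ := by ring
  refine ⟨softMom a b n β 1, fun u => β * (softMom a b n β 2 u - softMom a b n β 1 u ^ 2),
    max c (6 * β ^ 2 * c ^ 3), ⟨fun u => ?_, fun u => ?_, fun u => ?_, fun u => ?_, fun u v => ?_⟩⟩
  · convert! ((hasDerivAt_softSum a b n β 0 u).log (softSum_pos a b n β u).ne').div_const β using 1
    unfold softMom
    field_simp
  · convert! hasDerivAt_softMom a b n β 1 u using 1
    ring
  · exact le_max_of_le_left (by simpa using hm 1 u)
  · exact mul_nonneg hβ.le (softMom_var_nonneg a b n β u)
  · have := convex_univ.norm_image_sub_le_of_norm_hasDerivWithin_le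
      (fun y _ => (hD y).hasDerivWithinAt) (fun y _ => hDb y) (Set.mem_univ v) (Set.mem_univ u)
    refine this.trans ?_
    rw [Real.norm_eq_abs]
    gcongr
    exact le_max_right _ _

lemma abs_softMax_sub_affMax_le (hβ : 0 < β) (u : ℝ) :
    |softMax a b n β u - affMax a b n u| ≤ Real.log (n + 1) / β := by
  have h0 := softSum_pos a b n β u
  have hup : softSum a b n β 0 u ≤ (n + 1) * Real.exp (β * affMax a b n u) := by
    unfold softSum
    calc _ ≤ ∑ k ∈ Finset.range (n + 1), Real.exp (β * affMax a b n u) := by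
          refine Finset.sum_le_sum fun k hk => ?_
          rw [pow_zero, one_mul]
          gcongr
          exact Finset.le_sup' (fun k => a k * u + b k) hk
      _ = _ := by simp
  have hlow : Real.exp (β * affMax a b n u) ≤ softSum a b n β 0 u := by
    obtain ⟨k, hk, e⟩ := Finset.exists_mem_eq_sup' (Finset.nonempty_range_add_one (n := n))
      (fun k => a k * u + b k)
    unfold softSum affMax
    rw [e]
    simpa using Finset.single_le_sum (f := fun k => Real.exp (β * (a k * u + b k)))
      (fun i _ => (Real.exp_pos _).le) hk
  have h1 := Real.log_le_log (Real.exp_pos _) hlow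
  have h2 := Real.log_le_log h0 hup
  rw [Real.log_exp] at h1
  rw [Real.log_mul (by positivity) (Real.exp_pos _).ne', Real.log_exp] at h2
  have hn : 0 ≤ Real.log (n + 1) := Real.log_nonneg (by linarith [Nat.cast_nonneg (α := ℝ) n])
  have e : softMax a b n β u - affMax a b n u
      = (Real.log (softSum a b n β 0 u) - β * affMax a b n u) / β := by
    unfold softMax
    field_simp
  rw [e, abs_div, abs_of_pos hβ]
  gcongr
  rw [_root_.abs_le]
  constructor <;> linarith

lemma continuous_affMax : Continuous (affMax a b n) := by
  unfold affMax
  exact Continuous.finset_sup'_apply _ fun k _ => by fun_prop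

end soft

/-! ### Exponential moments of Gaussian vectors -/

section gauss

variable {n : ℕ}

/-- The centered Gaussian law with covariance matrix `C`. -/
noncomputable abbrev gm (C : Matrix (Fin n) (Fin n) ℝ) : Measure (EuclideanSpace ℝ (Fin n)) :=
  multivariateGaussian 0 C

/-- The normalized exponential `exp (zᵢ - Cᵢᵢ / 2)`, of mean one under `gm C`. -/
noncomputable def nexp (C : Matrix (Fin n) (Fin n) ℝ) (i : Fin n)
    (z : EuclideanSpace ℝ (Fin n)) : ℝ := Real.exp (z i - C i i / 2)

lemma nexp_pos (C : Matrix (Fin n) (Fin n) ℝ) (i : Fin n) (z : EuclideanSpace ℝ (Fin n)) :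
    0 < nexp C i z := Real.exp_pos _

lemma continuous_nexp (C : Matrix (Fin n) (Fin n) ℝ) (i : Fin n) : Continuous (nexp C i) := by
  unfold nexp
  fun_prop

lemma nexp_add (A B : Matrix (Fin n) (Fin n) ℝ) (i : Fin n) (z y : EuclideanSpace ℝ (Fin n)) :
    nexp (A + B) i (z + y) = nexp A i z * nexp B i y := by
  unfold nexp
  rw [← Real.exp_add]
  congr 1
  simp
  ring

variable {C : Matrix (Fin n) (Fin n) ℝ}

lemma map_lin_gm (hC : C.PosSemidef) (t : EuclideanSpace ℝ (Fin n)) :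
    (gm C).map (fun z => ∑ i, t i * z i)
      = gaussianReal 0 (∑ i, ∑ j, t i * C i j * t j).toNNReal := by
  have h := IsGaussian.map_eq_gaussianReal (μ := gm C) (innerSL ℝ t)
  have e : ⇑(innerSL ℝ t) = fun z : EuclideanSpace ℝ (Fin n) => ∑ i, t i * z i := by
    ext z
    simp [PiLp.inner_apply, mul_comm]
  have hv := covarianceBilin_self (μ := gm C) IsGaussian.memLp_two_id t
  rw [covarianceBilin_multivariateGaussian hC] at hv
  have hm : ∫ z, innerSL ℝ t z ∂(gm C) = 0 := by
    rw [IsGaussian.integral_dual, integral_id_multivariateGaussian]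
    simp
  rw [hm] at h
  rw [← e, h]
  congr 2
  change Var[fun u => inner ℝ t u; gm C] = _
  rw [← hv]
  simp only [dotProduct, Matrix.mulVec, Finset.mul_sum]
  exact Finset.sum_congr rfl fun i _ => Finset.sum_congr rfl fun j _ => by ring

lemma quad_nonneg (hC : C.PosSemidef) (t : Fin n → ℝ) :
    0 ≤ ∑ i, ∑ j, t i * C i j * t j := by
  have := hC.dotProduct_mulVec_nonneg t
  simp only [dotProduct, Matrix.mulVec, Finset.mul_sum] at this
  simpa [mul_assoc] using this

lemma integrable_exp_lin (hC : C.PosSemidef) (t : EuclideanSpace ℝ (Fin n)) :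
    Integrable (fun z => Real.exp (∑ i, t i * z i)) (gm C) := by
  have h := integrable_exp_mul_gaussianReal (μ := 0)
    (v := (∑ i, ∑ j, t i * C i j * t j).toNNReal) 1
  rw [← map_lin_gm hC t, integrable_map_measure (by fun_prop) (by fun_prop)] at h
  simpa [Function.comp_def] using h

lemma integral_exp_lin (hC : C.PosSemidef) (t : EuclideanSpace ℝ (Fin n)) :
    ∫ z, Real.exp (∑ i, t i * z i) ∂(gm C) = Real.exp ((∑ i, ∑ j, t i * C i j * t j) / 2) := by
  have h := mgf_gaussianReal (map_lin_gm hC t) 1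
  simp only [mgf, one_mul] at h
  rw [h, Real.coe_toNNReal _ (quad_nonneg hC t)]
  simp

lemma integrable_nexp_pow (hC : C.PosSemidef) (i : Fin n) (k : ℕ) :
    Integrable (fun z => nexp C i z ^ k) (gm C) := by
  have h := (integrable_exp_lin hC (EuclideanSpace.single i (k : ℝ))).mul_const
    (Real.exp (-(k * (C i i / 2))))
  convert! h using 2 with z
  unfold nexp
  rw [← Real.exp_nat_mul, ← Real.exp_add]
  congr 1
  simp
  ring

lemma integral_nexp_pow (hC : C.PosSemidef) (i : Fin n) (k : ℕ) :
    ∫ z, nexp C i z ^ k ∂(gm C) = Real.exp (k * (k - 1) / 2 * C i i) := by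
  have h := integral_exp_lin hC (EuclideanSpace.single i (k : ℝ))
  have e : ∀ z, nexp C i z ^ k = Real.exp (∑ j, (EuclideanSpace.single i (k : ℝ)) j * z j)
      * Real.exp (-(k * (C i i / 2))) := by
    intro z
    unfold nexp
    rw [← Real.exp_nat_mul, ← Real.exp_add]
    congr 1
    simp
    ring
  simp_rw [e]
  rw [integral_mul_const, h, ← Real.exp_add]
  congr 1
  simp
  ring

lemma integrable_nexp (hC : C.PosSemidef) (i : Fin n) : Integrable (nexp C i) (gm C) := by
  simpa using integrable_nexp_pow hC i 1

lemma integral_nexp (hC : C.PosSemidef) (i : Fin n) : ∫ z, nexp C i z ∂(gm C) = 1 := by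
  simpa using integral_nexp_pow hC i 1

lemma nexp_mul_eq (i j : Fin n) (z : EuclideanSpace ℝ (Fin n)) :
    nexp C i z * nexp C j z
      = Real.exp (∑ l, (EuclideanSpace.single i (1 : ℝ) + EuclideanSpace.single j (1 : ℝ)) l * z l)
      * Real.exp (-(C i i / 2 + C j j / 2)) := by
  unfold nexp
  rw [← Real.exp_add, ← Real.exp_add]
  congr 1
  simp [add_mul, Finset.sum_add_distrib]
  ring

lemma integrable_nexp_mul (hC : C.PosSemidef) (i j : Fin n) :
    Integrable (fun z => nexp C i z * nexp C j z) (gm C) := by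
  simp_rw [nexp_mul_eq]
  exact (integrable_exp_lin hC _).mul_const _

lemma integral_nexp_mul (hC : C.PosSemidef) (i j : Fin n) :
    ∫ z, nexp C i z * nexp C j z ∂(gm C) = Real.exp (C i j) := by
  simp_rw [nexp_mul_eq]
  rw [integral_mul_const, integral_exp_lin hC, ← Real.exp_add]
  have hs : C j i = C i j := by simpa using hC.1.apply i j
  congr 1
  simp [add_mul, mul_add, Finset.sum_add_distrib, hs]
  ring

lemma diag_nonneg (hC : C.PosSemidef) (i : Fin n) : 0 ≤ C i i := hC.diag_nonneg

lemma gm_add {A B : Matrix (Fin n) (Fin n) ℝ} (hA : A.PosSemidef) (hB : B.PosSemidef) :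
    gm (A + B) = (gm A) ∗ (gm B) := by
  refine Measure.ext_of_charFun ?_
  ext t
  rw [charFun_conv, charFun_multivariateGaussian hA, charFun_multivariateGaussian hB,
    charFun_multivariateGaussian (hA.add hB), ← Complex.exp_add]
  congr 1
  simp [Matrix.add_mulVec, dotProduct_add]
  ring

lemma measurePreserving_add_gm {A B : Matrix (Fin n) (Fin n) ℝ} (hA : A.PosSemidef)
    (hB : B.PosSemidef) :
    MeasurePreserving (fun x : EuclideanSpace ℝ (Fin n) × EuclideanSpace ℝ (Fin n) => x.1 + x.2)
      ((gm A).prod (gm B)) (gm (A + B)) :=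
  ⟨by fun_prop, by rw [gm_add hA hB]; rfl⟩

end gauss

/-! ### The finite-dimensional inequality -/

section finite

variable {n : ℕ} {f f1 f2 : ℝ → ℝ} {L : ℝ}

/-- The expectation of `f (∑ᵢ qᵢ exp (zᵢ - Cᵢᵢ / 2))` for `z` centered Gaussian with
covariance `C`. -/
noncomputable def gexp (f : ℝ → ℝ) (C : Matrix (Fin n) (Fin n) ℝ) (q : Fin n → ℝ) : ℝ :=
  ∫ z, f (∑ i, q i * nexp C i z) ∂(gm C)

lemma integrable_test (hf : IsTest f f1 f2 L) {C : Matrix (Fin n) (Fin n) ℝ} (hC : C.PosSemidef)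
    (q : Fin n → ℝ) : Integrable (fun z => f (∑ i, q i * nexp C i z)) (gm C) := by
  have hi : Integrable (fun z => ∑ i, q i * nexp C i z) (gm C) :=
    integrable_finsetSum _ fun i _ => (integrable_nexp hC i).const_mul _
  refine Integrable.mono' ((integrable_const |f 0|).add (hi.abs.const_mul L))
    (hf.continuous.comp_aestronglyMeasurable hi.1) (Eventually.of_forall fun z => ?_)
  exact hf.abs_le _

/-- A polynomial which dominates `|x - 1| ^ 3`, by the arithmetic-geometric mean inequality. -/
noncomputable def cubeDom (δ x : ℝ) : ℝ :=
  (δ * (x ^ 2 - 2 * x + 1) + (x ^ 4 - 4 * x ^ 3 + 6 * x ^ 2 - 4 * x + 1) / δ) / 2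

lemma cube_le_cubeDom {δ : ℝ} (hδ : 0 < δ) (x : ℝ) : |x - 1| ^ 3 ≤ cubeDom δ x := by
  have e : cubeDom δ x = (δ * |x - 1| ^ 2 + (|x - 1| ^ 2) ^ 2 / δ) / 2 := by
    unfold cubeDom
    rw [sq_abs]
    congr 3 <;> ring
  rw [e]
  have h : 0 ≤ |x - 1| ^ 2 * (δ - |x - 1|) ^ 2 / δ := by positivity
  have h2 : |x - 1| ^ 2 * (δ - |x - 1|) ^ 2 / δ
      = δ * |x - 1| ^ 2 + (|x - 1| ^ 2) ^ 2 / δ - 2 * |x - 1| ^ 3 := by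
    field_simp
    ring
  linarith

lemma integrable_cubeDom {C : Matrix (Fin n) (Fin n) ℝ} (hC : C.PosSemidef) (i : Fin n) (δ : ℝ) :
    Integrable (fun z => cubeDom δ (nexp C i z)) (gm C) := by
  have h1 := integrable_nexp hC i
  have h2 := integrable_nexp_pow hC i 2
  have h3 := integrable_nexp_pow hC i 3
  have h4 := integrable_nexp_pow hC i 4
  have c1 : Integrable (fun _ => (1 : ℝ)) (gm C) := integrable_const _
  unfold cubeDom
  exact ((((h2.sub (h1.const_mul 2)).add c1).const_mul δ).add
    (((((h4.sub (h3.const_mul 4)).add (h2.const_mul 6)).sub (h1.const_mul 4)).add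
      c1).div_const δ)).div_const 2

lemma integral_cubeDom {C : Matrix (Fin n) (Fin n) ℝ} (hC : C.PosSemidef) (i : Fin n) (δ : ℝ) :
    ∫ z, cubeDom δ (nexp C i z) ∂(gm C)
      = (δ * (Real.exp (C i i) - 1)
        + (Real.exp (C i i) ^ 6 - 4 * Real.exp (C i i) ^ 3 + 6 * Real.exp (C i i) - 3) / δ) / 2 := by
  have h1 := integrable_nexp hC i
  have h2 := integrable_nexp_pow hC i 2
  have h3 := integrable_nexp_pow hC i 3
  have h4 := integrable_nexp_pow hC i 4
  have c1 : Integrable (fun _ => (1 : ℝ)) (gm C) := integrable_const _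
  have i2 := integral_nexp_pow hC i 2
  have i3 := integral_nexp_pow hC i 3
  have i4 := integral_nexp_pow hC i 4
  have e2 : Real.exp (((2 : ℕ) : ℝ) * ((2 : ℕ) - 1) / 2 * C i i) = Real.exp (C i i) := by
    congr 1; push_cast; ring
  have e3 : Real.exp (((3 : ℕ) : ℝ) * ((3 : ℕ) - 1) / 2 * C i i) = Real.exp (C i i) ^ 3 := by
    rw [← Real.exp_nat_mul]; congr 1; push_cast; ring
  have e4 : Real.exp (((4 : ℕ) : ℝ) * ((4 : ℕ) - 1) / 2 * C i i) = Real.exp (C i i) ^ 6 := by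
    rw [← Real.exp_nat_mul]; congr 1; push_cast; ring
  rw [e2] at i2
  rw [e3] at i3
  rw [e4] at i4
  unfold cubeDom
  have a1 : Integrable (fun z => nexp C i z ^ 2 - 2 * nexp C i z) (gm C) :=
    h2.sub (h1.const_mul 2)
  have a2 : Integrable (fun z => nexp C i z ^ 4 - 4 * nexp C i z ^ 3) (gm C) :=
    h4.sub (h3.const_mul 4)
  have a3 : Integrable (fun z => nexp C i z ^ 4 - 4 * nexp C i z ^ 3 + 6 * nexp C i z ^ 2) (gm C) :=
    a2.add (h2.const_mul 6)
  have a4 : Integrable (fun z => nexp C i z ^ 4 - 4 * nexp C i z ^ 3 + 6 * nexp C i z ^ 2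
      - 4 * nexp C i z) (gm C) := a3.sub (h1.const_mul 4)
  have a5 : Integrable (fun z => δ * (nexp C i z ^ 2 - 2 * nexp C i z + 1)) (gm C) :=
    (a1.add c1).const_mul δ
  have a6 : Integrable (fun z => (nexp C i z ^ 4 - 4 * nexp C i z ^ 3 + 6 * nexp C i z ^ 2
      - 4 * nexp C i z + 1) / δ) (gm C) := (a4.add c1).div_const δ
  rw [integral_div, integral_add a5 a6, integral_const_mul, integral_div,
    integral_add a1 c1, integral_sub h2 (h1.const_mul 2), integral_add a4 c1,
    integral_sub a3 (h1.const_mul 4), integral_add a2 (h2.const_mul 6),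
    integral_sub h4 (h3.const_mul 4), integral_const_mul, integral_const_mul, integral_const_mul,
    integral_const_mul, i2, i3, i4, integral_nexp hC i]
  simp
  ring

lemma abs_sum_pow_three_le (x : Fin n → ℝ) : |∑ i, x i| ^ 3 ≤ (n : ℝ) ^ 2 * ∑ i, |x i| ^ 3 := by
  rcases Nat.eq_zero_or_pos n with rfl | hn
  · simp
  have h := pow_sum_div_card_le_sum_pow (s := Finset.univ) (f := fun i => |x i|)
    (fun i _ => abs_nonneg _) 2
  rw [div_le_iff₀ (by simp; positivity)] at h
  calc _ ≤ (∑ i, |x i|) ^ 3 := by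
        gcongr
        exact Finset.abs_sum_le_sum_abs _ _
    _ ≤ _ := h
    _ = _ := by simp [mul_comm]

/-- Second-order expansion of `gexp f B q` around `B = 0`. -/
lemma abs_gexp_sub_le (hf : IsTest f f1 f2 L) {B : Matrix (Fin n) (Fin n) ℝ} (hB : B.PosSemidef)
    (q : Fin n → ℝ) {δ : ℝ} (hδ : 0 < δ) :
    |gexp f B q - f (∑ i, q i)
        - f2 (∑ i, q i) / 2 * ∑ i, ∑ j, q i * q j * (Real.exp (B i j) - 1)|
      ≤ L * n ^ 2 * ∑ i, |q i| ^ 3 * ∫ z, cubeDom δ (nexp B i z) ∂(gm B) := by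
  set w := ∑ i, q i with hw
  set D : EuclideanSpace ℝ (Fin n) → ℝ := fun z => ∑ i, q i * (nexp B i z - 1) with hD
  have hwD : ∀ z, ∑ i, q i * nexp B i z = w + D z := by
    intro z
    simp only [hw, hD, ← Finset.sum_add_distrib]
    exact Finset.sum_congr rfl fun i _ => by ring
  have c1 : Integrable (fun _ => (1 : ℝ)) (gm B) := integrable_const _
  have iD : Integrable D (gm B) :=
    integrable_finsetSum _ fun i _ => ((integrable_nexp hB i).sub c1).const_mul _
  have iDi : ∀ i, Integrable (fun z => q i * (nexp B i z - 1)) (gm B) := fun i =>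
    ((integrable_nexp hB i).sub c1).const_mul _
  have vD : ∫ z, D z ∂(gm B) = 0 := by
    simp only [hD]
    rw [integral_finsetSum _ fun i _ => iDi i]
    refine Finset.sum_eq_zero fun i _ => ?_
    rw [integral_const_mul, integral_sub (integrable_nexp hB i) c1, integral_nexp hB i]
    simp
  have hD2 : ∀ z, D z ^ 2 = ∑ i, ∑ j, q i * q j *
      (nexp B i z * nexp B j z - nexp B i z - nexp B j z + 1) := by
    intro z
    simp only [hD]
    rw [sq, Finset.sum_mul_sum]
    exact Finset.sum_congr rfl fun i _ => Finset.sum_congr rfl fun j _ => by ring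
  have iij : ∀ i j, Integrable (fun z => q i * q j *
      (nexp B i z * nexp B j z - nexp B i z - nexp B j z + 1)) (gm B) := fun i j =>
    ((((integrable_nexp_mul hB i j).sub (integrable_nexp hB i)).sub
      (integrable_nexp hB j)).add c1).const_mul _
  have iD2 : Integrable (fun z => D z ^ 2) (gm B) := by
    simp_rw [hD2]
    exact integrable_finsetSum _ fun i _ => integrable_finsetSum _ fun j _ => iij i j
  have vD2 : ∫ z, D z ^ 2 ∂(gm B) = ∑ i, ∑ j, q i * q j * (Real.exp (B i j) - 1) := by
    simp_rw [hD2]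
    rw [integral_finsetSum _ fun i _ => integrable_finsetSum _ fun j _ => iij i j]
    refine Finset.sum_congr rfl fun i _ => ?_
    rw [integral_finsetSum _ fun j _ => iij i j]
    refine Finset.sum_congr rfl fun j _ => ?_
    have s1 : Integrable (fun z => nexp B i z * nexp B j z - nexp B i z) (gm B) :=
      (integrable_nexp_mul hB i j).sub (integrable_nexp hB i)
    have s2 : Integrable (fun z => nexp B i z * nexp B j z - nexp B i z - nexp B j z) (gm B) :=
      s1.sub (integrable_nexp hB j)
    rw [integral_const_mul, integral_add s2 c1, integral_sub s1 (integrable_nexp hB j),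
      integral_sub (integrable_nexp_mul hB i j) (integrable_nexp hB i), integral_nexp_mul hB,
      integral_nexp hB, integral_nexp hB]
    simp
  have iF := integrable_test hf hB q
  have key : gexp f B q - f w - f2 w / 2 * ∑ i, ∑ j, q i * q j * (Real.exp (B i j) - 1)
      = ∫ z, (f (w + D z) - f w - f1 w * D z - f2 w * D z ^ 2 / 2) ∂(gm B) := by
    simp_rw [hwD] at iF
    have t1 : Integrable (fun z => f (w + D z) - f w) (gm B) := iF.sub (integrable_const _)
    have t2 : Integrable (fun z => f (w + D z) - f w - f1 w * D z) (gm B) :=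
      t1.sub (iD.const_mul _)
    rw [integral_sub t2 ((iD2.const_mul _).div_const 2), integral_sub t1 (iD.const_mul _),
      integral_sub iF (integrable_const _), integral_div, integral_const_mul, integral_const_mul,
      vD, vD2]
    unfold gexp
    simp_rw [hwD]
    simp
    ring
  rw [key, ← Real.norm_eq_abs]
  have idom : ∀ i, Integrable (fun z => |q i| ^ 3 * cubeDom δ (nexp B i z)) (gm B) := fun i =>
    (integrable_cubeDom hB i δ).const_mul _
  have : L * n ^ 2 * ∑ i, |q i| ^ 3 * ∫ z, cubeDom δ (nexp B i z) ∂(gm B)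
      = ∫ z, L * n ^ 2 * ∑ i, |q i| ^ 3 * cubeDom δ (nexp B i z) ∂(gm B) := by
    rw [integral_const_mul, integral_finsetSum _ fun i _ => idom i]
    simp_rw [integral_const_mul]
  rw [this]
  refine norm_integral_le_of_norm_le ((integrable_finsetSum _ fun i _ => idom i).const_mul _)
    (Eventually.of_forall fun z => ?_)
  rw [Real.norm_eq_abs]
  refine (hf.taylor w (D z)).trans ?_
  rw [mul_assoc]
  refine mul_le_mul_of_nonneg_left ?_ hf.L_nonneg
  refine (abs_sum_pow_three_le _).trans ?_
  gcongr with i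
  rw [abs_mul, mul_pow]
  gcongr
  exact cube_le_cubeDom hδ _

/-- For a small covariance `B = O(h)` the third moments are `O(h ^ (3 / 2))`; here `δ = √h`
balances the two terms of `cubeDom δ`. -/
lemma integral_cubeDom_le {B : Matrix (Fin n) (Fin n) ℝ} (hB : B.PosSemidef) (i : Fin n)
    {c h : ℝ} (hh : 0 < h) (hh1 : h ≤ 1) (hc : B i i ≤ h * c) :
    ∫ z, cubeDom (√h) (nexp B i z) ∂(gm B)
      ≤ h * √h * (c * Real.exp c + 6 * c ^ 2 * Real.exp (6 * c)) := by
  rw [integral_cubeDom hB]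
  have hb := diag_nonneg hB i
  set b := B i i
  have hc0 : 0 ≤ c := by
    by_contra! hneg
    nlinarith
  have hbc : b ≤ c := hc.trans (by nlinarith)
  set s := Real.exp b with hs
  have hs1 : 1 ≤ s := Real.one_le_exp hb
  have hsE : s ≤ Real.exp c := Real.exp_le_exp.2 hbc
  have hse : s - 1 ≤ h * c * Real.exp c := by
    -- `1 - b ≤ exp (-b)`, multiplied by `exp b`
    have h1 : 1 - b ≤ Real.exp (-b) := by linarith [Real.add_one_le_exp (-b)]
    have h2 : Real.exp (-b) * s = 1 := by rw [hs, ← Real.exp_add]; simp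
    have h3 : (1 - b) * s ≤ Real.exp (-b) * s := mul_le_mul_of_nonneg_right h1 (by linarith)
    rw [h2] at h3
    calc s - 1 ≤ b * s := by linarith
      _ ≤ _ := by gcongr
  set r := √h with hr
  have hr0 : 0 < r := Real.sqrt_pos.2 hh
  have hrr : r * r = h := Real.mul_self_sqrt hh.le
  have e6 : Real.exp (6 * c) = Real.exp c ^ 6 := by
    rw [← Real.exp_nat_mul]; norm_num
  set E := Real.exp c
  have hE1 : 1 ≤ E := Real.one_le_exp hc0
  have hq : s ^ 6 - 4 * s ^ 3 + 6 * s - 3 ≤ (h * c * E) ^ 2 * (6 * E ^ 4) := by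
    have : s ^ 6 - 4 * s ^ 3 + 6 * s - 3 = (s - 1) ^ 2 * (s ^ 4 + 2 * s ^ 3 + 3 * s ^ 2 - 3) := by
      ring
    rw [this]
    have hs3 : s ^ 3 ≤ s ^ 4 := pow_le_pow_right₀ hs1 (by norm_num)
    have hs2 : s ^ 2 ≤ s ^ 4 := pow_le_pow_right₀ hs1 (by norm_num)
    have hs4 : s ^ 4 ≤ E ^ 4 := by gcongr
    calc _ ≤ (s - 1) ^ 2 * (6 * E ^ 4) := by
          gcongr
          linarith
      _ ≤ _ := by
          have : 0 ≤ s - 1 := by linarith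
          gcongr
  have hdiv : (s ^ 6 - 4 * s ^ 3 + 6 * s - 3) / r ≤ h * r * (6 * c ^ 2 * E ^ 6) := by
    rw [div_le_iff₀ hr0]
    refine hq.trans (le_of_eq ?_)
    rw [← hrr]
    ring
  have hfst : r * (s - 1) ≤ h * r * (c * E) := by
    calc _ ≤ r * (h * c * E) := by gcongr
      _ = _ := by ring
  rw [e6]
  have : 0 ≤ h * r * (c * E) := by positivity
  have : 0 ≤ h * r * (6 * c ^ 2 * E ^ 6) := by positivity
  linarith

/-- One step of Lindeberg's exchange argument: replacing an independent Gaussian increment with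
covariance `B` by one with an entrywise larger covariance `B'` increases the expectation, up to
an error controlled by third moments. -/
lemma gexp_step (hf : IsTest f f1 f2 L) {A B B' : Matrix (Fin n) (Fin n) ℝ} (hA : A.PosSemidef)
    (hB : B.PosSemidef) (hB' : B'.PosSemidef) (hle : ∀ i j, B i j ≤ B' i j)
    (p : Fin n → ℝ) (hp : ∀ i, 0 ≤ p i) {c h : ℝ} (hh : 0 < h) (hh1 : h ≤ 1)
    (hc : ∀ i, B i i ≤ h * c) (hc' : ∀ i, B' i i ≤ h * c) (hAc : ∀ i, A i i ≤ c) :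
    gexp f (A + B) p ≤ gexp f (A + B') p + h * √h * (2 * L * n ^ 2 *
      (c * Real.exp c + 6 * c ^ 2 * Real.exp (6 * c)) * ∑ i, p i ^ 3 * Real.exp (3 * c)) := by
  set κ := c * Real.exp c + 6 * c ^ 2 * Real.exp (6 * c) with hκ
  have hL := hf.L_nonneg
  -- conditioning on the common part
  have hsplit : ∀ B : Matrix (Fin n) (Fin n) ℝ, B.PosSemidef →
      Integrable (fun z => gexp f B (fun i => p i * nexp A i z)) (gm A) ∧
      gexp f (A + B) p = ∫ z, gexp f B (fun i => p i * nexp A i z) ∂(gm A) := by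
    intro B hB
    have hmp := measurePreserving_add_gm hA hB
    have hi := integrable_test hf (hA.add hB) p
    have hi2 : Integrable (fun x : EuclideanSpace ℝ (Fin n) × EuclideanSpace ℝ (Fin n) =>
        f (∑ i, p i * nexp (A + B) i (x.1 + x.2))) ((gm A).prod (gm B)) :=
      hmp.integrable_comp_of_integrable hi
    have he : gexp f (A + B) p = ∫ x : EuclideanSpace ℝ (Fin n) × EuclideanSpace ℝ (Fin n),
        f (∑ i, p i * nexp (A + B) i (x.1 + x.2)) ∂((gm A).prod (gm B)) := by
      unfold gexp
      rw [← hmp.map_eq, integral_map hmp.measurable.aemeasurable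
        (by rw [hmp.map_eq]; exact hi.1)]
    rw [he]
    simp_rw [nexp_add, ← mul_assoc] at hi2 ⊢
    exact ⟨hi2.integral_prod_left, integral_prod _ hi2⟩
  obtain ⟨i1, e1⟩ := hsplit B hB
  obtain ⟨i2, e2⟩ := hsplit B' hB'
  have hpt : ∀ z, gexp f B (fun i => p i * nexp A i z) ≤ gexp f B' (fun i => p i * nexp A i z)
      + 2 * L * n ^ 2 * (h * √h * κ) * ∑ i, p i ^ 3 * nexp A i z ^ 3 := by
    intro z
    set q : Fin n → ℝ := fun i => p i * nexp A i z with hq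
    have hq0 : ∀ i, 0 ≤ q i := fun i => mul_nonneg (hp i) (nexp_pos A i z).le
    have hr : 0 < √h := Real.sqrt_pos.2 hh
    have b1 := abs_le.1 (abs_gexp_sub_le hf hB q hr)
    have b2 := abs_le.1 (abs_gexp_sub_le hf hB' q hr)
    -- the only place where `p ≥ 0`, the convexity of `f` and `B ≤ B'` are used
    have hmid : f2 (∑ i, q i) / 2 * ∑ i, ∑ j, q i * q j * (Real.exp (B i j) - 1)
        ≤ f2 (∑ i, q i) / 2 * ∑ i, ∑ j, q i * q j * (Real.exp (B' i j) - 1) := by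
      refine mul_le_mul_of_nonneg_left ?_ (div_nonneg (hf.nonneg2 _) (by norm_num))
      refine Finset.sum_le_sum fun i _ => Finset.sum_le_sum fun j _ => ?_
      refine mul_le_mul_of_nonneg_left ?_ (mul_nonneg (hq0 i) (hq0 j))
      exact sub_le_sub_right (Real.exp_le_exp.2 (hle i j)) 1
    have herr : ∀ B : Matrix (Fin n) (Fin n) ℝ, B.PosSemidef → (∀ i, B i i ≤ h * c) →
        L * n ^ 2 * ∑ i, |q i| ^ 3 * ∫ z, cubeDom (√h) (nexp B i z) ∂(gm B)
        ≤ L * n ^ 2 * (h * √h * κ) * ∑ i, p i ^ 3 * nexp A i z ^ 3 := by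
      intro B hB hc
      rw [mul_assoc _ (h * √h * κ), Finset.mul_sum _ _ (h * √h * κ)]
      refine mul_le_mul_of_nonneg_left (Finset.sum_le_sum fun i _ => ?_) (by positivity)
      rw [abs_of_nonneg (hq0 i), hq, mul_pow, mul_comm (h * √h * κ)]
      exact mul_le_mul_of_nonneg_left (integral_cubeDom_le hB i hh hh1 (hc i))
        (mul_nonneg (pow_nonneg (hp i) 3) (pow_nonneg (nexp_pos A i z).le 3))
    have r1 := herr B hB hc
    have r2 := herr B' hB' hc'
    linarith [b1.1, b1.2, b2.1, b2.2]
  have isum : Integrable (fun z => ∑ i, p i ^ 3 * nexp A i z ^ 3) (gm A) :=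
    integrable_finsetSum _ fun i _ => (integrable_nexp_pow hA i 3).const_mul _
  have hmono := integral_mono i1 (i2.add (isum.const_mul (2 * L * n ^ 2 * (h * √h * κ)))) hpt
  rw [e1, e2]
  refine hmono.trans ?_
  rw [Pi.add_def, integral_add i2 (isum.const_mul _), integral_const_mul, integral_finsetSum _
    fun i _ => (integrable_nexp_pow hA i 3).const_mul _]
  have hκ0 : ∀ i : Fin n, 0 ≤ κ := fun i => by
    have : 0 ≤ c := (diag_nonneg hA i).trans (hAc i)
    positivity
  have : ∑ i, ∫ z, p i ^ 3 * nexp A i z ^ 3 ∂(gm A) ≤ ∑ i, p i ^ 3 * Real.exp (3 * c) := by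
    refine Finset.sum_le_sum fun i _ => ?_
    rw [integral_const_mul, integral_nexp_pow hA]
    refine mul_le_mul_of_nonneg_left (Real.exp_le_exp.2 ?_) (pow_nonneg (hp i) 3)
    push_cast
    linarith [hAc i]
  rcases Nat.eq_zero_or_pos n with rfl | hn
  · simp
  have := hκ0 ⟨0, hn⟩
  calc _ ≤ (∫ z, gexp f B' (fun i => p i * nexp A i z) ∂(gm A))
        + 2 * L * n ^ 2 * (h * √h * κ) * ∑ i, p i ^ 3 * Real.exp (3 * c) := by gcongr
    _ = _ := by ring

/-- Kahane's inequality for Gaussian vectors and smooth test functions. -/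
lemma gexp_mono (hf : IsTest f f1 f2 L) {C C' : Matrix (Fin n) (Fin n) ℝ} (hC : C.PosSemidef)
    (hC' : C'.PosSemidef) (hle : ∀ i j, C i j ≤ C' i j) (p : Fin n → ℝ) (hp : ∀ i, 0 ≤ p i) :
    gexp f C p ≤ gexp f C' p := by
  obtain ⟨c, hc⟩ : ∃ c, ∀ i, C' i i ≤ c :=
    ⟨_, fun i => Finset.single_le_sum (f := fun i => C' i i)
      (fun i _ => diag_nonneg hC' i) (Finset.mem_univ i)⟩
  have hc1 : ∀ i, C i i ≤ c := fun i => (hle i i).trans (hc i)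
  set M := 2 * L * n ^ 2 *
      (c * Real.exp c + 6 * c ^ 2 * Real.exp (6 * c)) * ∑ i, p i ^ 3 * Real.exp (3 * c) with hM
  have hN : ∀ N : ℕ, gexp f C p ≤ gexp f C' p + √(1 / ((N : ℝ) + 1)) * M := by
    intro N
    set h : ℝ := 1 / ((N : ℝ) + 1) with hh
    have hN0 : 0 < (N : ℝ) + 1 := by positivity
    have h0 : 0 < h := by positivity
    have h1 : h ≤ 1 := by
      rw [hh, div_le_one hN0]
      linarith [Nat.cast_nonneg (α := ℝ) N]
    have hN1 : h * (N + 1) = 1 := by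
      rw [hh]; field_simp
    -- exchange the increments `h • C` for `h • C'` one at a time, where `h * (N + 1) = 1`
    have hk : ∀ k : ℕ, k ≤ N + 1 →
        gexp f C p ≤ gexp f ((1 - h * k) • C + (h * k) • C') p + k * (h * √h * M) := by
      intro k
      induction k with
      | zero => simp
      | succ k ih =>
        intro hk
        refine (ih (by omega)).trans ?_
        have hk' : (k : ℝ) ≤ N := by exact_mod_cast (by omega : k ≤ N)
        have hw : 0 ≤ 1 - h * (k + 1) := by
          nlinarith
        have hA : ((1 - h * (k + 1)) • C + (h * k) • C').PosSemidef :=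
          (hC.smul hw).add (hC'.smul (by positivity))
        have hst := gexp_step hf hA (hC.smul h0.le) (hC'.smul h0.le)
          (fun i j => by
            simp only [Matrix.smul_apply, smul_eq_mul]
            exact mul_le_mul_of_nonneg_left (hle i j) h0.le)
          p hp h0 h1 (c := c)
          (fun i => by
            simp only [Matrix.smul_apply, smul_eq_mul]
            exact mul_le_mul_of_nonneg_left (hc1 i) h0.le)
          (fun i => by
            simp only [Matrix.smul_apply, smul_eq_mul]
            exact mul_le_mul_of_nonneg_left (hc i) h0.le)
          (fun i => by
            simp only [Matrix.add_apply, Matrix.smul_apply, smul_eq_mul]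
            have q1 := mul_le_mul_of_nonneg_left (hc1 i) hw
            have q2 := mul_le_mul_of_nonneg_left (hc i) (by positivity : 0 ≤ h * k)
            have q3 : 0 ≤ h * c := mul_nonneg h0.le ((diag_nonneg hC' i).trans (hc i))
            linarith)
        have e1 : (1 - h * (k + 1)) • C + (h * k) • C' + h • C
            = (1 - h * k) • C + (h * k) • C' := by
          ext i j; simp; ring
        have e2 : (1 - h * (k + 1)) • C + (h * k) • C' + h • C'
            = (1 - h * (k + 1 : ℕ)) • C + (h * (k + 1 : ℕ)) • C' := by
          ext i j; simp; ring
        rw [e1, e2, ← hM] at hst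
        push_cast at hst ⊢
        linarith
    have := hk (N + 1) le_rfl
    push_cast at this
    rw [hN1] at this
    have e : ((N : ℝ) + 1) * (h * √h * M) = √h * M := by
      calc _ = h * (N + 1) * (√h * M) := by ring
        _ = _ := by rw [hN1, one_mul]
    rw [e] at this
    simpa using this
  have hlim : Tendsto (fun N : ℕ => gexp f C' p + √(1 / ((N : ℝ) + 1)) * M) atTop
      (𝓝 (gexp f C' p + √0 * M)) :=
    ((tendsto_one_div_add_atTop_nhds_zero_nat.sqrt).mul_const M).const_add _
  simpa using ge_of_tendsto' hlim hN

end finite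

/-! ### Continuous Gaussian fields on a compact space -/

section field

set_option linter.unusedSectionVars false

variable {T Ω : Type*} [MetricSpace T] [MeasurableSpace Ω]

/-- A centered Gaussian field on `T`, all of whose paths are continuous. -/
structure IsField (X : T → Ω → ℝ) (P : Measure Ω) : Prop where
  meas : ∀ x, Measurable (X x)
  cont : ∀ ω, Continuous fun x => X x ω
  gauss : ∀ (n : ℕ) (x : Fin n → T) (a : Fin n → ℝ), ∃ v : NNReal,
    P.map (fun ω => ∑ i, a i * X (x i) ω) = gaussianReal 0 v

/-- The normalized exponential `exp (X x - E[(X x)²] / 2)` of a field. -/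
noncomputable def fexp (X : T → Ω → ℝ) (P : Measure Ω) (x : T) (ω : Ω) : ℝ :=
  Real.exp (X x ω - (∫ ω', (X x ω') ^ 2 ∂P) / 2)

/-- The total mass `∫ exp (X x - E[(X x)²] / 2) ρ(dx)`. -/
noncomputable def mass [MeasurableSpace T] (X : T → Ω → ℝ) (P : Measure Ω) (ρ : Measure T)
    (ω : Ω) : ℝ := ∫ x, fexp X P x ω ∂ρ

/-- The covariance matrix of a field at finitely many points. -/
noncomputable def covMat (X : T → Ω → ℝ) (P : Measure Ω) {n : ℕ} (x : Fin n → T) :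
    Matrix (Fin n) (Fin n) ℝ := Matrix.of fun i j => ∫ ω, X (x i) ω * X (x j) ω ∂P

lemma fexp_pos (X : T → Ω → ℝ) (P : Measure Ω) (x : T) (ω : Ω) : 0 < fexp X P x ω :=
  Real.exp_pos _

namespace IsField

variable {X : T → Ω → ℝ} {P : Measure Ω} [IsProbabilityMeasure P]

lemma memLp_lin (hX : IsField X P) {n : ℕ} (x : Fin n → T) (a : Fin n → ℝ) :
    MemLp (fun ω => ∑ i, a i * X (x i) ω) 2 P := by
  obtain ⟨v, hv⟩ := hX.gauss n x a
  have hm : Measurable (fun ω => ∑ i, a i * X (x i) ω) :=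
    Finset.measurable_fun_sum _ fun i _ => (hX.meas _).const_mul _
  have h := memLp_id_gaussianReal' (μ := 0) (v := v) 2 (by norm_num)
  rw [← hv, memLp_map_measure_iff (by fun_prop) hm.aemeasurable] at h
  exact h

lemma memLp (hX : IsField X P) (x : T) : MemLp (X x) 2 P := by
  simpa using hX.memLp_lin (fun _ : Fin 1 => x) (fun _ => 1)

lemma map_lin (hX : IsField X P) {n : ℕ} (x : Fin n → T) (a : Fin n → ℝ) :
    P.map (fun ω => ∑ i, a i * X (x i) ω)
      = gaussianReal 0 (∫ ω, (∑ i, a i * X (x i) ω) ^ 2 ∂P).toNNReal := by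
  obtain ⟨v, hv⟩ := hX.gauss n x a
  have hm : Measurable (fun ω => ∑ i, a i * X (x i) ω) :=
    Finset.measurable_fun_sum _ fun i _ => (hX.meas _).const_mul _
  have h1 : ∫ ω, (∑ i, a i * X (x i) ω) ^ 2 ∂P = v := by
    have h2 := variance_fun_id_gaussianReal (μ := 0) (v := v)
    rw [variance_eq_integral (by fun_prop), integral_id_gaussianReal] at h2
    rw [← h2, ← hv, integral_map hm.aemeasurable (by fun_prop)]
    simp
  rw [h1, Real.toNNReal_coe, hv]

lemma map_eq (hX : IsField X P) (x : T) :
    P.map (X x) = gaussianReal 0 (∫ ω, (X x ω) ^ 2 ∂P).toNNReal := by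
  simpa using hX.map_lin (fun _ : Fin 1 => x) (fun _ => 1)

lemma integral_lin_sq (hX : IsField X P) {n : ℕ} (x : Fin n → T) (a : Fin n → ℝ) :
    ∫ ω, (∑ i, a i * X (x i) ω) ^ 2 ∂P = ∑ i, ∑ j, a i * covMat X P x i j * a j := by
  have hi : ∀ i j, Integrable (fun ω => a i * a j * (X (x i) ω * X (x j) ω)) P := fun i j =>
    ((hX.memLp (x i)).integrable_mul (hX.memLp (x j))).const_mul _
  have e : ∀ ω, (∑ i, a i * X (x i) ω) ^ 2
      = ∑ i, ∑ j, a i * a j * (X (x i) ω * X (x j) ω) := by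
    intro ω
    rw [sq, Finset.sum_mul_sum]
    exact Finset.sum_congr rfl fun i _ => Finset.sum_congr rfl fun j _ => by ring
  simp_rw [e]
  rw [integral_finsetSum _ fun i _ => integrable_finsetSum _ fun j _ => hi i j]
  refine Finset.sum_congr rfl fun i _ => ?_
  rw [integral_finsetSum _ fun j _ => hi i j]
  refine Finset.sum_congr rfl fun j _ => ?_
  rw [integral_const_mul]
  simp only [covMat, Matrix.of_apply]
  ring

lemma posSemidef (hX : IsField X P) {n : ℕ} (x : Fin n → T) : (covMat X P x).PosSemidef := by
  refine Matrix.PosSemidef.of_dotProduct_mulVec_nonneg ?_ fun a => ?_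
  · ext i j
    simp [covMat, mul_comm]
  · have h : 0 ≤ ∫ ω, (∑ i, a i * X (x i) ω) ^ 2 ∂P := integral_nonneg fun ω => sq_nonneg _
    rw [hX.integral_lin_sq] at h
    simpa [dotProduct, Matrix.mulVec, Finset.mul_sum, mul_assoc] using h

/-- The finite-dimensional laws are the Gaussian laws with the covariances of the field. -/
lemma map_vec (hX : IsField X P) {n : ℕ} (x : Fin n → T) :
    P.map (fun ω => WithLp.toLp 2 (fun i => X (x i) ω)) = gm (covMat X P x) := by
  have hm : Measurable (fun ω => WithLp.toLp 2 (fun i => X (x i) ω)) :=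
    (WithLp.measurable_toLp 2 _).comp (measurable_pi_lambda _ fun i => hX.meas _)
  have : IsProbabilityMeasure (P.map (fun ω => WithLp.toLp 2 (fun i => X (x i) ω))) :=
    Measure.isProbabilityMeasure_map hm.aemeasurable
  refine Measure.ext_of_charFun ?_
  ext t
  rw [charFun_multivariateGaussian (hX.posSemidef x), charFun_apply,
    integral_map hm.aemeasurable (by fun_prop)]
  have hl := hX.map_lin x t
  have hml : Measurable (fun ω => ∑ i, t i * X (x i) ω) :=
    Finset.measurable_fun_sum _ fun i _ => (hX.meas _).const_mul _
  have hc := charFun_gaussianReal (μ := 0)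
    (v := (∫ ω, (∑ i, t i * X (x i) ω) ^ 2 ∂P).toNNReal) 1
  rw [← hl, charFun_apply_real, integral_map hml.aemeasurable (by fun_prop),
    Real.coe_toNNReal _ (integral_nonneg fun ω => sq_nonneg _), hX.integral_lin_sq] at hc
  have e : ∀ ω, inner ℝ (WithLp.toLp 2 (fun i => X (x i) ω)) t = ∑ i, t i * X (x i) ω := by
    intro ω
    simp [PiLp.inner_apply]
  simp_rw [e]
  simp only [Complex.ofReal_one, one_mul] at hc
  rw [hc]
  congr 1
  simp [dotProduct, Matrix.mulVec, Finset.mul_sum, mul_assoc]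

lemma integral_comp_sum (hX : IsField X P) {f : ℝ → ℝ} (hf : Continuous f) {n : ℕ}
    (x : Fin n → T) (p : Fin n → ℝ) :
    ∫ ω, f (∑ i, p i * fexp X P (x i) ω) ∂P = gexp f (covMat X P x) p := by
  have hm : Measurable (fun ω => WithLp.toLp 2 (fun i => X (x i) ω)) :=
    (WithLp.measurable_toLp 2 _).comp (measurable_pi_lambda _ fun i => hX.meas _)
  have hc : Continuous fun z => f (∑ i, p i * nexp (covMat X P x) i z) :=
    hf.comp (continuous_finsetSum _ fun i _ => (continuous_nexp _ i).const_mul _)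
  unfold gexp
  rw [← hX.map_vec, integral_map hm.aemeasurable hc.aestronglyMeasurable]
  simp [nexp, fexp, covMat, sq]

lemma integrable_fexp_pow (hX : IsField X P) (x : T) (k : ℕ) :
    Integrable (fun ω => fexp X P x ω ^ k) P := by
  have h := integrable_exp_mul_gaussianReal (μ := 0) (v := (∫ ω, (X x ω) ^ 2 ∂P).toNNReal) k
  rw [← hX.map_eq, integrable_map_measure (by fun_prop) (hX.meas x).aemeasurable] at h
  convert! h.mul_const (Real.exp (-(k * ((∫ ω, (X x ω) ^ 2 ∂P) / 2)))) using 2 with ω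
  unfold fexp
  rw [← Real.exp_nat_mul, Function.comp_apply, ← Real.exp_add]
  congr 1
  ring

lemma integral_fexp_pow (hX : IsField X P) (x : T) (k : ℕ) :
    ∫ ω, fexp X P x ω ^ k ∂P = Real.exp (k * (k - 1) / 2 * ∫ ω, (X x ω) ^ 2 ∂P) := by
  have h := mgf_gaussianReal (hX.map_eq x) k
  rw [Real.coe_toNNReal _ (integral_nonneg fun ω => sq_nonneg _)] at h
  have e : ∀ ω, fexp X P x ω ^ k
      = Real.exp (k * X x ω) * Real.exp (-(k * ((∫ ω, (X x ω) ^ 2 ∂P) / 2))) := by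
    intro ω
    unfold fexp
    rw [← Real.exp_nat_mul, ← Real.exp_add]
    congr 1
    ring
  simp_rw [e]
  rw [integral_mul_const]
  unfold mgf at h
  rw [h, ← Real.exp_add]
  congr 1
  ring

lemma integrable_fexp (hX : IsField X P) (x : T) : Integrable (fexp X P x) P := by
  simpa using hX.integrable_fexp_pow x 1

lemma integral_fexp (hX : IsField X P) (x : T) : ∫ ω, fexp X P x ω ∂P = 1 := by
  simpa using hX.integral_fexp_pow x 1

/-- The variance is continuous, being read off from the characteristic function, to which
dominated convergence applies. -/
lemma continuous_var (hX : IsField X P) : Continuous fun x => ∫ ω, (X x ω) ^ 2 ∂P := by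
  have h : Continuous fun x => ∫ ω, Complex.exp (X x ω * Complex.I) ∂P := by
    refine continuous_of_dominated (bound := fun _ => 1) (fun x => ?_) (fun x => ?_)
      (integrable_const _) (Eventually.of_forall fun ω => ?_)
    · have := hX.meas x
      exact Measurable.aestronglyMeasurable (by fun_prop)
    · exact Eventually.of_forall fun ω => by simp [Complex.norm_exp_ofReal_mul_I]
    · have := hX.cont ω
      fun_prop
  have e : ∀ x, ∫ ω, Complex.exp (X x ω * Complex.I) ∂P
      = ((Real.exp (-(∫ ω, (X x ω) ^ 2 ∂P) / 2) : ℝ) : ℂ) := by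
    intro x
    have hc := charFun_gaussianReal (μ := 0) (v := (∫ ω, (X x ω) ^ 2 ∂P).toNNReal) 1
    rw [← hX.map_eq, charFun_apply_real, integral_map (hX.meas x).aemeasurable (by fun_prop),
      Real.coe_toNNReal _ (integral_nonneg fun ω => sq_nonneg _)] at hc
    simp only [Complex.ofReal_one, one_mul] at hc
    rw [hc]
    push_cast
    congr 1
    ring
  simp_rw [e] at h
  have h2 := Complex.continuous_re.comp h
  simp only [Function.comp_def, Complex.ofReal_re] at h2
  have h3 := (h2.log fun x => (Real.exp_pos _).ne').const_mul (-2)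
  simp only [Real.log_exp] at h3
  convert! h3 using 2 with x
  ring

lemma continuous_fexp (hX : IsField X P) (ω : Ω) : Continuous fun x => fexp X P x ω := by
  have h1 := hX.continuous_var
  have h2 := hX.cont ω
  unfold fexp
  fun_prop

lemma measurable_fexp (hX : IsField X P) (x : T) : Measurable (fexp X P x) := by
  have := hX.meas x
  unfold fexp
  fun_prop

variable [CompactSpace T] [MeasurableSpace T] [BorelSpace T]

lemma measurable_uncurry (hX : IsField X P) :
    Measurable (fun z : T × Ω => fexp X P z.1 z.2) :=
  measurable_uncurry_of_continuous_of_measurable hX.continuous_fexp hX.measurable_fexp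

variable {ρ : Measure T} [IsFiniteMeasure ρ]

lemma integrable_prod_pow (hX : IsField X P) (k : ℕ) :
    Integrable (fun z : T × Ω => fexp X P z.1 z.2 ^ k) (ρ.prod P) := by
  rw [integrable_prod_iff (hX.measurable_uncurry.pow_const k).aestronglyMeasurable]
  refine ⟨Eventually.of_forall fun x => hX.integrable_fexp_pow x k, ?_⟩
  have e : ∀ x, ∫ ω, ‖fexp X P x ω ^ k‖ ∂P
      = Real.exp (k * (k - 1) / 2 * ∫ ω, (X x ω) ^ 2 ∂P) := by
    intro x
    rw [← hX.integral_fexp_pow]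
    refine integral_congr_ae (Eventually.of_forall fun ω => ?_)
    exact Real.norm_of_nonneg (pow_nonneg (fexp_pos X P x ω).le k)
  simp_rw [e]
  have := hX.continuous_var
  have hc : Continuous fun x => Real.exp (k * (k - 1) / 2 * ∫ ω, (X x ω) ^ 2 ∂P) := by fun_prop
  exact hc.integrable_of_hasCompactSupport (HasCompactSupport.of_compactSpace _)

lemma integrable_path_pow (hX : IsField X P) (ω : Ω) (k : ℕ) :
    Integrable (fun x => fexp X P x ω ^ k) ρ :=
  ((hX.continuous_fexp ω).pow k).integrable_of_hasCompactSupport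
    (HasCompactSupport.of_compactSpace _)

lemma integrable_path (hX : IsField X P) (ω : Ω) : Integrable (fun x => fexp X P x ω) ρ := by
  simpa using hX.integrable_path_pow ω 1

lemma mass_nonneg (ω : Ω) : 0 ≤ mass X P ρ ω :=
  integral_nonneg fun x => (fexp_pos X P x ω).le

lemma mass_pos (hX : IsField X P) (hρ : ρ ≠ 0) (ω : Ω) : 0 < mass X P ρ ω := by
  have : NeZero ρ := ⟨hρ⟩
  exact integral_exp_pos (hX.integrable_path ω)

lemma integrable_mass (hX : IsField X P) : Integrable (mass X P ρ) P := by
  have := (hX.integrable_prod_pow (ρ := ρ) 1).integral_prod_right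
  simp only [pow_one] at this
  exact this

/-- All moments of the mass are finite, by Jensen's inequality for `u ↦ u ^ N`. -/
lemma integrable_mass_pow (hX : IsField X P) (N : ℕ) :
    Integrable (fun ω => mass X P ρ ω ^ N) P := by
  rcases eq_or_ne ρ 0 with rfl | hρ
  · simp [mass]
  have : NeZero ρ := ⟨hρ⟩
  have h := ((hX.integrable_prod_pow (ρ := ρ) N).integral_prod_right).const_mul
    (ρ.real Set.univ ^ N * (ρ.real Set.univ)⁻¹)
  refine h.mono' (hX.integrable_mass.1.pow N) (Eventually.of_forall fun ω => ?_)
  have hr : 0 < ρ.real Set.univ := by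
    rw [measureReal_def, ENNReal.toReal_pos_iff]
    exact ⟨by simpa [pos_iff_ne_zero] using hρ, measure_lt_top _ _⟩
  have hJ := (convexOn_pow N).map_average_le (μ := ρ) (continuous_pow N).continuousOn
    isClosed_Ici (Eventually.of_forall fun x => (fexp_pos X P x ω).le) (hX.integrable_path ω)
    (hX.integrable_path_pow ω N)
  rw [average_eq, average_eq, smul_eq_mul, smul_eq_mul, mul_pow, inv_pow] at hJ
  rw [Real.norm_of_nonneg (pow_nonneg (mass_nonneg ω) N), mul_assoc]
  calc mass X P ρ ω ^ N
      = ρ.real Set.univ ^ N * ((ρ.real Set.univ ^ N)⁻¹ * mass X P ρ ω ^ N) := by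
        field_simp
    _ ≤ _ := mul_le_mul_of_nonneg_left hJ (by positivity)

lemma integrable_prod_comp (hX : IsField X P) {s : T → T} (hs : Measurable s) :
    Integrable (fun z : T × Ω => fexp X P (s z.1) z.2) (ρ.prod P) := by
  have hm : Measurable (fun z : T × Ω => fexp X P (s z.1) z.2) :=
    hX.measurable_uncurry.comp ((hs.comp measurable_fst).prodMk measurable_snd)
  rw [integrable_prod_iff hm.aestronglyMeasurable]
  refine ⟨Eventually.of_forall fun x => hX.integrable_fexp (s x), ?_⟩
  have e : ∀ x, ∫ ω, ‖fexp X P (s x) ω‖ ∂P = 1 := by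
    intro x
    rw [← hX.integral_fexp (s x)]
    exact integral_congr_ae (Eventually.of_forall fun ω =>
      Real.norm_of_nonneg (fexp_pos X P (s x) ω).le)
  simp_rw [e]
  exact integrable_const _

/-- Continuity in `L¹` of the normalized exponentials, by Scheffé's argument. -/
lemma tendsto_integral_abs_sub (hX : IsField X P) {u : ℕ → T} {x : T}
    (hu : Tendsto u atTop (𝓝 x)) :
    Tendsto (fun m => ∫ ω, |fexp X P (u m) ω - fexp X P x ω| ∂P) atTop (𝓝 0) := by
  have hmin : ∀ m, Integrable (fun ω => min (fexp X P (u m) ω) (fexp X P x ω)) P := fun m =>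
    (hX.integrable_fexp (u m)).inf (hX.integrable_fexp x)
  have e : ∀ m, ∫ ω, |fexp X P (u m) ω - fexp X P x ω| ∂P
      = 1 + 1 - 2 * ∫ ω, min (fexp X P (u m) ω) (fexp X P x ω) ∂P := by
    intro m
    nth_rw 1 [← hX.integral_fexp (u m)]
    nth_rw 1 [← hX.integral_fexp x]
    rw [← integral_add (hX.integrable_fexp _) (hX.integrable_fexp _), ← integral_const_mul,
      ← integral_sub (f := fun ω => fexp X P (u m) ω + fexp X P x ω)
        ((hX.integrable_fexp _).add (hX.integrable_fexp _)) ((hmin m).const_mul 2)]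
    refine integral_congr_ae (Eventually.of_forall fun ω => ?_)
    rcases le_total (fexp X P (u m) ω) (fexp X P x ω) with h | h
    · simp only [min_eq_left h, abs_of_nonpos (sub_nonpos.2 h)]
      ring
    · simp only [min_eq_right h, abs_of_nonneg (sub_nonneg.2 h)]
      ring
  have h1 : Tendsto (fun m => ∫ ω, min (fexp X P (u m) ω) (fexp X P x ω) ∂P) atTop
      (𝓝 (∫ ω, fexp X P x ω ∂P)) := by
    refine tendsto_integral_of_dominated_convergence (fexp X P x) (fun m => (hmin m).1)
      (hX.integrable_fexp x) (fun m => Eventually.of_forall fun ω => ?_)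
      (Eventually.of_forall fun ω => ?_)
    · rw [Real.norm_of_nonneg (le_min (fexp_pos _ _ _ _).le (fexp_pos _ _ _ _).le)]
      exact min_le_right _ _
    · have h := ((hX.continuous_fexp ω).tendsto x).comp hu
      simpa using h.min (tendsto_const_nhds (x := fexp X P x ω))
  rw [hX.integral_fexp] at h1
  simp_rw [e]
  convert! (h1.const_mul 2).const_sub (1 + 1) using 2
  norm_num

/-- Discretizing the argument of the field changes the total mass by little in `L¹`. -/
lemma tendsto_mass_comp (hX : IsField X P) {s : ℕ → T → T} (hs : ∀ m, Measurable (s m))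
    (hlim : ∀ x, Tendsto (fun m => s m x) atTop (𝓝 x)) :
    Tendsto (fun m => ∫ ω, |∫ x, fexp X P (s m x) ω ∂ρ - mass X P ρ ω| ∂P) atTop (𝓝 0) := by
  have hi : ∀ m, Integrable (fun z : T × Ω => fexp X P (s m z.1) z.2 - fexp X P z.1 z.2)
      (ρ.prod P) := fun m =>
    (hX.integrable_prod_comp (hs m)).sub (hX.integrable_prod_comp measurable_id)
  have h1 : Tendsto (fun m => ∫ x, ∫ ω, |fexp X P (s m x) ω - fexp X P x ω| ∂P ∂ρ) atTop
      (𝓝 (∫ _, 0 ∂ρ)) := by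
    refine tendsto_integral_of_dominated_convergence (fun _ => 2)
      (fun m => (hi m).abs.integral_prod_left.1) (integrable_const _)
      (fun m => Eventually.of_forall fun x => ?_)
      (Eventually.of_forall fun x => hX.tendsto_integral_abs_sub (hlim x))
    rw [Real.norm_of_nonneg (integral_nonneg fun ω => abs_nonneg _)]
    calc ∫ ω, |fexp X P (s m x) ω - fexp X P x ω| ∂P
        ≤ ∫ ω, (fexp X P (s m x) ω + fexp X P x ω) ∂P := by
          refine integral_mono ((hX.integrable_fexp _).sub (hX.integrable_fexp _)).abs
            ((hX.integrable_fexp _).add (hX.integrable_fexp _)) fun ω => ?_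
          have h1 := fexp_pos X P (s m x) ω
          have h2 := fexp_pos X P x ω
          exact abs_le.2 ⟨by linarith, by linarith⟩
      _ = 2 := by
          rw [integral_add (hX.integrable_fexp _) (hX.integrable_fexp _), hX.integral_fexp,
            hX.integral_fexp]
          norm_num
  rw [integral_zero] at h1
  refine squeeze_zero (fun m => integral_nonneg fun ω => abs_nonneg _) (fun m => ?_) h1
  rw [integral_integral_swap (hi m).abs]
  have hi1 : Integrable (fun ω => ∫ x, fexp X P (s m x) ω ∂ρ) P :=
    (hX.integrable_prod_comp (hs m)).integral_prod_right
  refine integral_mono_ae (hi1.sub hX.integrable_mass).abs (hi m).abs.integral_prod_right ?_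
  filter_upwards [(hX.integrable_prod_comp (ρ := ρ) (hs m)).prod_left_ae] with ω hω
  simp only [mass]
  rw [← integral_sub hω (hX.integrable_path ω)]
  exact abs_integral_le_integral_abs

lemma _root_.KahaneConvexity.IsTest.integrable_comp {f f1 f2 : ℝ → ℝ} {L : ℝ}
    (hf : IsTest f f1 f2 L) {W : Ω → ℝ} (hW : Integrable W P) :
    Integrable (fun ω => f (W ω)) P :=
  ((integrable_const |f 0|).add (hW.abs.const_mul L)).mono'
    (hf.continuous.comp_aestronglyMeasurable hW.1) (Eventually.of_forall fun _ => hf.abs_le _)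

lemma tendsto_integral_comp (hX : IsField X P) {f f1 f2 : ℝ → ℝ} {L : ℝ} (hf : IsTest f f1 f2 L)
    {s : ℕ → T → T} (hs : ∀ m, Measurable (s m))
    (hlim : ∀ x, Tendsto (fun m => s m x) atTop (𝓝 x)) :
    Tendsto (fun m => ∫ ω, f (∫ x, fexp X P (s m x) ω ∂ρ) ∂P) atTop
      (𝓝 (∫ ω, f (mass X P ρ ω) ∂P)) := by
  have hi1 : ∀ m, Integrable (fun ω => ∫ x, fexp X P (s m x) ω ∂ρ) P := fun m =>
    (hX.integrable_prod_comp (hs m)).integral_prod_right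
  rw [tendsto_iff_norm_sub_tendsto_zero]
  have h := (hX.tendsto_mass_comp (ρ := ρ) hs hlim).const_mul L
  rw [mul_zero] at h
  refine squeeze_zero (fun m => norm_nonneg _) (fun m => ?_) h
  rw [← integral_sub (hf.integrable_comp (hi1 m)) (hf.integrable_comp hX.integrable_mass), ← integral_const_mul]
  refine (norm_integral_le_integral_norm _).trans ?_
  exact integral_mono ((hf.integrable_comp (hi1 m)).sub (hf.integrable_comp hX.integrable_mass)).norm
    (((hi1 m).sub hX.integrable_mass).abs.const_mul L) fun ω => hf.lipschitz _ _

/-- Integrating a function of a simple function amounts to a finite sum with nonnegative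
weights. -/
lemma exists_sum_eq (s : SimpleFunc T T) : ∃ (n : ℕ) (p : Fin n → ℝ) (y : Fin n → T),
    (∀ i, 0 ≤ p i) ∧ ∀ g : T → ℝ, ∫ x, g (s x) ∂ρ = ∑ i, p i * g (y i) := by
  let e := s.range.equivFin
  refine ⟨s.range.card, fun i => ρ.real (s ⁻¹' {(e.symm i : T)}), fun i => (e.symm i : T),
    fun i => measureReal_nonneg, fun g => ?_⟩
  have h1 : ∀ x, g (s x) = ∑ y ∈ s.range, (s ⁻¹' {y}).indicator (fun _ => g y) x := by
    intro x
    rw [Finset.sum_eq_single (s x)]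
    · simp
    · intro y _ hy
      exact Set.indicator_of_notMem (fun h => hy h.symm) _
    · intro h
      exact absurd (s.mem_range_self x) h
  simp_rw [h1]
  rw [integral_finsetSum _ fun y _ => (integrable_const _).indicator (s.measurableSet_fiber y)]
  simp_rw [integral_indicator_const _ (s.measurableSet_fiber _), smul_eq_mul]
  rw [← Finset.sum_coe_sort]
  exact (e.symm.sum_comp fun y : s.range => ρ.real (s ⁻¹' {(y : T)}) * g y).symm

/-- The comparison for smooth convex test functions. -/
lemma integral_test_le {Y : T → Ω → ℝ} (hX : IsField X P) (hY : IsField Y P)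
    (hcov : ∀ x y, ∫ ω, X x ω * X y ω ∂P ≤ ∫ ω, Y x ω * Y y ω ∂P)
    {f f1 f2 : ℝ → ℝ} {L : ℝ} (hf : IsTest f f1 f2 L) :
    ∫ ω, f (mass X P ρ ω) ∂P ≤ ∫ ω, f (mass Y P ρ ω) ∂P := by
  rcases isEmpty_or_nonempty T with hT | ⟨⟨y0⟩⟩
  · simp [mass, Subsingleton.elim ρ 0]
  let s : ℕ → SimpleFunc T T := fun m =>
    SimpleFunc.approxOn id measurable_id Set.univ y0 (Set.mem_univ _) m
  have hs : ∀ m, Measurable (s m) := fun m => (s m).measurable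
  have hlim : ∀ x, Tendsto (fun m => s m x) atTop (𝓝 x) := fun x =>
    SimpleFunc.tendsto_approxOn measurable_id (Set.mem_univ _) (by simp)
  refine le_of_tendsto_of_tendsto' (hX.tendsto_integral_comp hf hs hlim)
    (hY.tendsto_integral_comp hf hs hlim) fun m => ?_
  obtain ⟨n, p, y, hp, h⟩ := exists_sum_eq (ρ := ρ) (s m)
  simp_rw [fun ω => h fun x => fexp X P x ω, fun ω => h fun x => fexp Y P x ω]
  rw [hX.integral_comp_sum hf.continuous, hY.integral_comp_sum hf.continuous]
  exact gexp_mono hf (hX.posSemidef y) (hY.posSemidef y) (fun i j => hcov _ _) p hp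

lemma integrable_affMax_comp (a b : ℕ → ℝ) (n : ℕ) {W : Ω → ℝ} (hW : Integrable W P) :
    Integrable (fun ω => affMax a b n (W ω)) P := by
  obtain ⟨f1, f2, L, hf⟩ := isTest_softMax a b n 1 one_pos
  have h := hf.integrable_comp hW
  have hm : AEStronglyMeasurable (fun ω => affMax a b n (W ω)) P :=
    (continuous_affMax a b n).comp_aestronglyMeasurable hW.1
  have hd : Integrable (fun ω => softMax a b n 1 (W ω) - affMax a b n (W ω)) P :=
    (integrable_const (Real.log (n + 1) / 1)).mono' (h.1.sub hm)
      (Eventually.of_forall fun ω => abs_softMax_sub_affMax_le a b n 1 one_pos (W ω))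
  refine (h.sub hd).congr (Eventually.of_forall fun ω => ?_)
  simp

/-- The comparison for maxima of affine functions. -/
lemma integral_affMax_le {Y : T → Ω → ℝ} (hX : IsField X P) (hY : IsField Y P)
    (hcov : ∀ x y, ∫ ω, X x ω * X y ω ∂P ≤ ∫ ω, Y x ω * Y y ω ∂P) (a b : ℕ → ℝ) (n : ℕ) :
    ∫ ω, affMax a b n (mass X P ρ ω) ∂P ≤ ∫ ω, affMax a b n (mass Y P ρ ω) ∂P := by
  refine le_of_forall_pos_le_add fun ε hε => ?_
  set c := Real.log (n + 1) with hc
  have hc0 : 0 ≤ c := Real.log_nonneg (by simp)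
  -- with this `β` the two errors, `c / β` each, add up to at most `ε`
  set β := (2 * c + 1) / ε with hβd
  have hβ : 0 < β := by positivity
  have hcβ : c / β + c / β ≤ ε := by
    have e : c / β + c / β = ε * (2 * c / (2 * c + 1)) := by
      rw [hβd]
      field_simp
      ring
    rw [e]
    have : 2 * c / (2 * c + 1) ≤ 1 := by
      rw [div_le_one (by positivity)]
      linarith
    nlinarith
  obtain ⟨f1, f2, L, hf⟩ := isTest_softMax a b n β hβ
  have hd := abs_softMax_sub_affMax_le a b n β hβ
  calc ∫ ω, affMax a b n (mass X P ρ ω) ∂P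
      ≤ ∫ ω, (softMax a b n β (mass X P ρ ω) + c / β) ∂P := by
        refine integral_mono (integrable_affMax_comp a b n hX.integrable_mass)
          ((hf.integrable_comp hX.integrable_mass).add (integrable_const _)) fun ω => ?_
        have := (abs_le.1 (hd (mass X P ρ ω))).1
        simp only
        linarith
    _ = ∫ ω, softMax a b n β (mass X P ρ ω) ∂P + c / β := by
        rw [integral_add (hf.integrable_comp hX.integrable_mass) (integrable_const _)]
        simp
    _ ≤ ∫ ω, softMax a b n β (mass Y P ρ ω) ∂P + c / β := by
        have := hX.integral_test_le (ρ := ρ) hY hcov hf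
        linarith
    _ ≤ ∫ ω, (affMax a b n (mass Y P ρ ω) + c / β) ∂P + c / β := by
        gcongr ?_ + _
        refine integral_mono (hf.integrable_comp hY.integrable_mass)
          ((integrable_affMax_comp a b n hY.integrable_mass).add (integrable_const _)) fun ω => ?_
        have := (abs_le.1 (hd (mass Y P ρ ω))).2
        simp only
        linarith
    _ = ∫ ω, affMax a b n (mass Y P ρ ω) ∂P + (c / β + c / β) := by
        rw [integral_add (integrable_affMax_comp a b n hY.integrable_mass) (integrable_const _)]
        simp [add_assoc]
    _ ≤ _ := by gcongr

/-- A continuous convex function on `[0, ∞)` is the increasing limit of maxima of finitely many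
affine functions. -/
lemma exists_affMax_tendsto {F : ℝ → ℝ} (hF : ConvexOn ℝ (Set.Ici 0) F)
    (hc : ContinuousOn F (Set.Ici 0)) : ∃ a b : ℕ → ℝ, ∀ u, 0 ≤ u →
      (∀ n, affMax a b 0 u ≤ affMax a b n u ∧ affMax a b n u ≤ F u) ∧
      Tendsto (fun n => affMax a b n u) atTop (𝓝 (F u)) := by
  obtain ⟨l, c, h1, h2⟩ := hF.real_sSup_of_nat_affine_eq isClosed_Ici hc.lowerSemicontinuousOn
  refine ⟨fun i => l i 1, c, fun u hu => ?_⟩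
  have hl : ∀ i, l i u = l i 1 * u := by
    intro i
    have := (l i).map_smul u 1
    simpa [mul_comm] using this
  have hle : ∀ i, l i 1 * u + c i ≤ F u := by
    intro i
    have := h1 i ⟨u, hu⟩
    simpa [hl] using this
  have hsup : ⨆ i, (l i 1 * u + c i) = F u := by
    have := congrFun h2 ⟨u, hu⟩
    rw [iSup_apply] at this
    simpa [hl] using this
  have hub : ∀ n, affMax (fun i => l i 1) c n u ≤ F u := fun n =>
    Finset.sup'_le _ _ fun i _ => hle i
  have hlb : ∀ i n, i ≤ n → l i 1 * u + c i ≤ affMax (fun i => l i 1) c n u := fun i n hin =>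
    Finset.le_sup' (fun k => l k 1 * u + c k) (Finset.mem_range.2 (Nat.lt_succ_of_le hin))
  refine ⟨fun n => ⟨?_, hub n⟩, ?_⟩
  · refine Finset.sup'_le _ _ fun i hi => hlb i n ?_
    have := Finset.mem_range.1 hi
    omega
  · refine tendsto_order.2 ⟨fun x hx => ?_, fun x hx =>
      Eventually.of_forall fun n => (hub n).trans_lt hx⟩
    rw [← hsup] at hx
    obtain ⟨i, hi⟩ := exists_lt_of_lt_ciSup hx
    filter_upwards [eventually_ge_atTop i] with n hn
    exact hi.trans_le (hlb i n hn)

lemma integrable_comp_mass (hX : IsField X P) {F : ℝ → ℝ} {A : ℝ} {N : ℕ}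
    (hg : ∀ u, 0 ≤ u → |F u| ≤ A * (1 + u ^ N))
    (hm : AEStronglyMeasurable (fun ω => F (mass X P ρ ω)) P) :
    Integrable (fun ω => F (mass X P ρ ω)) P :=
  (((integrable_const 1).add (hX.integrable_mass_pow N)).const_mul A).mono' hm
    (Eventually.of_forall fun ω => hg (mass X P ρ ω) (mass_nonneg ω))

lemma aestronglyMeasurable_comp_mass (hX : IsField X P) {F : ℝ → ℝ}
    (hc : ContinuousOn F (Set.Ici 0)) :
    AEStronglyMeasurable (fun ω => F (mass X P ρ ω)) P := by
  have h : Continuous fun u => F (max u 0) :=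
    hc.comp_continuous (by fun_prop) fun u => le_max_right u 0
  refine (h.comp_aestronglyMeasurable (hX.integrable_mass (ρ := ρ)).1).congr
    (Eventually.of_forall fun ω => ?_)
  simp [max_eq_left (mass_nonneg (X := X) (P := P) (ρ := ρ) ω)]

lemma tendsto_integral_affMax (hX : IsField X P) {F : ℝ → ℝ} {a b : ℕ → ℝ}
    (h : ∀ u, 0 ≤ u → (∀ n, affMax a b 0 u ≤ affMax a b n u ∧ affMax a b n u ≤ F u) ∧
      Tendsto (fun n => affMax a b n u) atTop (𝓝 (F u)))
    (hi : Integrable (fun ω => F (mass X P ρ ω)) P) :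
    Tendsto (fun n => ∫ ω, affMax a b n (mass X P ρ ω) ∂P) atTop
      (𝓝 (∫ ω, F (mass X P ρ ω) ∂P)) := by
  refine tendsto_integral_of_dominated_convergence
    (fun ω => |F (mass X P ρ ω)| + |affMax a b 0 (mass X P ρ ω)|)
    (fun n => (integrable_affMax_comp a b n hX.integrable_mass).1)
    (hi.abs.add (integrable_affMax_comp a b 0 hX.integrable_mass).abs)
    (fun n => Eventually.of_forall fun ω => ?_)
    (Eventually.of_forall fun ω => (h _ (mass_nonneg ω)).2)
  obtain ⟨h1, h2⟩ := (h _ (mass_nonneg (X := X) (P := P) (ρ := ρ) ω)).1 n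
  rw [Real.norm_eq_abs, abs_le]
  constructor
  · linarith [neg_abs_le (affMax a b 0 (mass X P ρ ω)), abs_nonneg (F (mass X P ρ ω))]
  · linarith [le_abs_self (F (mass X P ρ ω)), abs_nonneg (affMax a b 0 (mass X P ρ ω))]

/-- The comparison for continuous convex functions on `[0, ∞)`. -/
lemma integral_continuous_le {Y : T → Ω → ℝ} (hX : IsField X P) (hY : IsField Y P)
    (hcov : ∀ x y, ∫ ω, X x ω * X y ω ∂P ≤ ∫ ω, Y x ω * Y y ω ∂P) {F : ℝ → ℝ}
    (hF : ConvexOn ℝ (Set.Ici 0) F) (hc : ContinuousOn F (Set.Ici 0)) {A : ℝ} {N : ℕ}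
    (hg : ∀ u, 0 ≤ u → |F u| ≤ A * (1 + u ^ N)) :
    ∫ ω, F (mass X P ρ ω) ∂P ≤ ∫ ω, F (mass Y P ρ ω) ∂P := by
  obtain ⟨a, b, h⟩ := exists_affMax_tendsto hF hc
  exact le_of_tendsto_of_tendsto'
    (hX.tendsto_integral_affMax h
      (hX.integrable_comp_mass hg (hX.aestronglyMeasurable_comp_mass hc)))
    (hY.tendsto_integral_affMax h
      (hY.integrable_comp_mass hg (hY.aestronglyMeasurable_comp_mass hc)))
    fun n => hX.integral_affMax_le hY hcov a b n

lemma tendsto_comp_shift {F : ℝ → ℝ} (hF : ConvexOn ℝ (Set.Ici 0) F) {u : ℝ} (hu : 0 < u) :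
    Tendsto (fun m : ℕ => F (u + 1 / ((m : ℝ) + 1))) atTop (𝓝 (F u)) := by
  have hc : ContinuousAt F u := by
    have h := hF.continuousOn_interior
    rw [interior_Ici] at h
    exact h.continuousAt (Ioi_mem_nhds hu)
  have h1 : Tendsto (fun m : ℕ => u + 1 / ((m : ℝ) + 1)) atTop (𝓝 u) := by
    simpa using (tendsto_one_div_add_atTop_nhds_zero_nat (𝕜 := ℝ)).const_add u
  exact hc.tendsto.comp h1

lemma continuousOn_shift {F : ℝ → ℝ} (hF : ConvexOn ℝ (Set.Ici 0) F) {δ : ℝ} (hδ : 0 < δ) :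
    ContinuousOn (fun u => F (u + δ)) (Set.Ici 0) := by
  have h := hF.continuousOn_interior
  rw [interior_Ici] at h
  exact h.comp (by fun_prop) fun u hu => add_pos_of_nonneg_of_pos (Set.mem_Ici.1 hu) hδ

lemma convexOn_shift {F : ℝ → ℝ} (hF : ConvexOn ℝ (Set.Ici 0) F) {δ : ℝ} (hδ : 0 < δ) :
    ConvexOn ℝ (Set.Ici 0) (fun u => F (u + δ)) := by
  refine (hF.translate_left δ).subset (fun u hu => ?_) (convex_Ici 0)
  have : 0 ≤ u := hu
  simp only [Set.mem_preimage, Set.mem_Ici]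
  linarith

lemma shift_growth {F : ℝ → ℝ} {A : ℝ} (hA : 0 < A) {N : ℕ}
    (hg : ∀ u, 0 ≤ u → |F u| ≤ A * (1 + u ^ N)) {δ : ℝ} (hδ : 0 < δ) (hδ1 : δ ≤ 1) (u : ℝ)
    (hu : 0 ≤ u) : |F (u + δ)| ≤ A * (1 + 2 ^ N) * (1 + u ^ N) := by
  have h1 : (u + δ) ^ N ≤ 2 ^ N * (1 + u ^ N) := by
    rcases le_total u 1 with h | h
    · calc (u + δ) ^ N ≤ 2 ^ N := by
            gcongr
            linarith
        _ ≤ _ := le_mul_of_one_le_right (by positivity) (by linarith [pow_nonneg hu N])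
    · calc (u + δ) ^ N ≤ (2 * u) ^ N := by
            gcongr
            linarith
        _ ≤ _ := by
            rw [mul_pow]
            gcongr
            linarith
  calc |F (u + δ)| ≤ A * (1 + (u + δ) ^ N) := hg _ (by positivity)
    _ ≤ A * (1 + u ^ N + 2 ^ N * (1 + u ^ N)) := by
        gcongr
        linarith [pow_nonneg hu N]
    _ = _ := by ring

/-- If `ρ ≠ 0` the mass is positive, so `F (mass + δ)` tends to `F mass` as `δ → 0` although `F`
may jump at `0`; for fixed `δ > 0` the function `u ↦ F (u + δ)` is continuous on `[0, ∞)`. -/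
lemma integrable_comp_mass_and_tendsto (hX : IsField X P) (hρ : ρ ≠ 0) {F : ℝ → ℝ}
    (hF : ConvexOn ℝ (Set.Ici 0) F) {A : ℝ} (hA : 0 < A) {N : ℕ}
    (hg : ∀ u, 0 ≤ u → |F u| ≤ A * (1 + u ^ N)) :
    Integrable (fun ω => F (mass X P ρ ω)) P ∧
    Tendsto (fun m : ℕ => ∫ ω, F (mass X P ρ ω + 1 / ((m : ℝ) + 1)) ∂P) atTop
      (𝓝 (∫ ω, F (mass X P ρ ω) ∂P)) := by
  have hm : ∀ m : ℕ, AEStronglyMeasurable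
      (fun ω => F (mass X P ρ ω + 1 / ((m : ℝ) + 1))) P := fun m =>
    hX.aestronglyMeasurable_comp_mass (F := fun u => F (u + 1 / ((m : ℝ) + 1)))
      (continuousOn_shift hF Nat.one_div_pos_of_nat)
  have hlim : ∀ ω, Tendsto (fun m : ℕ => F (mass X P ρ ω + 1 / ((m : ℝ) + 1))) atTop
      (𝓝 (F (mass X P ρ ω))) := fun ω => tendsto_comp_shift hF (hX.mass_pos hρ ω)
  refine ⟨hX.integrable_comp_mass hg
    (aestronglyMeasurable_of_tendsto_ae atTop hm (Eventually.of_forall hlim)), ?_⟩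
  refine tendsto_integral_of_dominated_convergence
    (fun ω => A * (1 + 2 ^ N) * (1 + mass X P ρ ω ^ N)) hm
    (((integrable_const 1).add (hX.integrable_mass_pow N)).const_mul _)
    (fun m => Eventually.of_forall fun ω => ?_) (Eventually.of_forall hlim)
  refine shift_growth hA hg Nat.one_div_pos_of_nat ?_ _ (mass_nonneg ω)
  rw [div_le_one (by positivity)]
  linarith [(Nat.cast_nonneg m : (0 : ℝ) ≤ m)]

/-- Kahane's inequality for fields on a compact metric space, all of whose paths are
continuous. -/
lemma integral_convex_le {Y : T → Ω → ℝ} (hX : IsField X P) (hY : IsField Y P)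
    (hcov : ∀ x y, ∫ ω, X x ω * X y ω ∂P ≤ ∫ ω, Y x ω * Y y ω ∂P) {F : ℝ → ℝ}
    (hF : ConvexOn ℝ (Set.Ici 0) F) {A : ℝ} (hA : 0 < A) {N : ℕ}
    (hg : ∀ u, 0 ≤ u → |F u| ≤ A * (1 + u ^ N)) :
    Integrable (fun ω => F (mass X P ρ ω)) P ∧ Integrable (fun ω => F (mass Y P ρ ω)) P ∧
    ∫ ω, F (mass X P ρ ω) ∂P ≤ ∫ ω, F (mass Y P ρ ω) ∂P := by
  rcases eq_or_ne ρ 0 with rfl | hρ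
  · simp [mass]
  obtain ⟨hiX, hlX⟩ := hX.integrable_comp_mass_and_tendsto hρ hF hA hg
  obtain ⟨hiY, hlY⟩ := hY.integrable_comp_mass_and_tendsto hρ hF hA hg
  refine ⟨hiX, hiY, le_of_tendsto_of_tendsto' hlX hlY fun m => ?_⟩
  refine hX.integral_continuous_le hY hcov (F := fun u => F (u + 1 / ((m : ℝ) + 1)))
    (convexOn_shift hF Nat.one_div_pos_of_nat)
    (continuousOn_shift hF Nat.one_div_pos_of_nat)
    (shift_growth hA hg Nat.one_div_pos_of_nat ?_)
  rw [div_le_one (by positivity)]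
  linarith [(Nat.cast_nonneg m : (0 : ℝ) ≤ m)]

end IsField

end field

/-! ### Reduction to fields with continuous paths on the compact set -/

/-- Restricting to `K` and modifying the field on a null event makes all paths continuous. -/
lemma exists_isField {d : ℕ} {Ω : Type*} [MeasurableSpace Ω] {P : Measure Ω}
    {K : Set (EuclideanSpace ℝ (Fin d))} {X : EuclideanSpace ℝ (Fin d) → Ω → ℝ}
    (hmeas : ∀ x, Measurable (X x))
    (hcont : ∀ᵐ ω ∂P, ContinuousOn (fun x => X x ω) K)
    (hgauss : ∀ (n : ℕ) (x : Fin n → EuclideanSpace ℝ (Fin d)), (∀ i, x i ∈ K) →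
      ∀ a : Fin n → ℝ, ∃ v : NNReal,
        Measure.map (fun ω => ∑ i, a i * X (x i) ω) P = gaussianReal 0 v) :
    ∃ X' : K → Ω → ℝ, IsField X' P ∧ ∀ᵐ ω ∂P, ∀ x : K, X' x ω = X x ω := by
  obtain ⟨t, htsub, htm, ht0⟩ := exists_measurable_superset_of_null (ae_iff.1 hcont)
  have htc : ∀ᵐ ω ∂P, ω ∈ tᶜ := compl_mem_ae_iff.2 ht0
  have heq : ∀ ω ∈ tᶜ, ∀ x : K, tᶜ.indicator (X x) ω = X x ω := fun ω hω x =>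
    Set.indicator_of_mem hω _
  refine ⟨fun x => tᶜ.indicator (X x), ⟨fun x => (hmeas x).indicator htm.compl, fun ω => ?_,
    fun n x a => ?_⟩, ?_⟩
  · by_cases hω : ω ∈ tᶜ
    · have hc : ContinuousOn (fun x => X x ω) K := by
        by_contra h
        exact hω (htsub h)
      simp_rw [heq ω hω]
      exact hc.domRestrict
    · simp_rw [fun x : K => Set.indicator_of_notMem hω (X x)]
      exact continuous_const
  · obtain ⟨v, hv⟩ := hgauss n (fun i => x i) (fun i => (x i).2) a
    refine ⟨v, ?_⟩
    rw [← hv]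
    refine Measure.map_congr ?_
    filter_upwards [htc] with ω hω
    simp_rw [heq ω hω]
  · filter_upwards [htc] with ω hω x using heq ω hω x

lemma mass_ae_eq {d : ℕ} {Ω : Type*} [MeasurableSpace Ω] {P : Measure Ω}
    {K : Set (EuclideanSpace ℝ (Fin d))} (hK : MeasurableSet K)
    (ρ : Measure (EuclideanSpace ℝ (Fin d))) {X : EuclideanSpace ℝ (Fin d) → Ω → ℝ}
    {X' : K → Ω → ℝ} (h : ∀ᵐ ω ∂P, ∀ x : K, X' x ω = X x ω) :
    mass X' P (ρ.comap Subtype.val) =ᵐ[P]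
      fun ω => ∫ x in K, Real.exp (X x ω - (∫ ω', (X x ω') ^ 2 ∂P) / 2) ∂ρ := by
  have hv : ∀ x : K, ∫ ω, (X' x ω) ^ 2 ∂P = ∫ ω, (X x ω) ^ 2 ∂P := by
    intro x
    refine integral_congr_ae ?_
    filter_upwards [h] with ω hω
    rw [hω x]
  filter_upwards [h] with ω hω
  rw [← integral_subtype_comap hK fun x => Real.exp (X x ω - (∫ ω', (X x ω') ^ 2 ∂P) / 2)]
  unfold mass fexp
  simp_rw [hω, hv]

end KahaneConvexity

/-- Kahane's convexity inequality: Let `K ⊂ ℝ^d` be compact, `ρ` a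
finite Borel measure on `K`, and `X, Y` centered continuous Gaussian fields on `K`
with `E[X(x)X(y)] ≤ E[Y(x)Y(y)]` for all `x, y ∈ K`. Then for every convex
`F : [0,∞) → ℝ` of at most polynomial growth,
`E[F(∫_K exp(X(x) − ½E[X(x)²]) ρ(dx))] ≤ E[F(∫_K exp(Y(x) − ½E[Y(x)²]) ρ(dx))]`,
both expectations being finite. -/
theorem stmt_14 {d : ℕ} {Ω : Type*} [MeasureSpace Ω] [IsProbabilityMeasure (ℙ : Measure Ω)]
    (K : Set (EuclideanSpace ℝ (Fin d))) (hK : IsCompact K)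
    (ρ : Measure (EuclideanSpace ℝ (Fin d))) [IsFiniteMeasure ρ] (hρ : ρ Kᶜ = 0)
    (X Y : EuclideanSpace ℝ (Fin d) → Ω → ℝ)
    (hXmeas : ∀ x, Measurable (X x)) (hYmeas : ∀ x, Measurable (Y x))
    (hXcont : ∀ᵐ ω, ContinuousOn (fun x => X x ω) K)
    (hYcont : ∀ᵐ ω, ContinuousOn (fun x => Y x ω) K)
    (hXgauss : ∀ (n : ℕ) (x : Fin n → EuclideanSpace ℝ (Fin d)), (∀ i, x i ∈ K) →
      ∀ a : Fin n → ℝ, ∃ v : NNReal,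
        Measure.map (fun ω => ∑ i, a i * X (x i) ω) ℙ = gaussianReal 0 v)
    (hYgauss : ∀ (n : ℕ) (x : Fin n → EuclideanSpace ℝ (Fin d)), (∀ i, x i ∈ K) →
      ∀ a : Fin n → ℝ, ∃ v : NNReal,
        Measure.map (fun ω => ∑ i, a i * Y (x i) ω) ℙ = gaussianReal 0 v)
    (hcov : ∀ x ∈ K, ∀ y ∈ K, (∫ ω, X x ω * X y ω) ≤ ∫ ω, Y x ω * Y y ω)
    (F : ℝ → ℝ) (hFconv : ConvexOn ℝ (Set.Ici 0) F)
    (hFgrowth : ∃ A > (0:ℝ), ∃ N : ℕ, ∀ u : ℝ, 0 ≤ u → |F u| ≤ A * (1 + u ^ N)) :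
    Integrable
      (fun ω => F (∫ x in K, Real.exp (X x ω - (∫ ω', (X x ω') ^ 2) / 2) ∂ρ)) ∧
    Integrable
      (fun ω => F (∫ x in K, Real.exp (Y x ω - (∫ ω', (Y x ω') ^ 2) / 2) ∂ρ)) ∧
    (∫ ω, F (∫ x in K, Real.exp (X x ω - (∫ ω', (X x ω') ^ 2) / 2) ∂ρ)) ≤
      ∫ ω, F (∫ x in K, Real.exp (Y x ω - (∫ ω', (Y x ω') ^ 2) / 2) ∂ρ) := by
  obtain ⟨A, hA, N, hg⟩ := hFgrowth
  obtain ⟨X', hX', hXX'⟩ := KahaneConvexity.exists_isField hXmeas hXcont hXgauss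
  obtain ⟨Y', hY', hYY'⟩ := KahaneConvexity.exists_isField hYmeas hYcont hYgauss
  have hKm : MeasurableSet K := hK.isClosed.measurableSet
  have : CompactSpace K := isCompact_iff_compactSpace.1 hK
  have : IsFiniteMeasure (ρ.comap (Subtype.val : K → EuclideanSpace ℝ (Fin d))) := by
    refine ⟨?_⟩
    rw [(MeasurableEmbedding.subtype_coe hKm).comap_apply]
    exact measure_lt_top _ _
  have hcov' : ∀ x y : K, ∫ ω, X' x ω * X' y ω ≤ ∫ ω, Y' x ω * Y' y ω := by
    intro x y
    have eX : ∫ ω, X' x ω * X' y ω = ∫ ω, X x ω * X y ω := by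
      refine integral_congr_ae ?_
      filter_upwards [hXX'] with ω hω
      rw [hω, hω]
    have eY : ∫ ω, Y' x ω * Y' y ω = ∫ ω, Y x ω * Y y ω := by
      refine integral_congr_ae ?_
      filter_upwards [hYY'] with ω hω
      rw [hω, hω]
    rw [eX, eY]
    exact hcov x x.2 y y.2
  have hmX := (KahaneConvexity.mass_ae_eq hKm ρ hXX').fun_comp F
  have hmY := (KahaneConvexity.mass_ae_eq hKm ρ hYY').fun_comp F
  obtain ⟨h1, h2, h3⟩ := hX'.integral_convex_le (ρ := ρ.comap Subtype.val) hY' hcov' hFconv hA hg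
  exact ⟨h1.congr hmX, h2.congr hmY,
    (integral_congr_ae hmX).symm.trans_le (h3.trans_eq (integral_congr_ae hmY))⟩
end

section
/- Let K ⊂ ℝ^d be compact, let ρ be a finite Borel measure on K, and let X and Y be independent centered continuous Gaussian fields on K (defined on a common probability space). For t ∈ [0,1] set Z_t(x) = √t·X(x) + √(1−t)·Y(x) and W_t = ∫_K exp( Z_t(x) − (1/2)·E[Z_t(x)²] ) ρ(dx), and for a twice continuously differentiable function F : [0, ∞) → ℝ such that F, F' and F'' have at most polynomial growth at infinity, set φ(t) = E[F(W_t)]. If there exists C > 0 such that |E[X(x)·X(y)] − E[Y(x)·Y(y)]| ≤ C for all x, y ∈ K, then |φ(1) − φ(0)| ≤ (C/2) · ∫₀¹ E[ W_t² · |F''(W_t)| ] dt. -/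
/-!
The proof is Kahane's Gaussian interpolation. With `t = sin² θ` the interpolating field becomes
`Z = sin θ • X + cos θ • Y`, which is smooth in `θ` up to the endpoints, and `dt = 2 sin θ cos θ dθ`.

For a finite Gaussian vector in place of the field, the mass is `w = ∑ᵢ pᵢ eᵢ` with
`eᵢ = exp (Zᵢ - E Zᵢ² / 2)`. Differentiating `E[F(w)]` in `θ` produces the Gaussian variables
`Zᵢ' = cos θ Xᵢ - sin θ Yᵢ`, whose covariances are
`E[Zᵢ' Zⱼ] = sin θ cos θ (E[Xᵢ Xⱼ] - E[Yᵢ Yⱼ])`. Gaussian integration by parts (`gaussian_ibp`,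
`ibp_wt`) replaces `Zᵢ'` by these covariances. The terms with `F'` involve only `i = j` and cancel
against the derivative of the normalising variance, which leaves
`sin θ cos θ E[F''(w) ∑ᵢⱼ pᵢ pⱼ eᵢ eⱼ (E[Xᵢ Xⱼ] - E[Yᵢ Yⱼ])]`. Its absolute value is at most
`C sin θ cos θ E[w² |F''(w)|]`; integrating over `[0, π/2]` gives `finite_interp`.

For the field, the identity of `K` is approximated by simple functions with values in `K`, so that
the discretised masses are of the above form and converge pathwise to `W` (`tendsto_disc`). The
convergence uses continuity of the variances, obtained from `E cos X(x) = exp (-E X(x)² / 2)`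
(`continuousOn_var`). Expectations converge because all moments of the discretised masses are
bounded uniformly, by the Gaussian moment generating function (`integral_wθ_pow_le`,
`tendsto_integral_of_sq_le`). This gives `field_interp`, and the substitution `t = sin² θ`
(`integral_sin_sq_subst`) turns it into the stated inequality.
-/

open MeasureTheory ProbabilityTheory Filter

namespace Kahane

/-! ### Gaussian integration by parts -/

/-- Exponential moments of the norm under a Gaussian measure, from Fernique's theorem. They supply
every domination needed for functions of a finite Gaussian vector. -/
lemma integrable_exp_norm {E : Type*} [NormedAddCommGroup E] [NormedSpace ℝ E] [CompleteSpace E]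
    [SecondCountableTopology E] [MeasurableSpace E] [BorelSpace E] (μ : Measure E) [IsGaussian μ]
    (k : ℝ) : Integrable (fun x => Real.exp (k * ‖x‖)) μ := by
  obtain ⟨C, hC, hint⟩ := IsGaussian.exists_integrable_exp_sq μ
  refine (hint.const_mul (Real.exp (k ^ 2 / (4 * C)))).mono' (by fun_prop) (ae_of_all _ fun x => ?_)
  rw [Real.norm_of_nonneg (Real.exp_pos _).le, ← Real.exp_add, Real.exp_le_exp]
  have h : k ^ 2 / (4 * C) + C * ‖x‖ ^ 2 - k * ‖x‖ = (2 * C * ‖x‖ - k) ^ 2 / (4 * C) := by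
    field_simp; ring
  have : 0 ≤ (2 * C * ‖x‖ - k) ^ 2 / (4 * C) := by positivity
  linarith

lemma integrable_exp_norm_comp {Ω E : Type*} [MeasurableSpace Ω] {P : Measure Ω}
    [NormedAddCommGroup E] [NormedSpace ℝ E] [CompleteSpace E]
    [SecondCountableTopology E] [MeasurableSpace E] [BorelSpace E] {N : Ω → E}
    (hN : HasGaussianLaw N P) (k : ℝ) : Integrable (fun ω => Real.exp (k * ‖N ω‖)) P := by
  have := hN.isGaussian_map
  exact (integrable_exp_norm (P.map N) k).comp_aemeasurable hN.aemeasurable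

/-- One-dimensional Stein identity `E[ξ g(ξ)] = v E[g'(ξ)]` for `ξ` centered Gaussian of variance `v`:
integration by parts against the density, which satisfies `p' = -(x / v) p`. -/
lemma gaussian_ibp_real (v : NNReal) {g g' : ℝ → ℝ} (hg : ∀ x, HasDerivAt g (g' x) x)
    {A k : ℝ} (hgb : ∀ x, |g x| ≤ A * Real.exp (k * |x|))
    (hgb' : ∀ x, |g' x| ≤ A * Real.exp (k * |x|)) :
    ∫ x, x * g x ∂(gaussianReal 0 v) = v * ∫ x, g' x ∂(gaussianReal 0 v) := by
  by_cases hv : v = 0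
  · subst hv
    simp
  have hgm : Measurable g := (continuous_iff_continuousAt.2 fun x => (hg x).continuousAt).measurable
  have hg'm : Measurable g' := by
    have : g' = deriv g := funext fun x => (hg x).deriv.symm
    rw [this]; exact measurable_deriv g
  have hv' : (v : ℝ) ≠ 0 := by exact_mod_cast hv
  have hp : ∀ x, HasDerivAt (gaussianPDFReal 0 v) (-(x / v) * gaussianPDFReal 0 v x) x := by
    intro x
    have h1 : HasDerivAt (fun x : ℝ => -(x - 0) ^ 2 / (2 * v)) (-(x / v)) x := by
      have := (((hasDerivAt_id x).sub_const 0).pow 2).neg.div_const (2 * (v : ℝ))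
      refine this.congr_deriv ?_
      simp only [id, sub_zero]; field_simp; norm_num
    have h2 := h1.exp.const_mul (Real.sqrt (2 * Real.pi * v))⁻¹
    rw [gaussianPDFReal_def]
    refine h2.congr_deriv ?_
    ring
  have key : ∀ f : ℝ → ℝ, Measurable f → (∀ x, |f x| ≤ A * Real.exp ((k + 1) * |x|)) →
      Integrable (fun x => gaussianPDFReal 0 v x * f x) := by
    intro f hfm hf
    have hI : Integrable f (gaussianReal 0 v) :=
      ((integrable_exp_norm (gaussianReal 0 v) (k + 1)).const_mul A).mono' hfm.aestronglyMeasurable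
        (ae_of_all _ hf)
    rw [gaussianReal_of_var_ne_zero _ hv] at hI
    rw [integrable_withDensity_iff_integrable_smul' (measurable_gaussianPDF 0 v)
      (ae_of_all _ fun x => gaussianPDF_lt_top)] at hI
    simpa [toReal_gaussianPDF] using hI
  have hA : 0 ≤ A := by
    have := (abs_nonneg _).trans (hgb 0)
    simpa using this
  have le1 : ∀ x : ℝ, A * Real.exp (k * |x|) ≤ A * Real.exp ((k + 1) * |x|) := fun x => by
    gcongr; linarith
  have le2 : ∀ x : ℝ, |x| * (A * Real.exp (k * |x|)) ≤ A * Real.exp ((k + 1) * |x|) := fun x => by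
    rw [add_mul, Real.exp_add, one_mul]
    have := Real.add_one_le_exp |x|
    have h3 : |x| ≤ Real.exp |x| := by linarith
    calc _ = A * (Real.exp (k * |x|) * |x|) := by ring
      _ ≤ _ := by gcongr
  have i1 := key g hgm fun x => (hgb x).trans (le1 x)
  have i2 := key g' hg'm fun x => (hgb' x).trans (le1 x)
  have i3 := key (fun x => x * g x) (by fun_prop) fun x => by
    rw [abs_mul]
    exact (mul_le_mul_of_nonneg_left (hgb x) (abs_nonneg x)).trans (le2 x)
  have main := integral_mul_deriv_eq_deriv_mul_of_integrable (u := gaussianPDFReal 0 v) (v := g)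
    (u' := fun x => -(x / v) * gaussianPDFReal 0 v x) (v' := g') (fun x _ => hp x)
    (fun x _ => hg x) i2 (by
      refine (i3.const_mul (-(v : ℝ)⁻¹)).congr (ae_of_all _ fun x => ?_)
      simp only [Pi.mul_apply]; field_simp) i1
  rw [integral_gaussianReal_eq_integral_smul hv, integral_gaussianReal_eq_integral_smul hv]
  simp only [smul_eq_mul]
  rw [main, ← integral_neg, ← integral_const_mul]
  congr 1; ext x; field_simp

/-- Gaussian integration by parts: `E[U G(Z)] = ∑ⱼ E[U Zⱼ] E[∂ⱼG(Z)]` when `U` is centered and jointly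
Gaussian with the vector `Z`. The residual `R = Z - U • c` with `cⱼ = E[U Zⱼ] / E[U²]` is
independent of `U`, so that conditionally on `R` this is the one-dimensional identity
`gaussian_ibp_real` applied to `u ↦ G (R + u • c)`. -/
lemma gaussian_ibp {Ω ι : Type*} [MeasurableSpace Ω] {P : Measure Ω} [Fintype ι]
    {U : Ω → ℝ} {Z : Ω → ι → ℝ} (hUZ : HasGaussianLaw (fun ω => (U ω, Z ω)) P)
    (hU0 : ∫ ω, U ω ∂P = 0)
    {G : (ι → ℝ) → ℝ} {G' : (ι → ℝ) → (ι → ℝ) →L[ℝ] ℝ} (hG : ∀ z, HasFDerivAt G (G' z) z)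
    (hG'c : Continuous G')
    {A k : ℝ} (hGb : ∀ z, |G z| ≤ A * Real.exp (k * ‖z‖))
    (hGb' : ∀ z, ‖G' z‖ ≤ A * Real.exp (k * ‖z‖)) (hk : 0 ≤ k) :
    ∫ ω, U ω * G (Z ω) ∂P = ∫ ω, G' (Z ω) (fun j => ∫ ω', U ω' * Z ω' j ∂P) ∂P := by
  have hP := hUZ.isProbabilityMeasure
  have hU : HasGaussianLaw U P := hUZ.fst
  have hZ : HasGaussianLaw Z P := hUZ.snd
  have hA : 0 ≤ A := by
    have := (abs_nonneg _).trans (hGb 0)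
    simpa using this
  have hZ2 : ∀ j, MemLp (fun ω => Z ω j) 2 P := fun j => (hZ.eval j).memLp_two
  set s : ℝ := ∫ ω, U ω ^ 2 ∂P with hs
  have hs0 : 0 ≤ s := integral_nonneg fun ω => sq_nonneg _
  have hGc : Continuous G := continuous_iff_continuousAt.2 fun z => (hG z).continuousAt
  rcases eq_or_lt_of_le hs0 with h0 | hpos
  -- A degenerate `U` vanishes almost surely, so both sides are zero.
  · have hU0 : U =ᵐ[P] 0 := by
      have := (integral_eq_zero_iff_of_nonneg (fun ω => sq_nonneg (U ω))
        hU.memLp_two.integrable_sq).1 (hs ▸ h0.symm)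
      filter_upwards [this] with ω hω
      simpa using hω
    have e1 : ∫ ω, U ω * G (Z ω) ∂P = 0 := by
      rw [integral_eq_zero_of_ae]
      filter_upwards [hU0] with ω hω
      simp [hω]
    have e2 : (fun j => ∫ ω', U ω' * Z ω' j ∂P) = 0 := by
      ext j
      rw [integral_eq_zero_of_ae]; rfl
      filter_upwards [hU0] with ω hω
      simp [hω]
    rw [e1, e2]; simp
  set c : ι → ℝ := fun j => (∫ ω', U ω' * Z ω' j ∂P) / s with hc
  set R : Ω → ι → ℝ := fun ω => Z ω - U ω • c with hR
  have hRU : HasGaussianLaw (fun ω => (R ω, U ω)) P := by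
    have := hUZ.map_fun (((ContinuousLinearMap.snd ℝ ℝ (ι → ℝ)) -
      (ContinuousLinearMap.fst ℝ ℝ (ι → ℝ)).smulRight c).prod (ContinuousLinearMap.fst ℝ ℝ (ι → ℝ)))
    exact this
  -- The choice of `c` makes `R` uncorrelated with `U`, hence independent by joint Gaussianity.
  have hind : IndepFun R U P := by
    -- The covariance criterion is stated for two families, so `U` is seen as a family over `Unit`.
    have h1 : HasGaussianLaw (fun ω => ((fun i => R ω i), (fun _ : Unit => U ω))) P := by
      have := hRU.map_fun ((ContinuousLinearMap.fst ℝ (ι → ℝ) ℝ).prod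
        (ContinuousLinearMap.pi fun _ : Unit => ContinuousLinearMap.snd ℝ (ι → ℝ) ℝ))
      exact this
    have h2 := HasGaussianLaw.indepFun_of_covariance_eval (X := fun i ω => R ω i)
      (Y := fun (_ : Unit) ω => U ω) h1 (by
        intro i _
        have hUi : MemLp U 2 P := hU.memLp_two
        have hRi : MemLp (fun ω => R ω i) 2 P := (hRU.fst.eval i).memLp_two
        rw [covariance_eq_sub hRi hUi, hU0, mul_zero, sub_zero]
        have : ∀ ω, ((fun ω => R ω i) * U) ω = U ω * Z ω i - c i * U ω ^ 2 := fun ω => by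
          simp [hR]; ring
        simp_rw [this]
        rw [integral_sub, integral_const_mul, ← hs]
        · simp only [hc]; field_simp; ring
        · exact hUi.integrable_mul (hZ2 i)
        · exact hUi.integrable_sq.const_mul _)
    exact h2.comp measurable_id (measurable_pi_apply ())
  have hlaw : P.map (fun ω => (R ω, U ω)) = (P.map R).prod (P.map U) :=
    (indepFun_iff_map_prod_eq_prod_map_map hRU.fst.aemeasurable hU.aemeasurable).1 hind
  have hUlaw : P.map U = gaussianReal 0 s.toNNReal := by
    rw [hU.map_eq_gaussianReal, hU0, variance_of_integral_eq_zero hU.aemeasurable hU0]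
  have hZR : ∀ ω, Z ω = R ω + U ω • c := fun ω => by simp [hR]
  have hbd : ∀ z : ι → ℝ, ∀ u : ℝ, ‖u * G z‖ ≤ A * Real.exp ((k + 1) * ‖(u, z)‖) := by
    intro z u
    have h1 : |u| ≤ ‖(u, z)‖ := by rw [← Real.norm_eq_abs]; exact norm_fst_le (u, z)
    have h2 : ‖z‖ ≤ ‖(u, z)‖ := norm_snd_le (u, z)
    have h3 := Real.add_one_le_exp ‖(u, z)‖
    rw [norm_mul, Real.norm_eq_abs, Real.norm_eq_abs, add_mul, one_mul, Real.exp_add]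
    calc |u| * |G z| ≤ Real.exp ‖(u, z)‖ * (A * Real.exp (k * ‖(u, z)‖)) := by
          gcongr
          · linarith
          · exact (hGb z).trans (by gcongr)
      _ = _ := by ring
  have hint1 : Integrable (fun ω => U ω * G (Z ω)) P := by
    refine ((integrable_exp_norm_comp hUZ (k + 1)).const_mul A).mono' ?_ (ae_of_all _ fun ω => hbd _ _)
    exact hU.aemeasurable.aestronglyMeasurable.mul
      (hGc.comp_aestronglyMeasurable hZ.aemeasurable.aestronglyMeasurable)
  have hint2 : Integrable (fun ω => G' (Z ω) c) P := by
    refine (((integrable_exp_norm_comp hZ k).const_mul A).mul_const ‖c‖).mono' ?_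
      (ae_of_all _ fun ω => ?_)
    · exact ((hG'c.clm_apply continuous_const).comp_aestronglyMeasurable
        hZ.aemeasurable.aestronglyMeasurable)
    · exact ((G' (Z ω)).le_opNorm c).trans (by gcongr; exact hGb' _)
  have hlhs : ∫ ω, U ω * G (Z ω) ∂P =
      ∫ r, ∫ u, u * G (r + u • c) ∂(gaussianReal 0 s.toNNReal) ∂(P.map R) := by
    have hm : AEStronglyMeasurable (fun q : (ι → ℝ) × ℝ => q.2 * G (q.1 + q.2 • c))
        (P.map fun ω => (R ω, U ω)) := by
      have : Continuous (fun q : (ι → ℝ) × ℝ => q.2 * G (q.1 + q.2 • c)) := by fun_prop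
      exact this.aestronglyMeasurable
    have e : ∫ ω, U ω * G (Z ω) ∂P = ∫ q, q.2 * G (q.1 + q.2 • c) ∂(P.map fun ω => (R ω, U ω)) := by
      rw [integral_map hRU.aemeasurable hm]
      simp_rw [← hZR]
    rw [e, hlaw, integral_prod, hUlaw]
    rw [← hlaw, integrable_map_measure hm hRU.aemeasurable]
    refine hint1.congr (ae_of_all _ fun ω => ?_)
    simp [← hZR]
  have hrhs : ∫ ω, G' (Z ω) c ∂P =
      ∫ r, ∫ u, G' (r + u • c) c ∂(gaussianReal 0 s.toNNReal) ∂(P.map R) := by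
    have hm : AEStronglyMeasurable (fun q : (ι → ℝ) × ℝ => G' (q.1 + q.2 • c) c)
        (P.map fun ω => (R ω, U ω)) := by
      have : Continuous (fun q : (ι → ℝ) × ℝ => G' (q.1 + q.2 • c) c) := by fun_prop
      exact this.aestronglyMeasurable
    have e : ∫ ω, G' (Z ω) c ∂P = ∫ q, G' (q.1 + q.2 • c) c ∂(P.map fun ω => (R ω, U ω)) := by
      rw [integral_map hRU.aemeasurable hm]
      simp_rw [← hZR]
    rw [e, hlaw, integral_prod, hUlaw]
    rw [← hlaw, integrable_map_measure hm hRU.aemeasurable]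
    refine hint2.congr (ae_of_all _ fun ω => ?_)
    simp [← hZR]
  have hsc : (fun j => ∫ ω', U ω' * Z ω' j ∂P) = s • c := by
    ext j; simp only [hc, Pi.smul_apply, smul_eq_mul]; field_simp
  rw [hsc]
  simp only [map_smul, smul_eq_mul]
  rw [integral_const_mul, hlhs, hrhs, ← integral_const_mul]
  congr 1; ext r
  have hexp : ∀ u : ℝ, Real.exp (k * ‖r + u • c‖) ≤
      Real.exp (k * ‖r‖) * Real.exp (k * ‖c‖ * |u|) := fun u => by
    rw [← Real.exp_add, Real.exp_le_exp]
    have : ‖r + u • c‖ ≤ ‖r‖ + |u| * ‖c‖ := (norm_add_le _ _).trans (by rw [norm_smul]; simp)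
    nlinarith
  have := gaussian_ibp_real s.toNNReal (g := fun u => G (r + u • c)) (g' := fun u => G' (r + u • c) c)
    (A := A * Real.exp (k * ‖r‖) * (1 + ‖c‖)) (k := k * ‖c‖) (fun u => by
      have h1 : HasDerivAt (fun u : ℝ => r + u • c) c u := by
        simpa using ((hasDerivAt_id u).smul_const c).const_add r
      exact (hG _).comp_hasDerivAt u h1) (fun u => by
      refine (hGb _).trans ?_
      have := mul_le_mul_of_nonneg_left (hexp u) hA
      have h4 : 0 ≤ A * (Real.exp (k * ‖r‖) * Real.exp (k * ‖c‖ * |u|)) * ‖c‖ := by positivity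
      linarith) (fun u => by
      refine ((G' _).le_opNorm c).trans ?_
      have h5 := mul_le_mul_of_nonneg_left (hexp u) hA
      have h4 : 0 ≤ A * (Real.exp (k * ‖r‖) * Real.exp (k * ‖c‖ * |u|)) := by positivity
      have := mul_le_mul_of_nonneg_right ((hGb' (r + u • c)).trans h5) (norm_nonneg c)
      linarith)
  rw [this, Real.coe_toNNReal _ hs0]

/-! ### Weighted exponentials of a finite Gaussian vector -/

/-- The weighted sum of exponentials `∑ᵢ pᵢ exp (zᵢ - sᵢ)`. In the application `p` is a discretisation
of `ρ` and `s` is half the variance of the Gaussian vector `z`. -/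
noncomputable def wt {ι : Type*} [Fintype ι] (p s z : ι → ℝ) : ℝ := ∑ i, p i * Real.exp (z i - s i)

section finite
variable {ι : Type*} [Fintype ι] {p s : ι → ℝ}

lemma wt_nonneg (hp : ∀ i, 0 ≤ p i) (z : ι → ℝ) : 0 ≤ wt p s z :=
  Finset.sum_nonneg fun i _ => mul_nonneg (hp i) (Real.exp_pos _).le

lemma exp_sub_le (hs : ∀ i, 0 ≤ s i) (z : ι → ℝ) (i : ι) :
    Real.exp (z i - s i) ≤ Real.exp ‖z‖ := by
  have h1 := (le_abs_self (z i)).trans (norm_le_pi_norm z i)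
  have h2 := hs i
  gcongr
  linarith

lemma wt_le (hp : ∀ i, 0 ≤ p i) (hs : ∀ i, 0 ≤ s i) (z : ι → ℝ) :
    wt p s z ≤ (∑ i, p i) * Real.exp ‖z‖ := by
  rw [wt, Finset.sum_mul]
  exact Finset.sum_le_sum fun i _ => mul_le_mul_of_nonneg_left (exp_sub_le hs z i) (hp i)

lemma abs_comp_wt_le (hp : ∀ i, 0 ≤ p i) (hs : ∀ i, 0 ≤ s i) {G : ℝ → ℝ} {A : ℝ} {N : ℕ}
    (hA : 0 ≤ A) (hG : ∀ u, 0 ≤ u → |G u| ≤ A * (1 + u ^ N)) (z : ι → ℝ) :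
    |G (wt p s z)| ≤ A * (1 + (∑ i, p i) ^ N) * Real.exp (N * ‖z‖) := by
  have h0 := wt_nonneg (s := s) hp z
  have h1 : wt p s z ^ N ≤ (∑ i, p i) ^ N * Real.exp (N * ‖z‖) := by
    rw [Real.exp_nat_mul, ← mul_pow]
    exact pow_le_pow_left₀ h0 (wt_le hp hs z) N
  have h2 : 1 ≤ Real.exp (N * ‖z‖) := Real.one_le_exp (by positivity)
  calc _ ≤ A * (1 + wt p s z ^ N) := hG _ h0
    _ ≤ A * (Real.exp (N * ‖z‖) + (∑ i, p i) ^ N * Real.exp (N * ‖z‖)) := by gcongr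
    _ = _ := by ring

@[fun_prop]
lemma continuous_wt : Continuous (wt p s) := by unfold wt; fun_prop

lemma hasFDerivAt_exp_coord (z : ι → ℝ) (i : ι) :
    HasFDerivAt (fun z : ι → ℝ => Real.exp (z i - s i))
      (Real.exp (z i - s i) • ContinuousLinearMap.proj (R := ℝ) (φ := fun _ : ι => ℝ) i) z :=
  ((ContinuousLinearMap.proj (R := ℝ) (φ := fun _ : ι => ℝ) i).hasFDerivAt.sub_const (s i)).exp

lemma hasFDerivAt_wt (z : ι → ℝ) :
    HasFDerivAt (wt p s) (∑ i, p i • Real.exp (z i - s i) •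
      ContinuousLinearMap.proj (R := ℝ) (φ := fun _ : ι => ℝ) i) z := by
  unfold wt
  exact HasFDerivAt.fun_sum fun i _ => (hasFDerivAt_exp_coord z i).const_mul (p i)

lemma norm_proj_le (i : ι) :
    ‖ContinuousLinearMap.proj (R := ℝ) (φ := fun _ : ι => ℝ) i‖ ≤ 1 :=
  ContinuousLinearMap.opNorm_le_bound _ zero_le_one fun z => by
    simpa using norm_le_pi_norm z i

/-- Gaussian integration by parts for the function `z ↦ F₁ (wt p s z) * exp (z k - s k)`. The second
term on the right comes from differentiating the exponential; it is the one that the variance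
normalisation cancels in `finite_interp`. -/
lemma ibp_wt {Ω : Type*} [MeasurableSpace Ω] {P : Measure Ω}
    {D : Ω → ℝ} {Z : Ω → ι → ℝ} (hDZ : HasGaussianLaw (fun ω => (D ω, Z ω)) P)
    (hD0 : ∫ ω, D ω ∂P = 0) (hp : ∀ i, 0 ≤ p i) (hs : ∀ i, 0 ≤ s i)
    {F₁ F₂ : ℝ → ℝ} (hF : ∀ u, HasDerivAt F₁ (F₂ u) u) (hF₂ : Continuous F₂) {A : ℝ} {N : ℕ}
    (hA : 0 ≤ A) (hb₁ : ∀ u, 0 ≤ u → |F₁ u| ≤ A * (1 + u ^ N))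
    (hb₂ : ∀ u, 0 ≤ u → |F₂ u| ≤ A * (1 + u ^ N)) (k : ι) :
    ∫ ω, D ω * (F₁ (wt p s (Z ω)) * Real.exp (Z ω k - s k)) ∂P =
      ∫ ω, (F₂ (wt p s (Z ω)) * Real.exp (Z ω k - s k) *
          ∑ j, p j * Real.exp (Z ω j - s j) * ∫ ω', D ω' * Z ω' j ∂P) +
        F₁ (wt p s (Z ω)) * Real.exp (Z ω k - s k) * ∫ ω', D ω' * Z ω' k ∂P ∂P := by
  set S := ∑ i, p i with hS
  have hS0 : 0 ≤ S := Finset.sum_nonneg fun i _ => hp i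
  have hF₁ : Continuous F₁ := continuous_iff_continuousAt.2 fun u => (hF u).continuousAt
  have key := gaussian_ibp hDZ hD0
    (G := fun z => F₁ (wt p s z) * Real.exp (z k - s k))
    (G' := fun z => F₁ (wt p s z) • Real.exp (z k - s k) •
        ContinuousLinearMap.proj (R := ℝ) (φ := fun _ : ι => ℝ) k +
      Real.exp (z k - s k) • F₂ (wt p s z) • ∑ i, p i • Real.exp (z i - s i) •
        ContinuousLinearMap.proj (R := ℝ) (φ := fun _ : ι => ℝ) i)
    (A := A * (1 + S ^ N) * (1 + S)) (k := N + 2)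
    (fun z => ((hF _).comp_hasFDerivAt z (hasFDerivAt_wt z)).mul (hasFDerivAt_exp_coord z k))
    (by fun_prop) ?_ ?_ (by positivity)
  · rw [key]
    congr 1; ext ω
    simp
    simp_rw [mul_assoc]
    ring
  · intro z
    rw [abs_mul, abs_of_pos (Real.exp_pos _), add_mul, Real.exp_add]
    have h1 := abs_comp_wt_le hp hs hA hb₁ z
    have h2 := exp_sub_le hs z k
    have h3 : Real.exp ‖z‖ ≤ Real.exp (2 * ‖z‖) := by gcongr; linarith [norm_nonneg z]
    calc _ ≤ A * (1 + S ^ N) * Real.exp (N * ‖z‖) * Real.exp (2 * ‖z‖) := by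
          refine mul_le_mul h1 (h2.trans h3) (Real.exp_pos _).le (by positivity)
      _ ≤ A * (1 + S ^ N) * (1 + S) * (Real.exp (N * ‖z‖) * Real.exp (2 * ‖z‖)) := by
          have : 0 ≤ A * (1 + S ^ N) * Real.exp (N * ‖z‖) * Real.exp (2 * ‖z‖) * S := by positivity
          linarith
  · intro z
    have h1 := abs_comp_wt_le hp hs hA hb₁ z
    have h1' := abs_comp_wt_le hp hs hA hb₂ z
    have h2 := exp_sub_le hs z k
    have h4 : Real.exp (2 * ‖z‖) = Real.exp ‖z‖ * Real.exp ‖z‖ := by rw [← Real.exp_add]; ring_nf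
    have h5 : 1 ≤ Real.exp ‖z‖ := Real.one_le_exp (norm_nonneg z)
    have h6 : ‖∑ i, p i • Real.exp (z i - s i) •
        ContinuousLinearMap.proj (R := ℝ) (φ := fun _ : ι => ℝ) i‖ ≤ S * Real.exp ‖z‖ := by
      rw [hS, Finset.sum_mul]
      refine (norm_sum_le _ _).trans (Finset.sum_le_sum fun i _ => ?_)
      rw [norm_smul, norm_smul, Real.norm_of_nonneg (hp i), Real.norm_of_nonneg (Real.exp_pos _).le]
      refine mul_le_mul_of_nonneg_left ?_ (hp i)
      calc _ ≤ Real.exp ‖z‖ * 1 := by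
            exact mul_le_mul (exp_sub_le hs z i) (norm_proj_le i) (norm_nonneg _) (Real.exp_pos _).le
        _ = _ := mul_one _
    refine (norm_add_le _ _).trans ?_
    rw [norm_smul, norm_smul, norm_smul, norm_smul, Real.norm_of_nonneg (Real.exp_pos _).le,
      Real.norm_eq_abs, Real.norm_eq_abs, add_mul, Real.exp_add, h4]
    set E := Real.exp ‖z‖
    set Q := A * (1 + S ^ N) * Real.exp (N * ‖z‖) with hQ
    have hQ0 : 0 ≤ Q := by positivity
    calc _ ≤ Q * (E * 1) + E * (Q * (S * E)) := by
          gcongr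
          exact norm_proj_le k
      _ ≤ Q * (E * E) + E * (Q * (S * E)) := by gcongr
      _ = _ := by rw [hQ]; ring

/-- A kernel bounded by `M`, summed against the weights `pᵢ exp (zᵢ - sᵢ)` in both variables, is at
most `M` times the square of their total mass. -/
lemma wt_mul_sum_le (hp : ∀ i, 0 ≤ p i) {κ : ι → ι → ℝ} {M : ℝ} (hκ : ∀ i j, |κ i j| ≤ M)
    (z : ι → ℝ) :
    |∑ i, p i * Real.exp (z i - s i) * ∑ j, p j * Real.exp (z j - s j) * κ i j| ≤
      M * wt p s z ^ 2 := by
  have e : M * wt p s z ^ 2 =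
      ∑ i, p i * Real.exp (z i - s i) * ∑ j, p j * Real.exp (z j - s j) * M := by
    rw [← Finset.sum_mul, ← Finset.sum_mul, wt]; ring
  rw [e]
  refine (Finset.abs_sum_le_sum_abs _ _).trans (Finset.sum_le_sum fun i _ => ?_)
  have h := fun i => mul_nonneg (hp i) (Real.exp_pos (z i - s i)).le
  rw [abs_mul, abs_of_nonneg (h i)]
  refine mul_le_mul_of_nonneg_left ?_ (h i)
  refine (Finset.abs_sum_le_sum_abs _ _).trans (Finset.sum_le_sum fun j _ => ?_)
  rw [abs_mul, abs_of_nonneg (h j)]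
  exact mul_le_mul_of_nonneg_left (hκ i j) (h j)

/-- Half the variance of the coordinate `sin θ • Uᵢ + cos θ • Vᵢ`, for uncorrelated `U`, `V` with
variances `a`, `b`. -/
noncomputable def hv (a b : ι → ℝ) (θ : ℝ) (i : ι) : ℝ :=
  (Real.sin θ ^ 2 * a i + Real.cos θ ^ 2 * b i) / 2

/-- The weighted exponentials `wt` of the rotated vector `sin θ • q.1 + cos θ • q.2`, normalised by
`hv`. With `t = sin² θ` this is the interpolation `√t X + √(1 - t) Y`; the angle replaces `t`
because the square roots are not differentiable at the endpoints. -/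
noncomputable def wθ (p a b : ι → ℝ) (θ : ℝ) (q : (ι → ℝ) × (ι → ℝ)) : ℝ :=
  wt p (hv a b θ) (Real.sin θ • q.1 + Real.cos θ • q.2)

lemma norm_rot_le (θ : ℝ) (q : (ι → ℝ) × (ι → ℝ)) :
    ‖Real.sin θ • q.1 + Real.cos θ • q.2‖ ≤ 2 * ‖q‖ := by
  have h1 : ‖q.1‖ ≤ ‖q‖ := norm_fst_le q
  have h2 : ‖q.2‖ ≤ ‖q‖ := norm_snd_le q
  have h3 := Real.abs_sin_le_one θ
  have h4 := Real.abs_cos_le_one θ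
  refine (norm_add_le _ _).trans ?_
  rw [norm_smul, norm_smul, Real.norm_eq_abs, Real.norm_eq_abs]
  nlinarith [norm_nonneg q.1, norm_nonneg q.2]

lemma abs_comp_wθ_le {a b : ι → ℝ} (hp : ∀ i, 0 ≤ p i) (ha : ∀ i, 0 ≤ a i) (hb : ∀ i, 0 ≤ b i)
    {G : ℝ → ℝ} {A : ℝ} {N : ℕ}
    (hA : 0 ≤ A) (hG : ∀ u, 0 ≤ u → |G u| ≤ A * (1 + u ^ N)) (θ : ℝ) (q : (ι → ℝ) × (ι → ℝ)) :
    |G (wθ p a b θ q)| ≤ A * (1 + (∑ i, p i) ^ N) * Real.exp (2 * N * ‖q‖) := by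
  have hs : ∀ i, 0 ≤ hv a b θ i := fun i => by
    have := ha i; have := hb i; unfold hv; positivity
  refine (abs_comp_wt_le hp hs hA hG _).trans ?_
  have hS : 0 ≤ ∑ i, p i := Finset.sum_nonneg fun i _ => hp i
  have := mul_le_mul_of_nonneg_left (norm_rot_le θ q) (Nat.cast_nonneg (α := ℝ) N)
  exact mul_le_mul_of_nonneg_left (Real.exp_le_exp.2 (by linarith)) (by positivity)

@[fun_prop]
lemma continuous_wθ_right {a b : ι → ℝ} {θ : ℝ} : Continuous (wθ p a b θ) := by
  unfold wθ; fun_prop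

lemma continuous_wθ_left {a b : ι → ℝ} (q : (ι → ℝ) × (ι → ℝ)) :
    Continuous (fun θ => wθ p a b θ q) := by
  unfold wθ wt hv; fun_prop

lemma hasDerivAt_wθ {a b : ι → ℝ} (q : (ι → ℝ) × (ι → ℝ)) (θ : ℝ) :
    HasDerivAt (fun θ => wθ p a b θ q)
      (∑ i, p i * Real.exp ((Real.sin θ • q.1 + Real.cos θ • q.2) i - hv a b θ i) *
        (Real.cos θ * q.1 i - Real.sin θ * q.2 i - Real.sin θ * Real.cos θ * (a i - b i))) θ := by
  unfold wθ wt hv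
  refine HasDerivAt.fun_sum fun i _ => ?_
  simp only [Pi.add_apply, Pi.smul_apply, smul_eq_mul]
  have h1 := (Real.hasDerivAt_sin θ).mul_const (q.1 i)
  have h2 := (Real.hasDerivAt_cos θ).mul_const (q.2 i)
  have h3 := ((Real.hasDerivAt_sin θ).pow 2).mul_const (a i)
  have h4 := ((Real.hasDerivAt_cos θ).pow 2).mul_const (b i)
  refine ((((h1.add h2).sub ((h3.add h4).div_const 2)).exp).const_mul (p i)).congr_deriv ?_
  simp
  ring

lemma abs_deriv_wθ_le {a b : ι → ℝ} (hp : ∀ i, 0 ≤ p i) (ha : ∀ i, 0 ≤ a i) (hb : ∀ i, 0 ≤ b i)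
    (q : (ι → ℝ) × (ι → ℝ)) (θ : ℝ) :
    |∑ i, p i * Real.exp ((Real.sin θ • q.1 + Real.cos θ • q.2) i - hv a b θ i) *
        (Real.cos θ * q.1 i - Real.sin θ * q.2 i - Real.sin θ * Real.cos θ * (a i - b i))| ≤
      (∑ i, p i * (1 + a i + b i)) * Real.exp (4 * ‖q‖) := by
  have hs : ∀ i, 0 ≤ hv a b θ i := fun i => by
    have := ha i; have := hb i; unfold hv; positivity
  rw [Finset.sum_mul]
  refine (Finset.abs_sum_le_sum_abs _ _).trans (Finset.sum_le_sum fun i _ => ?_)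
  rw [abs_mul, abs_mul, abs_of_nonneg (hp i), abs_of_pos (Real.exp_pos _), mul_assoc (p i),
    mul_assoc (p i)]
  refine mul_le_mul_of_nonneg_left ?_ (hp i)
  have e : Real.exp (4 * ‖q‖) = Real.exp (2 * ‖q‖) * Real.exp (2 * ‖q‖) := by
    rw [← Real.exp_add]; ring_nf
  have h1 : |q.1 i| ≤ ‖q‖ := (norm_le_pi_norm q.1 i).trans (norm_fst_le q)
  have h2 : |q.2 i| ≤ ‖q‖ := (norm_le_pi_norm q.2 i).trans (norm_snd_le q)
  have h3 := Real.abs_sin_le_one θ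
  have h4 := Real.abs_cos_le_one θ
  have h5 : |a i - b i| ≤ a i + b i := by
    rw [abs_le]; constructor <;> linarith [ha i, hb i]
  have h6 : |Real.sin θ * Real.cos θ| ≤ 1 := by
    rw [abs_mul]; exact mul_le_one₀ h3 (abs_nonneg _) h4
  have h7 := Real.add_one_le_exp (2 * ‖q‖)
  have h8 : |Real.cos θ * q.1 i - Real.sin θ * q.2 i - Real.sin θ * Real.cos θ * (a i - b i)| ≤
      2 * ‖q‖ + (a i + b i) := by
    have k1 : |Real.cos θ * q.1 i| ≤ ‖q‖ := by
      rw [abs_mul]; nlinarith [abs_nonneg (q.1 i)]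
    have k2 : |Real.sin θ * q.2 i| ≤ ‖q‖ := by
      rw [abs_mul]; nlinarith [abs_nonneg (q.2 i)]
    have k3 : |Real.sin θ * Real.cos θ * (a i - b i)| ≤ a i + b i := by
      rw [abs_mul]; nlinarith [abs_nonneg (a i - b i)]
    have := abs_sub (Real.cos θ * q.1 i - Real.sin θ * q.2 i) (Real.sin θ * Real.cos θ * (a i - b i))
    have := abs_sub (Real.cos θ * q.1 i) (Real.sin θ * q.2 i)
    linarith
  have h9 : 1 ≤ Real.exp (2 * ‖q‖) := Real.one_le_exp (by positivity)
  have h10 : 2 * ‖q‖ + (a i + b i) ≤ (1 + a i + b i) * Real.exp (2 * ‖q‖) := by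
    nlinarith [ha i, hb i]
  rw [e]
  calc _ ≤ Real.exp (2 * ‖q‖) * ((1 + a i + b i) * Real.exp (2 * ‖q‖)) := by
        refine mul_le_mul ((exp_sub_le hs _ i).trans ?_) (h8.trans h10) (abs_nonneg _)
          (Real.exp_pos _).le
        exact Real.exp_le_exp.2 (norm_rot_le θ q)
    _ = _ := by ring

end finite

/-! ### Interpolation for finite Gaussian vectors -/

section interp
variable {ι : Type*} [Fintype ι] {p : ι → ℝ}

lemma integrable_comp_of_le {Ω : Type*} [MeasurableSpace Ω] {P : Measure Ω}
    {N : Ω → (ι → ℝ) × (ι → ℝ)} (hN : HasGaussianLaw N P)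
    {T : (ι → ℝ) × (ι → ℝ) → ℝ} (hT : Continuous T) {B k : ℝ}
    (hB : ∀ q, |T q| ≤ B * Real.exp (k * ‖q‖)) : Integrable (fun ω => T (N ω)) P :=
  ((integrable_exp_norm_comp hN k).const_mul B).mono'
    (hT.comp_aestronglyMeasurable hN.aemeasurable.aestronglyMeasurable) (ae_of_all _ fun _ => hB _)

/-- Polynomial growth passes from `F₂` to `u ↦ u² |F₂ u|`. The outer absolute value puts the bound in
the form used for all growth hypotheses. -/
lemma sq_growth {F₂ : ℝ → ℝ} {A : ℝ} {N : ℕ} (hA : 0 ≤ A)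
    (h : ∀ u, 0 ≤ u → |F₂ u| ≤ A * (1 + u ^ N)) (u : ℝ) (hu : 0 ≤ u) :
    |(u ^ 2 * |F₂ u|)| ≤ (2 * A) * (1 + u ^ (N + 2)) := by
  rw [abs_mul, abs_abs, abs_of_nonneg (sq_nonneg u)]
  have h1 : u ^ 2 ≤ 1 + u ^ (N + 2) := by
    rcases le_total u 1 with h | h
    · have := pow_le_one₀ hu h (n := 2)
      have : 0 ≤ u ^ (N + 2) := by positivity
      linarith
    · have := pow_le_pow_right₀ h (show 2 ≤ N + 2 by omega)
      linarith
  have h2 : u ^ 2 * u ^ N = u ^ (N + 2) := by ring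
  have h3 : 0 ≤ u ^ (N + 2) := by positivity
  calc _ ≤ u ^ 2 * (A * (1 + u ^ N)) := by gcongr; exact h u hu
    _ = A * (u ^ 2 + u ^ (N + 2)) := by rw [← h2]; ring
    _ ≤ A * (2 * (1 + u ^ (N + 2))) := by gcongr; linarith
    _ = _ := by ring

/-- Expectations of polynomially growing functions of `wθ` depend continuously on the angle. -/
lemma continuous_integral_wθ {Ω : Type*} [MeasurableSpace Ω] {P : Measure Ω}
    {N : Ω → (ι → ℝ) × (ι → ℝ)} (hN : HasGaussianLaw N P) {a b : ι → ℝ}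
    (hp : ∀ i, 0 ≤ p i) (ha : ∀ i, 0 ≤ a i) (hb : ∀ i, 0 ≤ b i)
    {G : ℝ → ℝ} (hGc : Continuous G) {A : ℝ} {m : ℕ}
    (hA : 0 ≤ A) (hG : ∀ u, 0 ≤ u → |G u| ≤ A * (1 + u ^ m)) :
    Continuous (fun θ => ∫ ω, G (wθ p a b θ (N ω)) ∂P) := by
  refine continuous_of_dominated (bound := fun ω => A * (1 + (∑ i, p i) ^ m) *
    Real.exp (2 * m * ‖N ω‖)) (fun θ => ?_) (fun θ => ae_of_all _ fun ω => ?_)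
    ((integrable_exp_norm_comp hN _).const_mul _) (ae_of_all _ fun ω => ?_)
  · exact (hGc.comp continuous_wθ_right).comp_aestronglyMeasurable
      hN.aemeasurable.aestronglyMeasurable
  · exact abs_comp_wθ_le hp ha hb hA hG θ _
  · exact hGc.comp (continuous_wθ_left _)

/-- Interpolation inequality for a pair of uncorrelated, jointly Gaussian finite vectors. The derivative
of the expectation in `θ` equals `sin θ cos θ` times
`E[F₂(w) ∑ᵢⱼ pᵢ pⱼ eᵢ eⱼ (aᵢⱼ - bᵢⱼ)]`, where `eᵢ` are the normalised exponentials. -/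
theorem finite_interp {Ω : Type*} [MeasurableSpace Ω] {P : Measure Ω} {U V : Ω → ι → ℝ}
    (hUV : HasGaussianLaw (fun ω => (U ω, V ω)) P)
    (hU0 : ∀ i, ∫ ω, U ω i ∂P = 0) (hV0 : ∀ i, ∫ ω, V ω i ∂P = 0)
    (hcross : ∀ i j, ∫ ω, U ω i * V ω j ∂P = 0) {a b : ι → ι → ℝ}
    (ha : ∀ i j, ∫ ω, U ω i * U ω j ∂P = a i j) (hb : ∀ i j, ∫ ω, V ω i * V ω j ∂P = b i j)
    (hp : ∀ i, 0 ≤ p i) {F F₁ F₂ : ℝ → ℝ} (hF : ∀ u, HasDerivAt F (F₁ u) u)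
    (hF₁ : ∀ u, HasDerivAt F₁ (F₂ u) u) (hF₂ : Continuous F₂)
    {A : ℝ} {N : ℕ} (hA : 0 ≤ A) (hg : ∀ u, 0 ≤ u → |F u| ≤ A * (1 + u ^ N))
    (hg₁ : ∀ u, 0 ≤ u → |F₁ u| ≤ A * (1 + u ^ N)) (hg₂ : ∀ u, 0 ≤ u → |F₂ u| ≤ A * (1 + u ^ N))
    {C : ℝ} (hC : ∀ i j, |a i j - b i j| ≤ C) :
    |∫ ω, F (wθ p (fun i => a i i) (fun i => b i i) (Real.pi / 2) (U ω, V ω)) ∂P -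
      ∫ ω, F (wθ p (fun i => a i i) (fun i => b i i) 0 (U ω, V ω)) ∂P| ≤
    ∫ θ in (0 : ℝ)..(Real.pi / 2), C * (Real.sin θ * Real.cos θ) *
      ∫ ω, wθ p (fun i => a i i) (fun i => b i i) θ (U ω, V ω) ^ 2 *
        |F₂ (wθ p (fun i => a i i) (fun i => b i i) θ (U ω, V ω))| ∂P := by
  have hP := hUV.isProbabilityMeasure
  have hai : ∀ i, 0 ≤ a i i := fun i => by
    rw [← ha]; exact integral_nonneg fun ω => mul_self_nonneg _
  have hbi : ∀ i, 0 ≤ b i i := fun i => by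
    rw [← hb]; exact integral_nonneg fun ω => mul_self_nonneg _
  set w : ℝ → (ι → ℝ) × (ι → ℝ) → ℝ := wθ p (fun i => a i i) (fun i => b i i) with hw
  set N' : Ω → (ι → ℝ) × (ι → ℝ) := fun ω => (U ω, V ω) with hN'
  have hFc : Continuous F := continuous_iff_continuousAt.2 fun u => (hF u).continuousAt
  have hF₁c : Continuous F₁ := continuous_iff_continuousAt.2 fun u => (hF₁ u).continuousAt
  have hU2 : ∀ i, MemLp (fun ω => U ω i) 2 P := fun i => (hUV.fst.eval i).memLp_two
  have hV2 : ∀ i, MemLp (fun ω => V ω i) 2 P := fun i => (hUV.snd.eval i).memLp_two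
  set S := ∑ i, p i with hS
  have hS0 : 0 ≤ S := Finset.sum_nonneg fun i _ => hp i
  set ψ' : ℝ → ℝ := fun θ => ∫ ω, F₁ (w θ (N' ω)) *
    (∑ i, p i * Real.exp ((Real.sin θ • U ω + Real.cos θ • V ω) i -
      hv (fun i => a i i) (fun i => b i i) θ i) *
        (Real.cos θ * U ω i - Real.sin θ * V ω i -
          Real.sin θ * Real.cos θ * (a i i - b i i))) ∂P with hψ'
  have hderiv : ∀ θ, HasDerivAt (fun θ => ∫ ω, F (w θ (N' ω)) ∂P) (ψ' θ) θ := by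
    intro θ
    refine (hasDerivAt_integral_of_dominated_loc_of_deriv_le (𝕜 := ℝ) (μ := P) (s := Set.univ)
      (F := fun θ ω => F (w θ (N' ω)))
      (F' := fun θ ω => F₁ (w θ (N' ω)) *
        (∑ i, p i * Real.exp ((Real.sin θ • U ω + Real.cos θ • V ω) i -
          hv (fun i => a i i) (fun i => b i i) θ i) *
        (Real.cos θ * U ω i - Real.sin θ * V ω i -
          Real.sin θ * Real.cos θ * (a i i - b i i))))
      (bound := fun ω => A * (1 + S ^ N) * (∑ i, p i * (1 + a i i + b i i)) *
        Real.exp ((2 * N + 4) * ‖N' ω‖)) univ_mem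
      (Eventually.of_forall fun θ => ?_) ?_ ?_ (ae_of_all _ fun ω θ _ => ?_)
      ((integrable_exp_norm_comp hUV _).const_mul _) (ae_of_all _ fun ω θ _ => ?_)).2
    · exact (hFc.comp continuous_wθ_right).comp_aestronglyMeasurable
        hUV.aemeasurable.aestronglyMeasurable
    · exact integrable_comp_of_le hUV (hFc.comp continuous_wθ_right)
        (fun q => abs_comp_wθ_le hp hai hbi hA hg θ q)
    · have : Continuous fun q : (ι → ℝ) × (ι → ℝ) => F₁ (w θ q) *
        (∑ i, p i * Real.exp ((Real.sin θ • q.1 + Real.cos θ • q.2) i -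
          hv (fun i => a i i) (fun i => b i i) θ i) *
        (Real.cos θ * q.1 i - Real.sin θ * q.2 i -
          Real.sin θ * Real.cos θ * (a i i - b i i))) := by
        refine (hF₁c.comp continuous_wθ_right).mul ?_
        simp only [Pi.add_apply, Pi.smul_apply]
        fun_prop
      exact this.comp_aestronglyMeasurable hUV.aemeasurable.aestronglyMeasurable
    · rw [norm_mul, Real.norm_eq_abs, Real.norm_eq_abs, add_mul, Real.exp_add]
      have h1 := abs_comp_wθ_le hp hai hbi hA hg₁ θ (N' ω)
      have h2 := abs_deriv_wθ_le hp hai hbi (N' ω) θ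
      refine (mul_le_mul h1 h2 (abs_nonneg _) (by positivity)).trans (le_of_eq ?_)
      ring
    · exact (hF _).comp θ (hasDerivAt_wθ (N' ω) θ)
  have hcov : ∀ θ i j, ∫ ω, (Real.cos θ * U ω i - Real.sin θ * V ω i) *
      (Real.sin θ * U ω j + Real.cos θ * V ω j) ∂P =
      Real.sin θ * Real.cos θ * (a i j - b i j) := by
    intro θ i j
    have e : ∀ ω, (Real.cos θ * U ω i - Real.sin θ * V ω i) *
      (Real.sin θ * U ω j + Real.cos θ * V ω j) =
        Real.sin θ * Real.cos θ * (U ω i * U ω j) - Real.sin θ * Real.cos θ * (V ω i * V ω j) +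
        (Real.cos θ ^ 2 * (U ω i * V ω j) - Real.sin θ ^ 2 * (U ω j * V ω i)) := fun ω => by ring
    simp_rw [e]
    have i1 : Integrable (fun ω => U ω i * U ω j) P := (hU2 i).integrable_mul (hU2 j)
    have i2 : Integrable (fun ω => V ω i * V ω j) P := (hV2 i).integrable_mul (hV2 j)
    have i3 : Integrable (fun ω => U ω i * V ω j) P := (hU2 i).integrable_mul (hV2 j)
    have i4 : Integrable (fun ω => U ω j * V ω i) P := (hU2 j).integrable_mul (hV2 i)
    have j1 : Integrable (fun ω => Real.sin θ * Real.cos θ * (U ω i * U ω j) -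
        Real.sin θ * Real.cos θ * (V ω i * V ω j)) P := (i1.const_mul _).sub (i2.const_mul _)
    have j2 : Integrable (fun ω => Real.cos θ ^ 2 * (U ω i * V ω j) -
        Real.sin θ ^ 2 * (U ω j * V ω i)) P := (i3.const_mul _).sub (i4.const_mul _)
    rw [integral_add j1 j2,
      integral_sub (i1.const_mul _) (i2.const_mul _), integral_sub (i3.const_mul _) (i4.const_mul _)]
    simp only [integral_const_mul]
    rw [ha, hb, hcross, hcross]; ring
  -- Integration by parts turns the Gaussian factor `cos θ Uᵢ - sin θ Vᵢ` into covariances. Its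
  -- diagonal contribution `κ i i * F₁` is exactly what differentiating the variance normalisation
  -- subtracts, so that only the second derivative `F₂` remains.
  have hψ'eq : ∀ θ, ψ' θ = ∫ ω, F₂ (w θ (N' ω)) *
      ∑ i, p i * Real.exp ((Real.sin θ • U ω + Real.cos θ • V ω) i -
        hv (fun i => a i i) (fun i => b i i) θ i) *
        ∑ j, p j * Real.exp ((Real.sin θ • U ω + Real.cos θ • V ω) j -
          hv (fun i => a i i) (fun i => b i i) θ j) *
          (Real.sin θ * Real.cos θ * (a i j - b i j)) ∂P := by
    intro θ
    set s : ι → ℝ := hv (fun i => a i i) (fun i => b i i) θ with hs_def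
    have hs : ∀ i, 0 ≤ s i := fun i => by
      have := hai i; have := hbi i; rw [hs_def]; unfold hv; positivity
    set e : ι → (ι → ℝ) × (ι → ℝ) → ℝ :=
      fun i q => Real.exp ((Real.sin θ • q.1 + Real.cos θ • q.2) i - s i) with he
    have hec : ∀ i, Continuous (e i) := fun i => by
      simp only [he, Pi.add_apply, Pi.smul_apply]; fun_prop
    have hele : ∀ i q, |e i q| ≤ Real.exp (2 * ‖q‖) := fun i q => by
      rw [abs_of_pos (Real.exp_pos _)]
      exact (exp_sub_le hs _ i).trans (Real.exp_le_exp.2 (norm_rot_le θ q))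
    have hI : ∀ {G : ℝ → ℝ}, Continuous G → (∀ u, 0 ≤ u → |G u| ≤ A * (1 + u ^ N)) →
        ∀ i {R : (ι → ℝ) × (ι → ℝ) → ℝ}, Continuous R → (∀ q, |R q| ≤ Real.exp (2 * ‖q‖)) →
        Integrable (fun ω => G (w θ (N' ω)) * e i (N' ω) * R (N' ω)) P := by
      intro G hG hGb i R hR hRb
      refine integrable_comp_of_le hUV (T := fun q => G (w θ q) * e i q * R q)
        (B := A * (1 + S ^ N)) (k := 2 * N + 2 + 2)
        (((hG.comp continuous_wθ_right).mul (hec i)).mul hR) (fun q => ?_)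
      rw [abs_mul, abs_mul, add_mul, add_mul, Real.exp_add, Real.exp_add, ← mul_assoc, ← mul_assoc]
      exact mul_le_mul (mul_le_mul (abs_comp_wθ_le hp hai hbi hA hGb θ q) (hele i q)
        (abs_nonneg _) (by positivity)) (hRb q) (abs_nonneg _) (by positivity)
    set D : ι → (ι → ℝ) × (ι → ℝ) → ℝ :=
      fun i q => Real.cos θ * q.1 i - Real.sin θ * q.2 i with hD
    have hDle : ∀ i q, |D i q| ≤ Real.exp (2 * ‖q‖) := fun i q => by
      have h1 : |q.1 i| ≤ ‖q‖ := (norm_le_pi_norm q.1 i).trans (norm_fst_le q)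
      have h2 : |q.2 i| ≤ ‖q‖ := (norm_le_pi_norm q.2 i).trans (norm_snd_le q)
      have h3 := Real.abs_sin_le_one θ
      have h4 := Real.abs_cos_le_one θ
      have h7 := Real.add_one_le_exp (2 * ‖q‖)
      have k1 : |Real.cos θ * q.1 i| ≤ ‖q‖ := by
        rw [abs_mul]; nlinarith [abs_nonneg (q.1 i)]
      have k2 : |Real.sin θ * q.2 i| ≤ ‖q‖ := by
        rw [abs_mul]; nlinarith [abs_nonneg (q.2 i)]
      have := abs_sub (Real.cos θ * q.1 i) (Real.sin θ * q.2 i)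
      simp only [hD]
      linarith
    set κ : ι → ι → ℝ := fun i j => Real.sin θ * Real.cos θ * (a i j - b i j) with hκ
    have I1 : ∀ i, Integrable (fun ω => F₁ (w θ (N' ω)) * e i (N' ω) * D i (N' ω)) P :=
      fun i => hI hF₁c hg₁ i (by fun_prop) (hDle i)
    have I2 : ∀ i, Integrable (fun ω => F₁ (w θ (N' ω)) * e i (N' ω)) P := fun i => by
      simpa using hI hF₁c hg₁ i (R := fun _ => 1) continuous_const
        (fun q => by rw [abs_one]; exact Real.one_le_exp (by positivity))
    have I3 : ∀ i, Integrable (fun ω => F₂ (w θ (N' ω)) * e i (N' ω) *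
        ∑ j, p j * e j (N' ω) * κ i j) P := fun i => by
      simp_rw [Finset.mul_sum]
      refine integrable_finsetSum _ fun j _ => ?_
      refine ((hI hF₂ hg₂ i (hec j) (hele j)).const_mul (p j * κ i j)).congr
        (ae_of_all _ fun ω => ?_)
      simp only; ring
    have key : ∀ i, ∫ ω, F₁ (w θ (N' ω)) * e i (N' ω) * D i (N' ω) ∂P =
        ∫ ω, F₂ (w θ (N' ω)) * e i (N' ω) * ∑ j, p j * e j (N' ω) * κ i j ∂P +
          κ i i * ∫ ω, F₁ (w θ (N' ω)) * e i (N' ω) ∂P := by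
      intro i
      let L : (ι → ℝ) × (ι → ℝ) →L[ℝ] ℝ × (ι → ℝ) :=
        (Real.cos θ • (ContinuousLinearMap.proj (R := ℝ) (φ := fun _ : ι => ℝ) i).comp
          (ContinuousLinearMap.fst ℝ _ _) - Real.sin θ •
          (ContinuousLinearMap.proj (R := ℝ) (φ := fun _ : ι => ℝ) i).comp
          (ContinuousLinearMap.snd ℝ _ _)).prod
        (Real.sin θ • ContinuousLinearMap.fst ℝ _ _ + Real.cos θ • ContinuousLinearMap.snd ℝ _ _)
      have hL : HasGaussianLaw (fun ω => (D i (N' ω), Real.sin θ • U ω + Real.cos θ • V ω)) P :=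
        hUV.map_fun L
      have hD0 : ∫ ω, D i (N' ω) ∂P = 0 := by
        simp only [hD, hN']
        rw [integral_sub (((hU2 i).integrable one_le_two).const_mul _)
          (((hV2 i).integrable one_le_two).const_mul _), integral_const_mul, integral_const_mul,
          hU0, hV0]
        ring
      have h := ibp_wt hL hD0 hp hs hF₁ hF₂ hA hg₁ hg₂ i
      have hκ' : ∀ j, ∫ ω', D i (N' ω') * (Real.sin θ • U ω' + Real.cos θ • V ω') j ∂P = κ i j :=
        fun j => hcov θ i j
      simp only [hκ'] at h
      rw [← integral_const_mul, ← integral_add (I3 i) ((I2 i).const_mul _)]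
      refine Eq.trans ?_ (h.trans ?_)
      · congr 1; ext ω
        simp only [hw, wθ, he, hN', hs_def]; ring
      · congr 1; ext ω
        simp only [hw, wθ, he, hN', hs_def]; ring
    calc ψ' θ = ∫ ω, ∑ i, p i * (F₁ (w θ (N' ω)) * e i (N' ω) * D i (N' ω) -
          κ i i * (F₁ (w θ (N' ω)) * e i (N' ω))) ∂P := by
          simp only [hψ']
          congr 1; ext ω
          rw [Finset.mul_sum]
          refine Finset.sum_congr rfl fun i _ => ?_
          simp only [he, hD, hN', hκ]; ring
      _ = ∑ i, p i * ∫ ω, F₂ (w θ (N' ω)) * e i (N' ω) * ∑ j, p j * e j (N' ω) * κ i j ∂P := by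
          have I4 : ∀ i, Integrable (fun ω => p i * (F₁ (w θ (N' ω)) * e i (N' ω) * D i (N' ω) -
              κ i i * (F₁ (w θ (N' ω)) * e i (N' ω)))) P :=
            fun i => ((I1 i).sub ((I2 i).const_mul _)).const_mul _
          rw [integral_finsetSum _ fun i _ => I4 i]
          refine Finset.sum_congr rfl fun i _ => ?_
          rw [integral_const_mul, integral_sub (I1 i) ((I2 i).const_mul _), integral_const_mul, key]
          ring
      _ = ∫ ω, ∑ i, p i * (F₂ (w θ (N' ω)) * e i (N' ω) * ∑ j, p j * e j (N' ω) * κ i j) ∂P := by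
          rw [integral_finsetSum _ fun i _ => (I3 i).const_mul _]
          simp only [integral_const_mul]
      _ = _ := by
          congr 1; ext ω
          rw [Finset.mul_sum]
          refine Finset.sum_congr rfl fun i _ => ?_
          simp only [he, hN', hκ]; ring
  have hbound : ∀ θ ∈ Set.Icc 0 (Real.pi / 2), ‖ψ' θ‖ ≤ C * (Real.sin θ * Real.cos θ) *
      ∫ ω, w θ (N' ω) ^ 2 * |F₂ (w θ (N' ω))| ∂P := by
    intro θ hθ
    have hs : 0 ≤ Real.sin θ := Real.sin_nonneg_of_nonneg_of_le_pi hθ.1 (by linarith [hθ.2, Real.pi_pos])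
    have hc : 0 ≤ Real.cos θ := Real.cos_nonneg_of_neg_pi_div_two_le_of_le (by linarith [hθ.1, Real.pi_pos]) hθ.2
    rw [hψ'eq, ← integral_const_mul]
    refine norm_integral_le_of_norm_le ?_ (ae_of_all _ fun ω => ?_)
    · refine Integrable.const_mul ?_ _
      exact integrable_comp_of_le hUV (T := fun q => w θ q ^ 2 * |F₂ (w θ q)|) (by fun_prop)
        (fun q => abs_comp_wθ_le hp hai hbi (G := fun u => u ^ 2 * |F₂ u|) (by positivity) (sq_growth hA hg₂) θ q)
    · rw [norm_mul, Real.norm_eq_abs, Real.norm_eq_abs]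
      have := wt_mul_sum_le (s := hv (fun i => a i i) (fun i => b i i) θ) hp
        (κ := fun i j => Real.sin θ * Real.cos θ * (a i j - b i j))
        (M := Real.sin θ * Real.cos θ * C) (fun i j => by
          rw [abs_mul, abs_of_nonneg (mul_nonneg hs hc)]
          exact mul_le_mul_of_nonneg_left (hC i j) (mul_nonneg hs hc))
        (Real.sin θ • U ω + Real.cos θ • V ω)
      refine (mul_le_mul_of_nonneg_left this (abs_nonneg _)).trans (le_of_eq ?_)
      simp only [hw, wθ, hN']
      ring
  have hcont : Continuous fun θ => ∫ ω, w θ (N' ω) ^ 2 * |F₂ (w θ (N' ω))| ∂P :=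
    continuous_integral_wθ hUV hp hai hbi (G := fun u => u ^ 2 * |F₂ u|) (by fun_prop)
      (by positivity) (sq_growth hA hg₂)
  have hcc : Continuous fun θ => C * (Real.sin θ * Real.cos θ) *
      ∫ ω, w θ (N' ω) ^ 2 * |F₂ (w θ (N' ω))| ∂P :=
    Continuous.mul (by fun_prop) hcont
  have hB : ∀ x, HasDerivAt (fun x => ∫ θ in (0:ℝ)..x, C * (Real.sin θ * Real.cos θ) *
      ∫ ω, w θ (N' ω) ^ 2 * |F₂ (w θ (N' ω))| ∂P) (C * (Real.sin x * Real.cos x) *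
      ∫ ω, w x (N' ω) ^ 2 * |F₂ (w x (N' ω))| ∂P) x := fun x =>
    (hcc.integral_hasStrictDerivAt 0 x).hasDerivAt
  have hpi : (0 : ℝ) ≤ Real.pi / 2 := by positivity
  have := image_norm_le_of_norm_deriv_right_le_deriv_boundary (a := 0) (b := Real.pi / 2)
    (f := fun θ => ∫ ω, F (w θ (N' ω)) ∂P - ∫ ω, F (w 0 (N' ω)) ∂P) (f' := ψ')
    (fun θ _ => ((hderiv θ).sub_const _).continuousAt.continuousWithinAt)
    (fun θ _ => ((hderiv θ).sub_const _).hasDerivWithinAt) (by simp) hB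
    (fun θ hθ => hbound θ ⟨hθ.1, hθ.2.le⟩) (Set.right_mem_Icc.2 hpi)
  exact this

end interp

/-! ### Convergence of expectations under an `L²` bound -/

section limit
variable {Ω : Type*} [MeasurableSpace Ω] {P : Measure Ω}

/-- Truncation to `[-R, R]` costs at most `x² / R`. -/
lemma abs_sub_clamp_le {R : ℝ} (hR : 0 < R) (x : ℝ) : |x - max (-R) (min x R)| ≤ x ^ 2 / R := by
  rw [le_div_iff₀ hR]
  rcases le_total x R with h | h
  · rw [min_eq_left h]
    rcases le_total (-R) x with h' | h'
    · rw [max_eq_right h']; simpa using sq_nonneg x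
    · rw [max_eq_left h', abs_of_nonpos (by linarith)]; nlinarith
  · rw [min_eq_right h, max_eq_right (by linarith), abs_of_nonneg (by linarith)]; nlinarith

lemma abs_clamp_le {R : ℝ} (hR : 0 < R) (x : ℝ) : |max (-R) (min x R)| ≤ R := by
  rw [abs_le]
  exact ⟨le_max_left _ _, max_le (by linarith) (min_le_right _ _)⟩

/-- Under a bound `M` on the second moment, truncating at level `R` changes the expectation by at most
`M / R`. -/
lemma integral_sub_clamp_le [IsProbabilityMeasure P] {f : Ω → ℝ} {M R : ℝ} (hR : 0 < R)
    (hf : AEStronglyMeasurable f P) (hf2 : Integrable (fun ω => f ω ^ 2) P)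
    (hM : ∫ ω, f ω ^ 2 ∂P ≤ M) :
    |∫ ω, f ω ∂P - ∫ ω, max (-R) (min (f ω) R) ∂P| ≤ M / R := by
  have h1 : Integrable f P := ((memLp_two_iff_integrable_sq hf).2 hf2).integrable one_le_two
  have hc : Continuous fun x : ℝ => max (-R) (min x R) := by fun_prop
  have h2 : Integrable (fun ω => max (-R) (min (f ω) R)) P :=
    Integrable.of_bound (hc.comp_aestronglyMeasurable hf) R (ae_of_all _ fun ω => abs_clamp_le hR _)
  rw [← integral_sub h1 h2]
  calc |∫ ω, f ω - max (-R) (min (f ω) R) ∂P| ≤ ∫ ω, f ω ^ 2 / R ∂P :=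
        norm_integral_le_of_norm_le (f := fun ω => f ω - max (-R) (min (f ω) R)) (hf2.div_const R) (ae_of_all _ fun ω => abs_sub_clamp_le hR _)
    _ = (∫ ω, f ω ^ 2 ∂P) / R := integral_div _ _
    _ ≤ M / R := by gcongr

/-- A bound on second moments survives almost sure limits, by Fatou's lemma. -/
lemma sq_integrable_of_tendsto {f : ℕ → Ω → ℝ} {g : Ω → ℝ} {M : ℝ}
    (hf : ∀ n, AEStronglyMeasurable (f n) P) (hf2 : ∀ n, Integrable (fun ω => f n ω ^ 2) P)
    (hM : ∀ n, ∫ ω, f n ω ^ 2 ∂P ≤ M) (hg : AEStronglyMeasurable g P)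
    (hlim : ∀ᵐ ω ∂P, Tendsto (fun n => f n ω) atTop (nhds (g ω))) :
    Integrable (fun ω => g ω ^ 2) P ∧ ∫ ω, g ω ^ 2 ∂P ≤ M := by
  have hM0 : 0 ≤ M := (integral_nonneg fun ω => sq_nonneg _).trans (hM 0)
  -- Fatou's lemma for the squares.
  have key : ∫⁻ ω, ENNReal.ofReal (g ω ^ 2) ∂P ≤ ENNReal.ofReal M := by
    calc ∫⁻ ω, ENNReal.ofReal (g ω ^ 2) ∂P
        = ∫⁻ ω, liminf (fun n => ENNReal.ofReal (f n ω ^ 2)) atTop ∂P := by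
          refine lintegral_congr_ae ?_
          filter_upwards [hlim] with ω hω
          exact ((ENNReal.continuous_ofReal.tendsto _).comp (hω.pow 2)).liminf_eq.symm
      _ ≤ liminf (fun n => ∫⁻ ω, ENNReal.ofReal (f n ω ^ 2) ∂P) atTop :=
          lintegral_liminf_le' fun n => ((hf n).aemeasurable.pow_const 2).ennreal_ofReal
      _ ≤ ENNReal.ofReal M := by
          refine liminf_le_of_le (by isBoundedDefault) fun b hb => ?_
          obtain ⟨n, hn⟩ := hb.exists
          refine hn.trans ?_
          rw [← ofReal_integral_eq_lintegral_ofReal (hf2 n) (ae_of_all _ fun ω => sq_nonneg _)]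
          exact ENNReal.ofReal_le_ofReal (hM n)
  have hint : Integrable (fun ω => g ω ^ 2) P := by
    refine ⟨hg.pow 2, ?_⟩
    rw [hasFiniteIntegral_iff_ofReal (ae_of_all _ fun ω => sq_nonneg _)]
    exact key.trans_lt ENNReal.ofReal_lt_top
  refine ⟨hint, ?_⟩
  rwa [← ofReal_integral_eq_lintegral_ofReal hint (ae_of_all _ fun ω => sq_nonneg _),
    ENNReal.ofReal_le_ofReal_iff hM0] at key

/-- Almost sure convergence together with an `L²` bound gives convergence of expectations. -/
lemma tendsto_integral_of_sq_le [IsProbabilityMeasure P] {f : ℕ → Ω → ℝ} {g : Ω → ℝ} {M : ℝ}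
    (hf : ∀ n, AEStronglyMeasurable (f n) P) (hf2 : ∀ n, Integrable (fun ω => f n ω ^ 2) P)
    (hM : ∀ n, ∫ ω, f n ω ^ 2 ∂P ≤ M)
    (hlim : ∀ᵐ ω ∂P, Tendsto (fun n => f n ω) atTop (nhds (g ω))) :
    Tendsto (fun n => ∫ ω, f n ω ∂P) atTop (nhds (∫ ω, g ω ∂P)) := by
  have hg : AEStronglyMeasurable g P := aestronglyMeasurable_of_tendsto_ae atTop hf hlim
  obtain ⟨hg2, hgM⟩ := sq_integrable_of_tendsto hf hf2 hM hg hlim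
  have hM0 : 0 ≤ M := (integral_nonneg fun ω => sq_nonneg _).trans (hM 0)
  rw [Metric.tendsto_atTop]
  intro ε hε
  set R := 3 * (M + 1) / ε with hRdef
  have hR : 0 < R := by positivity
  have hMR : M / R < ε / 3 := by
    rw [div_lt_iff₀ hR, hRdef]
    have : ε / 3 * (3 * (M + 1) / ε) = M + 1 := by field_simp
    linarith
  have hc : Continuous fun x : ℝ => max (-R) (min x R) := by fun_prop
  have ht : Tendsto (fun n => ∫ ω, max (-R) (min (f n ω) R) ∂P) atTop
      (nhds (∫ ω, max (-R) (min (g ω) R) ∂P)) := by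
    refine tendsto_integral_of_dominated_convergence (fun _ => R)
      (fun n => hc.comp_aestronglyMeasurable (hf n)) (integrable_const _)
      (fun n => ae_of_all _ fun ω => abs_clamp_le hR _) ?_
    filter_upwards [hlim] with ω hω
    exact (hc.tendsto _).comp hω
  obtain ⟨n₀, hn₀⟩ := Metric.tendsto_atTop.1 ht (ε / 3) (by positivity)
  refine ⟨n₀, fun n hn => ?_⟩
  have h1 := hn₀ n hn
  have h2 := integral_sub_clamp_le hR (hf n) (hf2 n) (hM n)
  have h3 := integral_sub_clamp_le hR hg hg2 hgM
  rw [Real.dist_eq, abs_lt] at *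
  rw [abs_le] at h2 h3
  constructor <;> linarith [h1.1, h1.2, h2.1, h2.2, h3.1, h3.2]

end limit

/-! ### Uniform moment bounds -/

section moments
variable {ι : Type*} [Fintype ι] {p : ι → ℝ}

/-- Power-mean inequality with weights that are not normalised; the form without division stays valid
when all weights vanish. -/
lemma sum_mul_pow_le (hp : ∀ i, 0 ≤ p i) {e : ι → ℝ} (he : ∀ i, 0 ≤ e i) (k : ℕ) :
    (∑ i, p i) * (∑ i, p i * e i) ^ k ≤ (∑ i, p i) ^ k * ∑ i, p i * e i ^ k := by
  set S := ∑ i, p i with hS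
  have hS0 : 0 ≤ S := Finset.sum_nonneg fun i _ => hp i
  rcases hS0.eq_or_lt with h | h
  · rw [← h, zero_mul]
    refine mul_nonneg (pow_nonneg le_rfl _) (Finset.sum_nonneg fun i _ => mul_nonneg (hp i) (pow_nonneg (he i) _))
  · have := Real.pow_arith_mean_le_arith_mean_pow Finset.univ (fun i => p i / S) e
      (fun i _ => div_nonneg (hp i) h.le) (by rw [← Finset.sum_div]; exact div_self h.ne')
      (fun i _ => he i) k
    have e1 : ∀ x : ι → ℝ, ∑ i, p i / S * x i = (∑ i, p i * x i) / S := fun x => by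
      rw [Finset.sum_div]; exact Finset.sum_congr rfl fun i _ => by ring
    rw [e1, e1, div_pow, div_le_div_iff₀ (by positivity) h] at this
    linarith

/-- Moments of the total mass of the weighted exponentials are bounded only in terms of the total
weight and of a bound `σ` on the variances. -/
lemma integral_wθ_pow_le {Ω : Type*} [MeasurableSpace Ω] {P : Measure Ω} {U V : Ω → ι → ℝ}
    (hUV : HasGaussianLaw (fun ω => (U ω, V ω)) P)
    (hU0 : ∀ i, ∫ ω, U ω i ∂P = 0) (hV0 : ∀ i, ∫ ω, V ω i ∂P = 0)
    (hcross : ∀ i j, ∫ ω, U ω i * V ω j ∂P = 0) {a b : ι → ℝ}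
    (ha : ∀ i, ∫ ω, U ω i * U ω i ∂P = a i) (hb : ∀ i, ∫ ω, V ω i * V ω i ∂P = b i)
    (hp : ∀ i, 0 ≤ p i) {σ : ℝ} (haσ : ∀ i, a i ≤ σ) (hbσ : ∀ i, b i ≤ σ) (θ : ℝ) (k : ℕ) :
    ∫ ω, wθ p a b θ (U ω, V ω) ^ k ∂P ≤ (∑ i, p i) ^ k * Real.exp (σ * k ^ 2 / 2) := by
  have hP := hUV.isProbabilityMeasure
  have hai : ∀ i, 0 ≤ a i := fun i => by
    rw [← ha]; exact integral_nonneg fun ω => mul_self_nonneg _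
  have hbi : ∀ i, 0 ≤ b i := fun i => by
    rw [← hb]; exact integral_nonneg fun ω => mul_self_nonneg _
  have hs : ∀ i, 0 ≤ hv a b θ i := fun i => by
    have := hai i; have := hbi i; unfold hv; positivity
  set S := ∑ i, p i with hS
  have hS0 : 0 ≤ S := Finset.sum_nonneg fun i _ => hp i
  have hU2 : ∀ i, MemLp (fun ω => U ω i) 2 P := fun i => (hUV.fst.eval i).memLp_two
  have hV2 : ∀ i, MemLp (fun ω => V ω i) 2 P := fun i => (hUV.snd.eval i).memLp_two
  set Z : ι → Ω → ℝ := fun i ω => Real.sin θ * U ω i + Real.cos θ * V ω i with hZ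
  have hmgf : ∀ i, Integrable (fun ω => Real.exp (k * Z i ω)) P ∧
      ∫ ω, Real.exp (k * Z i ω) ∂P ≤ Real.exp (σ * k ^ 2 / 2) := by
    intro i
    let L : (ι → ℝ) × (ι → ℝ) →L[ℝ] ℝ :=
        Real.sin θ • (ContinuousLinearMap.proj (R := ℝ) (φ := fun _ : ι => ℝ) i).comp
          (ContinuousLinearMap.fst ℝ _ _) + Real.cos θ •
          (ContinuousLinearMap.proj (R := ℝ) (φ := fun _ : ι => ℝ) i).comp
          (ContinuousLinearMap.snd ℝ _ _)
    have hL : HasGaussianLaw (Z i) P := hUV.map_fun L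
    have h0 : ∫ ω, Z i ω ∂P = 0 := by
      simp only [hZ]
      rw [integral_add (((hU2 i).integrable one_le_two).const_mul _)
          (((hV2 i).integrable one_le_two).const_mul _), integral_const_mul, integral_const_mul,
          hU0, hV0]
      ring
    have hvar : ∫ ω, Z i ω ^ 2 ∂P ≤ σ := by
      have e : ∀ ω, Z i ω ^ 2 = Real.sin θ ^ 2 * (U ω i * U ω i) +
          Real.cos θ ^ 2 * (V ω i * V ω i) +
          2 * Real.sin θ * Real.cos θ * (U ω i * V ω i) := fun ω => by simp only [hZ]; ring
      simp_rw [e]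
      have i1 : Integrable (fun ω => U ω i * U ω i) P := (hU2 i).integrable_mul (hU2 i)
      have i2 : Integrable (fun ω => V ω i * V ω i) P := (hV2 i).integrable_mul (hV2 i)
      have i3 : Integrable (fun ω => U ω i * V ω i) P := (hU2 i).integrable_mul (hV2 i)
      have i4 : Integrable (fun ω => Real.sin θ ^ 2 * (U ω i * U ω i) +
          Real.cos θ ^ 2 * (V ω i * V ω i)) P := (i1.const_mul _).add (i2.const_mul _)
      rw [integral_add i4 (i3.const_mul _), integral_add (i1.const_mul _) (i2.const_mul _),
        integral_const_mul, integral_const_mul, integral_const_mul, ha, hb, hcross]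
      have h1 : σ = Real.sin θ ^ 2 * σ + Real.cos θ ^ 2 * σ := by
        rw [← add_mul, Real.sin_sq_add_cos_sq, one_mul]
      linarith [mul_le_mul_of_nonneg_left (haσ i) (sq_nonneg (Real.sin θ)),
        mul_le_mul_of_nonneg_left (hbσ i) (sq_nonneg (Real.cos θ))]
    have hm := hL.map_eq_gaussianReal
    rw [h0, variance_of_integral_eq_zero hL.aemeasurable h0] at hm
    -- The moment generating function is nonzero, so the integral defining it is not a junk value and
    -- the integrand is integrable.
    have := mgf_gaussianReal hm k
    refine ⟨?_, ?_⟩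
    · by_contra hcon
      rw [mgf, integral_undef hcon] at this
      exact (Real.exp_pos _).ne this
    · rw [mgf] at this
      rw [this, Real.coe_toNNReal _ (integral_nonneg fun ω => sq_nonneg _), zero_mul, zero_add]
      gcongr
  have hpt : ∀ ω, S * wθ p a b θ (U ω, V ω) ^ k ≤
      S ^ k * ∑ i, p i * Real.exp (k * Z i ω) := by
    intro ω
    refine (sum_mul_pow_le hp (fun i => (Real.exp_pos _).le) k).trans ?_
    refine mul_le_mul_of_nonneg_left (Finset.sum_le_sum fun i _ => ?_) (by positivity)
    refine mul_le_mul_of_nonneg_left ?_ (hp i)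
    rw [← Real.exp_nat_mul]
    refine Real.exp_le_exp.2 (mul_le_mul_of_nonneg_left ?_ (Nat.cast_nonneg _))
    have := hs i
    simp only [Pi.add_apply, Pi.smul_apply, smul_eq_mul, hZ]
    linarith
  have hint : Integrable (fun ω => wθ p a b θ (U ω, V ω) ^ k) P := by
    refine integrable_comp_of_le hUV (T := fun q => wθ p a b θ q ^ k) (by fun_prop)
      (fun q => abs_comp_wθ_le hp hai hbi (G := fun u => u ^ k) (A := 1) (N := k) zero_le_one
        (fun u hu => ?_) θ q)
    rw [abs_of_nonneg (by positivity)]; linarith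
  have hmain : S * ∫ ω, wθ p a b θ (U ω, V ω) ^ k ∂P ≤ S * (S ^ k * Real.exp (σ * k ^ 2 / 2)) := by
    rw [← integral_const_mul]
    calc _ ≤ ∫ ω, S ^ k * ∑ i, p i * Real.exp (k * Z i ω) ∂P :=
          integral_mono (hint.const_mul _) ((integrable_finsetSum _ fun i _ =>
            (hmgf i).1.const_mul _).const_mul _) hpt
      _ = S ^ k * ∑ i, p i * ∫ ω, Real.exp (k * Z i ω) ∂P := by
          rw [integral_const_mul, integral_finsetSum _ fun i _ => (hmgf i).1.const_mul _]
          simp only [integral_const_mul]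
      _ ≤ S ^ k * ∑ i, p i * Real.exp (σ * k ^ 2 / 2) := by
          refine mul_le_mul_of_nonneg_left (Finset.sum_le_sum fun i _ => ?_) (by positivity)
          exact mul_le_mul_of_nonneg_left (hmgf i).2 (hp i)
      _ = _ := by rw [← Finset.sum_mul]; ring
  rcases hS0.eq_or_lt with h | h
  · have hp0 : ∀ i, p i = 0 := fun i =>
      (Finset.sum_eq_zero_iff_of_nonneg fun i _ => hp i).1 (hS.symm.trans h.symm) i (Finset.mem_univ _)
    have hw0 : ∀ ω, wθ p a b θ (U ω, V ω) = 0 := fun ω => by simp [wθ, wt, hp0]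
    simp only [hw0, ← h]
    rcases k.eq_zero_or_pos with hk | hk
    · subst hk; simp
    · simp [zero_pow hk.ne']
  · exact le_of_mul_le_mul_left hmain h

/-- Second moments of polynomially growing functions of `wθ` are bounded in terms of the total weight
and of the bound `σ` on the variances, hence uniformly over discretisations of a fixed measure. -/
lemma integral_comp_wθ_sq_le {Ω : Type*} [MeasurableSpace Ω] {P : Measure Ω} {U V : Ω → ι → ℝ}
    (hUV : HasGaussianLaw (fun ω => (U ω, V ω)) P)
    (hU0 : ∀ i, ∫ ω, U ω i ∂P = 0) (hV0 : ∀ i, ∫ ω, V ω i ∂P = 0)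
    (hcross : ∀ i j, ∫ ω, U ω i * V ω j ∂P = 0) {a b : ι → ℝ}
    (ha : ∀ i, ∫ ω, U ω i * U ω i ∂P = a i) (hb : ∀ i, ∫ ω, V ω i * V ω i ∂P = b i)
    (hp : ∀ i, 0 ≤ p i) {σ : ℝ} (haσ : ∀ i, a i ≤ σ) (hbσ : ∀ i, b i ≤ σ)
    {G : ℝ → ℝ} (hGc : Continuous G) {A : ℝ} {m : ℕ}
    (hG : ∀ u, 0 ≤ u → |G u| ≤ A * (1 + u ^ m)) (θ : ℝ) :
    Integrable (fun ω => G (wθ p a b θ (U ω, V ω)) ^ 2) P ∧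
    ∫ ω, G (wθ p a b θ (U ω, V ω)) ^ 2 ∂P ≤
      2 * A ^ 2 * (1 + (∑ i, p i) ^ (2 * m) * Real.exp (σ * (2 * m : ℕ) ^ 2 / 2)) := by
  have hP := hUV.isProbabilityMeasure
  have hai : ∀ i, 0 ≤ a i := fun i => by
    rw [← ha]; exact integral_nonneg fun ω => mul_self_nonneg _
  have hbi : ∀ i, 0 ≤ b i := fun i => by
    rw [← hb]; exact integral_nonneg fun ω => mul_self_nonneg _
  have hG2 : ∀ u, 0 ≤ u → G u ^ 2 ≤ 2 * A ^ 2 * (1 + u ^ (2 * m)) := fun u hu => by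
    have h1 := pow_le_pow_left₀ (abs_nonneg _) (hG u hu) 2
    rw [sq_abs] at h1
    refine h1.trans ?_
    rw [mul_pow, mul_comm 2 m, pow_mul]
    nlinarith [mul_nonneg (sq_nonneg A) (sq_nonneg (1 - u ^ m))]
  have hint : Integrable (fun ω => G (wθ p a b θ (U ω, V ω)) ^ 2) P :=
    integrable_comp_of_le hUV (T := fun q => G (wθ p a b θ q) ^ 2) (by fun_prop)
      (fun q => abs_comp_wθ_le hp hai hbi (G := fun u => G u ^ 2) (A := 2 * A ^ 2) (N := 2 * m) (by positivity)
        (fun u hu => by rw [abs_of_nonneg (sq_nonneg _)]; exact hG2 u hu) θ q)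
  have hint' : Integrable (fun ω => wθ p a b θ (U ω, V ω) ^ (2 * m)) P := by
    refine integrable_comp_of_le hUV (T := fun q => wθ p a b θ q ^ (2 * m)) (by fun_prop)
      (fun q => abs_comp_wθ_le hp hai hbi (G := fun u => u ^ (2 * m)) (A := 1) (N := 2 * m)
        zero_le_one (fun u hu => ?_) θ q)
    rw [abs_of_nonneg (by positivity)]; linarith
  refine ⟨hint, ?_⟩
  calc _ ≤ ∫ ω, 2 * A ^ 2 * (1 + wθ p a b θ (U ω, V ω) ^ (2 * m)) ∂P :=
        integral_mono hint (((integrable_const _).add hint').const_mul _)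
          fun ω => hG2 _ (wt_nonneg hp _)
    _ = 2 * A ^ 2 * (1 + ∫ ω, wθ p a b θ (U ω, V ω) ^ (2 * m) ∂P) := by
        rw [integral_const_mul, integral_add (integrable_const _) hint']; simp
    _ ≤ _ := by
        have := integral_wθ_pow_le hUV hU0 hV0 hcross ha hb hp haσ hbσ θ (2 * m)
        gcongr

end moments

/-! ### Gaussian fields with continuous paths -/

/-- A centered Gaussian field indexed by `E` whose restriction to `K` has almost surely continuous
paths. Only the finite-dimensional laws at points of `K` are constrained. -/
structure IsGaussField {E Ω : Type*} [TopologicalSpace E] [MeasurableSpace Ω] (P : Measure Ω)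
    (K : Set E) (X : E → Ω → ℝ) : Prop where
  meas : ∀ x, Measurable (X x)
  cont : ∀ᵐ ω ∂P, ContinuousOn (fun x => X x ω) K
  gauss : ∀ (n : ℕ) (x : Fin n → E), (∀ i, x i ∈ K) → ∀ a : Fin n → ℝ, ∃ v : NNReal,
    Measure.map (fun ω => ∑ i, a i * X (x i) ω) P = gaussianReal 0 v

namespace IsGaussField
variable {E Ω : Type*} [TopologicalSpace E] [MeasurableSpace Ω] {P : Measure Ω}
  {K : Set E} {X : E → Ω → ℝ}

/-- Finite-dimensional laws of a Gaussian field are Gaussian. A linear form on `ι → ℝ` is a linear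
combination of coordinates, and the definition covers these up to enumerating `ι`. -/
lemma law (hX : IsGaussField P K X) {ι : Type*} [Fintype ι] {x : ι → E} (hx : ∀ i, x i ∈ K) :
    HasGaussianLaw (fun ω i => X (x i) ω) P := by
  have hm : Measurable (fun ω i => X (x i) ω) := measurable_pi_lambda _ fun i => hX.meas _
  refine ⟨isGaussian_of_map_eq_gaussianReal fun L => ?_⟩
  classical
  let e := Fintype.equivFin ι
  obtain ⟨v, hv⟩ := hX.gauss (Fintype.card ι) (fun j => x (e.symm j)) (fun j => hx _)
    (fun j => L (Pi.single (e.symm j) 1))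
  refine ⟨0, v, ?_⟩
  rw [Measure.map_map L.continuous.measurable hm, ← hv]
  congr 1
  ext ω
  rw [Function.comp_apply, pi_eq_sum_univ' (fun i => X (x i) ω), map_sum,
    ← e.symm.sum_comp]
  refine Finset.sum_congr rfl fun j _ => ?_
  rw [map_smul, smul_eq_mul, mul_comm]

lemma map_eq (hX : IsGaussField P K X) {x : E} (hx : x ∈ K) :
    ∃ v : NNReal, P.map (X x) = gaussianReal 0 v := by
  simpa using hX.gauss 1 (fun _ => x) (fun _ => hx) (fun _ => 1)

lemma integral_eq_zero (hX : IsGaussField P K X) {x : E} (hx : x ∈ K) : ∫ ω, X x ω ∂P = 0 := by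
  obtain ⟨v, hv⟩ := hX.map_eq hx
  have := integral_map (μ := P) (hX.meas x).aemeasurable (f := fun y : ℝ => y)
    (by fun_prop)
  rw [← this, hv]
  simp

lemma memLp_two (hX : IsGaussField P K X) {x : E} (hx : x ∈ K) : MemLp (X x) 2 P :=
  ((hX.law (ι := Unit) (x := fun _ => x) fun _ => hx).eval ()).memLp_two

/-- The real part of the characteristic function at `1`. -/
lemma integral_cos (hX : IsGaussField P K X) {x : E} (hx : x ∈ K) :
    ∫ ω, Real.cos (X x ω) ∂P = Real.exp (-(∫ ω, X x ω * X x ω ∂P) / 2) := by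
  obtain ⟨v, hv⟩ := hX.map_eq hx
  have hva : ∫ ω, X x ω * X x ω ∂P = v := by
    have h1 := variance_of_integral_eq_zero (hX.meas x).aemeasurable (hX.integral_eq_zero hx)
    have h2 : Var[X x; P] = Var[id; P.map (X x)] := by
      rw [variance_map measurable_id.aemeasurable (hX.meas x).aemeasurable]; rfl
    rw [hv, variance_id_gaussianReal] at h2
    rw [← h2, h1]
    simp only [sq]
  have hc := charFun_gaussianReal (μ := 0) (v := v) 1
  rw [← hv, charFun_apply_real, integral_map (hX.meas x).aemeasurable (by fun_prop)] at hc
  have hP : IsProbabilityMeasure P :=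
    (hX.law (ι := Unit) (x := fun _ => x) fun _ => hx).isProbabilityMeasure
  have hint : Integrable (fun ω => Complex.exp (((1:ℝ):ℂ) * (X x ω : ℂ) * Complex.I)) P := by
    refine Integrable.of_bound (C := 1) ?_ (ae_of_all _ fun ω => ?_)
    · have := hX.meas x
      exact Measurable.aestronglyMeasurable (by fun_prop)
    · rw [← Complex.ofReal_mul, Complex.norm_exp_ofReal_mul_I]
  have := congrArg Complex.re hc
  rw [← RCLike.re_eq_complex_re, ← integral_re hint] at this
  rw [hva]
  convert this using 1
  · congr 1; ext ω
    rw [RCLike.re_eq_complex_re, ← Complex.ofReal_mul, Complex.exp_ofReal_mul_I_re, one_mul]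
  · rw [RCLike.re_eq_complex_re]
    have : (((1:ℝ):ℂ) * ((0:ℝ):ℂ) * Complex.I - ((v : ℝ):ℂ) * ((1:ℝ):ℂ) ^ 2 / 2) =
      ((-(v:ℝ)/2 : ℝ) : ℂ) := by push_cast; ring
    rw [this, Complex.exp_ofReal_re]

/-- The variance of a Gaussian field with continuous paths is continuous. The cosine
`E cos (X x) = exp (-E (X x)² / 2)` is continuous by bounded convergence, which spares any
integrability of the supremum of the field. -/
lemma continuousOn_var [FirstCountableTopology E] [IsFiniteMeasure P] (hX : IsGaussField P K X) :
    ContinuousOn (fun x => ∫ ω, X x ω * X x ω ∂P) K := by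
  have h1 : ContinuousOn (fun x => ∫ ω, Real.cos (X x ω) ∂P) K := by
    refine continuousOn_of_dominated (bound := fun _ => 1)
      (fun x _ => (Real.measurable_cos.comp (hX.meas x)).aestronglyMeasurable)
      (fun x _ => ae_of_all _ fun ω => Real.abs_cos_le_one _) (integrable_const _) ?_
    filter_upwards [hX.cont] with ω hω
    exact Real.continuous_cos.comp_continuousOn hω
  have h2 : ContinuousOn (fun x => -2 * Real.log (∫ ω, Real.cos (X x ω) ∂P)) K :=
    continuousOn_const.mul (h1.log fun x hx => by
      rw [hX.integral_cos hx]; exact (Real.exp_pos _).ne')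
  refine h2.congr fun x hx => ?_
  simp only
  rw [hX.integral_cos hx, Real.log_exp]
  ring

end IsGaussField

section disc

/-- Integrating along a simple function is a finite weighted sum over its range. -/
lemma integral_comp_simpleFunc {E : Type*} [MeasurableSpace E] (ρ : Measure E) [IsFiniteMeasure ρ]
    (π : SimpleFunc E E) (g : E → ℝ) :
    ∫ x, g (π x) ∂ρ = ∑ i : π.range, ρ.real (π ⁻¹' {(i : E)}) * g i := by
  classical
  have e : ∀ x, g (π x) = ∑ i ∈ π.range, (π ⁻¹' {i}).indicator (fun _ => g i) x := fun x => by
    rw [Finset.sum_eq_single (π x)]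
    · simp
    · intro i _ hi
      exact Set.indicator_of_notMem (fun h => hi h.symm) _
    · intro h
      exact absurd (π.mem_range_self x) h
  simp_rw [e]
  rw [integral_finsetSum _ fun i _ =>
    (integrable_const _).indicator (π.measurableSet_fiber i)]
  rw [Finset.sum_coe_sort π.range (fun i => ρ.real (π ⁻¹' {i}) * g i)]
  refine Finset.sum_congr rfl fun i _ => ?_
  rw [integral_indicator (π.measurableSet_fiber i), setIntegral_const, smul_eq_mul]

end disc

/-! ### Discretisation and passage to the limit -/

/-- The mass of `exp (Z - E Z² / 2)` for the rotated field `Z = sin θ • X + cos θ • Y`; the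
arguments `a`, `b` stand for the variances of `X` and `Y`. -/
noncomputable def fieldW {E Ω : Type*} [MeasurableSpace E] (ρ : Measure E) (X Y : E → Ω → ℝ)
    (a b : E → ℝ) (θ : ℝ) (ω : Ω) : ℝ :=
  ∫ x, Real.exp (Real.sin θ * X x ω + Real.cos θ * Y x ω -
    (Real.sin θ ^ 2 * a x + Real.cos θ ^ 2 * b x) / 2) ∂ρ

section field
variable {E Ω : Type*} [MetricSpace E] {K : Set E} {X Y : E → Ω → ℝ}

/-- Independence makes the pair of finite-dimensional vectors jointly Gaussian. -/
lemma pair_law [MeasurableSpace Ω] {P : Measure Ω}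
    (hX : IsGaussField P K X) (hY : IsGaussField P K Y)
    (hI : IndepFun (fun ω x => X x ω) (fun ω x => Y x ω) P) {ι : Type*} [Fintype ι] {x : ι → E}
    (hx : ∀ i, x i ∈ K) : HasGaussianLaw (fun ω => (fun i => X (x i) ω, fun i => Y (x i) ω)) P := by
  have hm : Measurable fun (f : E → ℝ) (i : ι) => f (x i) :=
    measurable_pi_lambda _ fun i => measurable_pi_apply _
  exact IndepFun.hasGaussianLaw (hX.law hx) (hY.law hx) (hI.comp hm hm)

lemma pair_cross [MeasurableSpace Ω] {P : Measure Ω}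
    (hX : IsGaussField P K X) (hY : IsGaussField P K Y)
    (hI : IndepFun (fun ω x => X x ω) (fun ω x => Y x ω) P) {x y : E} (hx : x ∈ K) :
    ∫ ω, X x ω * Y y ω ∂P = 0 := by
  have h : IndepFun (X x) (Y y) P := hI.comp (measurable_pi_apply x) (measurable_pi_apply y)
  have := h.integral_mul_eq_mul_integral (hX.meas x).aestronglyMeasurable
    (hY.meas y).aestronglyMeasurable
  rw [hX.integral_eq_zero hx, zero_mul] at this
  exact this

/-- Along simple-function approximations of the identity of `K`, the discretised masses converge
pathwise. -/
lemma tendsto_disc [MeasurableSpace E] {ρ : Measure E} [IsFiniteMeasure ρ] (hK : IsCompact K)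
    (hρ : ∀ᵐ x ∂ρ, x ∈ K) {π : ℕ → SimpleFunc E E} (hπK : ∀ n x, π n x ∈ K)
    (hπ : ∀ x ∈ K, Tendsto (fun n => π n x) atTop (nhds x)) {a b : E → ℝ}
    (ha : ContinuousOn a K) (hb : ContinuousOn b K) {ω : Ω}
    (hXω : ContinuousOn (fun x => X x ω) K) (hYω : ContinuousOn (fun x => Y x ω) K) (θ : ℝ) :
    Tendsto (fun n => wθ (fun i : (π n).range => ρ.real (π n ⁻¹' {(i : E)}))
      (fun i => a i) (fun i => b i) θ (fun i => X i ω, fun i => Y i ω)) atTop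
      (nhds (fieldW ρ X Y a b θ ω)) := by
  set g : E → ℝ := fun x => Real.exp (Real.sin θ * X x ω + Real.cos θ * Y x ω -
    (Real.sin θ ^ 2 * a x + Real.cos θ ^ 2 * b x) / 2) with hg
  have hgc : ContinuousOn g K := by
    refine Real.continuous_exp.comp_continuousOn ?_
    exact ((continuousOn_const.mul hXω).add (continuousOn_const.mul hYω)).sub
      (((continuousOn_const.mul ha).add (continuousOn_const.mul hb)).div_const 2)
  obtain ⟨B, hB⟩ := hK.exists_bound_of_continuousOn hgc
  have e : ∀ n, wθ (fun i : (π n).range => ρ.real (π n ⁻¹' {(i : E)}))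
      (fun i => a i) (fun i => b i) θ (fun i => X i ω, fun i => Y i ω) = ∫ x, g (π n x) ∂ρ := by
    intro n
    rw [integral_comp_simpleFunc]
    rfl
  simp_rw [e]
  refine tendsto_integral_of_dominated_convergence (fun _ => B) (fun n => ?_)
    (integrable_const _) (fun n => ae_of_all _ fun x => hB _ (hπK n x)) ?_
  · exact ((π n).map g).measurable.aestronglyMeasurable
  · filter_upwards [hρ] with x hx
    exact (hgc x hx).tendsto.comp (tendsto_nhdsWithin_iff.2
      ⟨hπ x hx, Eventually.of_forall fun n => hπK n x⟩)

/-- The interpolation inequality for fields, in the angular parametrisation: `finite_interp` along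
simple-function approximations of the identity of `K`, followed by the limit on both sides. -/
theorem field_interp [MeasurableSpace E] [BorelSpace E] [MeasurableSpace Ω] {P : Measure Ω}
    [SecondCountableTopology E] {ρ : Measure E} [IsFiniteMeasure ρ]
    (hK : IsCompact K) (hKne : K.Nonempty)
    (hρ : ∀ᵐ x ∂ρ, x ∈ K) (hX : IsGaussField P K X) (hY : IsGaussField P K Y)
    (hI : IndepFun (fun ω x => X x ω) (fun ω x => Y x ω) P) {a b : E → ℝ}
    (ha : ∀ x, ∫ ω, X x ω * X x ω ∂P = a x) (hb : ∀ x, ∫ ω, Y x ω * Y x ω ∂P = b x)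
    {F F₁ F₂ : ℝ → ℝ} (hF : ∀ u, HasDerivAt F (F₁ u) u)
    (hF₁ : ∀ u, HasDerivAt F₁ (F₂ u) u) (hF₂ : Continuous F₂)
    {A : ℝ} {N : ℕ} (hA : 0 ≤ A) (hg : ∀ u, 0 ≤ u → |F u| ≤ A * (1 + u ^ N))
    (hg₁ : ∀ u, 0 ≤ u → |F₁ u| ≤ A * (1 + u ^ N)) (hg₂ : ∀ u, 0 ≤ u → |F₂ u| ≤ A * (1 + u ^ N))
    {C : ℝ} (hC : ∀ x ∈ K, ∀ y ∈ K, |∫ ω, X x ω * X y ω ∂P - ∫ ω, Y x ω * Y y ω ∂P| ≤ C) :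
    |∫ ω, F (fieldW ρ X Y a b (Real.pi / 2) ω) ∂P - ∫ ω, F (fieldW ρ X Y a b 0 ω) ∂P| ≤
    ∫ θ in (0 : ℝ)..(Real.pi / 2), C * (Real.sin θ * Real.cos θ) *
      ∫ ω, fieldW ρ X Y a b θ ω ^ 2 * |F₂ (fieldW ρ X Y a b θ ω)| ∂P := by
  obtain ⟨y₀, hy₀⟩ := hKne
  have hP : IsProbabilityMeasure P :=
    (hX.law (ι := Unit) (x := fun _ => y₀) fun _ => hy₀).isProbabilityMeasure
  have hac : ContinuousOn a K := hX.continuousOn_var.congr fun x _ => (ha x).symm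
  have hbc : ContinuousOn b K := hY.continuousOn_var.congr fun x _ => (hb x).symm
  obtain ⟨σ₁, hσ₁⟩ := hK.exists_bound_of_continuousOn hac
  obtain ⟨σ₂, hσ₂⟩ := hK.exists_bound_of_continuousOn hbc
  set σ := max σ₁ σ₂ with hσ
  have haσ : ∀ x ∈ K, a x ≤ σ := fun x hx =>
    (le_abs_self _).trans ((hσ₁ x hx).trans (le_max_left _ _))
  have hbσ : ∀ x ∈ K, b x ≤ σ := fun x hx =>
    (le_abs_self _).trans ((hσ₂ x hx).trans (le_max_right _ _))
  set π : ℕ → SimpleFunc E E := fun n => SimpleFunc.approxOn id measurable_id K y₀ hy₀ n with hπdef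
  have hπK : ∀ n x, π n x ∈ K := fun n x => SimpleFunc.approxOn_mem _ _ n x
  have hπ : ∀ x ∈ K, Tendsto (fun n => π n x) atTop (nhds x) := fun x hx =>
    SimpleFunc.tendsto_approxOn measurable_id hy₀ (subset_closure hx)
  have hrange : ∀ n (i : (π n).range), (i : E) ∈ K := fun n i => by
    obtain ⟨x, hx⟩ := SimpleFunc.mem_range.1 i.2
    rw [← hx]; exact hπK n x
  set p : ∀ n, (π n).range → ℝ := fun n i => ρ.real (π n ⁻¹' {(i : E)}) with hp_def
  have hp : ∀ n i, 0 ≤ p n i := fun n i => measureReal_nonneg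
  have hpsum : ∀ n, ∑ i, p n i = ρ.real Set.univ := fun n => by
    have := integral_comp_simpleFunc ρ (π n) (fun _ => 1)
    simpa using this.symm
  set Wn : ℕ → ℝ → Ω → ℝ := fun n θ ω => wθ (p n) (fun i => a i) (fun i => b i) θ
    (fun i => X i ω, fun i => Y i ω) with hWn
  have hlaw : ∀ n, HasGaussianLaw (fun ω => ((fun i : (π n).range => X i ω),
      fun i : (π n).range => Y i ω)) P := fun n => pair_law hX hY hI (hrange n)
  have hlimW : ∀ θ, ∀ᵐ ω ∂P, Tendsto (fun n => Wn n θ ω) atTop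
      (nhds (fieldW ρ X Y a b θ ω)) := fun θ => by
    filter_upwards [hX.cont, hY.cont] with ω h1 h2
    exact tendsto_disc hK hρ hπK hπ hac hbc h1 h2 θ
  have hL2 : ∀ {G : ℝ → ℝ}, Continuous G → ∀ {A : ℝ} {m : ℕ},
      (∀ u, 0 ≤ u → |G u| ≤ A * (1 + u ^ m)) → ∀ n θ,
      Integrable (fun ω => G (Wn n θ ω) ^ 2) P ∧ ∫ ω, G (Wn n θ ω) ^ 2 ∂P ≤
        2 * A ^ 2 * (1 + ρ.real Set.univ ^ (2 * m) * Real.exp (σ * (2 * m : ℕ) ^ 2 / 2)) := by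
    intro G hGc A m hG n θ
    have := integral_comp_wθ_sq_le (hlaw n) (fun i => hX.integral_eq_zero (hrange n i))
      (fun i => hY.integral_eq_zero (hrange n i)) (fun i j => pair_cross hX hY hI (hrange n i))
      (fun i => ha i) (fun i => hb i) (hp n) (fun i => haσ _ (hrange n i))
      (fun i => hbσ _ (hrange n i)) hGc hG θ
    rwa [hpsum] at this
  have hmeas : ∀ {G : ℝ → ℝ}, Continuous G → ∀ n θ, AEStronglyMeasurable (fun ω => G (Wn n θ ω)) P :=
    fun hGc n θ => (hGc.comp continuous_wθ_right).comp_aestronglyMeasurable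
      (hlaw n).aemeasurable.aestronglyMeasurable
  have hlim : ∀ {G : ℝ → ℝ}, Continuous G → ∀ {A : ℝ} {m : ℕ},
      (∀ u, 0 ≤ u → |G u| ≤ A * (1 + u ^ m)) → ∀ θ,
      Tendsto (fun n => ∫ ω, G (Wn n θ ω) ∂P) atTop
        (nhds (∫ ω, G (fieldW ρ X Y a b θ ω) ∂P)) := by
    intro G hGc A m hG θ
    refine tendsto_integral_of_sq_le (fun n => hmeas hGc n θ) (fun n => (hL2 hGc hG n θ).1)
      (fun n => (hL2 hGc hG n θ).2) ?_
    filter_upwards [hlimW θ] with ω hω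
    exact (hGc.tendsto _).comp hω
  have hFc : Continuous F := continuous_iff_continuousAt.2 fun u => (hF u).continuousAt
  set G : ℝ → ℝ := fun u => u ^ 2 * |F₂ u| with hGdef
  have hGc : Continuous G := by fun_prop
  have hGg := sq_growth hA hg₂
  have hfin : ∀ n, |∫ ω, F (Wn n (Real.pi / 2) ω) ∂P - ∫ ω, F (Wn n 0 ω) ∂P| ≤
      ∫ θ in (0 : ℝ)..(Real.pi / 2), C * (Real.sin θ * Real.cos θ) *
        ∫ ω, G (Wn n θ ω) ∂P := by
    intro n
    have := finite_interp (hlaw n) (fun i => hX.integral_eq_zero (hrange n i))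
      (fun i => hY.integral_eq_zero (hrange n i)) (fun i j => pair_cross hX hY hI (hrange n i))
      (fun i j => rfl) (fun i j => rfl) (hp n) hF hF₁ hF₂ hA hg hg₁ hg₂
      (fun i j => hC _ (hrange n i) _ (hrange n j))
    simp only [ha, hb] at this
    exact this
  refine le_of_tendsto_of_tendsto ((hlim hFc hg _).sub (hlim hFc hg _)).abs ?_
    (Eventually.of_forall hfin)
  set M := 2 * (2 * A) ^ 2 * (1 + ρ.real Set.univ ^ (2 * (N + 2)) *
    Real.exp (σ * (2 * (N + 2) : ℕ) ^ 2 / 2)) with hM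
  -- The inner expectations are bounded uniformly in the discretisation and in `θ`, so dominated
  -- convergence applies to the integral over `θ`.
  have hC0 : 0 ≤ C := (abs_nonneg _).trans (hC y₀ hy₀ y₀ hy₀)
  have hbd : ∀ n θ, |∫ ω, G (Wn n θ ω) ∂P| ≤ 1 + M := by
    intro n θ
    obtain ⟨h1, h2⟩ := hL2 hGc hGg n θ
    refine (norm_integral_le_of_norm_le (f := fun ω => G (Wn n θ ω))
      (g := fun ω => 1 + G (Wn n θ ω) ^ 2) ((integrable_const 1).add h1)
      (ae_of_all _ fun ω => ?_)).trans ?_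
    · rw [Real.norm_eq_abs, abs_le]
      constructor <;> nlinarith [sq_nonneg (G (Wn n θ ω) - 1), sq_nonneg (G (Wn n θ ω) + 1)]
    · rw [integral_add (integrable_const 1) h1]
      simpa only [integral_const, probReal_univ, one_smul] using add_le_add_right h2 1
  refine intervalIntegral.tendsto_integral_filter_of_dominated_convergence (fun _ => C * (1 + M))
    (Eventually.of_forall fun n => ?_) (Eventually.of_forall fun n => ae_of_all _ fun θ _ => ?_)
    intervalIntegrable_const (ae_of_all _ fun θ _ => (hlim hGc hGg θ).const_mul _)
  · have hc := continuous_integral_wθ (hlaw n) (hp n)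
      (fun i => by rw [← ha]; exact integral_nonneg fun ω => mul_self_nonneg _)
      (fun i => by rw [← hb]; exact integral_nonneg fun ω => mul_self_nonneg _)
      (a := fun i : (π n).range => a i) (b := fun i : (π n).range => b i) hGc
      (by positivity) hGg
    exact (Continuous.mul (by fun_prop) hc).aestronglyMeasurable
  · rw [norm_mul, norm_mul, Real.norm_of_nonneg hC0, mul_assoc]
    refine mul_le_mul_of_nonneg_left ?_ hC0
    have h3 : ‖Real.sin θ * Real.cos θ‖ ≤ 1 := by
      rw [norm_mul]
      exact mul_le_one₀ (Real.abs_sin_le_one θ) (norm_nonneg _) (Real.abs_cos_le_one θ)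
    calc _ ≤ 1 * (1 + M) := mul_le_mul h3 (hbd n θ) (abs_nonneg _) zero_le_one
      _ = _ := one_mul _

end field

/-- The substitution `t = sin² θ`; no regularity of `g` is needed. -/
lemma integral_sin_sq_subst (C : ℝ) (g : ℝ → ℝ) :
    ∫ θ in (0 : ℝ)..(Real.pi / 2), C * (Real.sin θ * Real.cos θ) * g (Real.sin θ ^ 2) =
      C / 2 * ∫ t in (0 : ℝ)..1, g t := by
  have hpi : (0 : ℝ) ≤ Real.pi / 2 := by positivity
  have hsin : ∀ θ ∈ Set.Icc 0 (Real.pi / 2), 0 ≤ Real.sin θ := fun θ hθ =>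
    Real.sin_nonneg_of_nonneg_of_le_pi hθ.1 (by linarith [hθ.2, Real.pi_pos])
  have hcos : ∀ θ ∈ Set.Icc 0 (Real.pi / 2), 0 ≤ Real.cos θ := fun θ hθ =>
    Real.cos_nonneg_of_neg_pi_div_two_le_of_le (by linarith [hθ.1, Real.pi_pos]) hθ.2
  have himg : (fun θ => Real.sin θ ^ 2) '' Set.Icc 0 (Real.pi / 2) = Set.Icc 0 1 := by
    apply Set.Subset.antisymm
    · rintro _ ⟨θ, -, rfl⟩
      exact ⟨sq_nonneg _, Real.sin_sq_le_one θ⟩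
    · have := intermediate_value_Icc hpi (f := fun θ => Real.sin θ ^ 2) (by fun_prop)
      simpa using this
  have hinj : Set.InjOn (fun θ => Real.sin θ ^ 2) (Set.Icc 0 (Real.pi / 2)) := by
    intro x hx y hy h
    have h1 : Real.sin x = Real.sin y := by
      rwa [sq_eq_sq₀ (hsin x hx) (hsin y hy)] at h
    exact Real.injOn_sin ⟨by linarith [hx.1, Real.pi_pos], hx.2⟩
      ⟨by linarith [hy.1, Real.pi_pos], hy.2⟩ h1
  have hd : ∀ θ ∈ Set.Icc 0 (Real.pi / 2), HasDerivWithinAt (fun θ => Real.sin θ ^ 2)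
      (2 * (Real.sin θ * Real.cos θ)) (Set.Icc 0 (Real.pi / 2)) θ := fun θ _ => by
    refine HasDerivAt.hasDerivWithinAt ?_
    refine ((Real.hasDerivAt_sin θ).pow 2).congr_deriv ?_
    simp; ring
  have key := integral_image_eq_integral_abs_deriv_smul measurableSet_Icc hd hinj g
  rw [himg] at key
  rw [intervalIntegral.integral_of_le hpi, intervalIntegral.integral_of_le zero_le_one,
    ← integral_Icc_eq_integral_Ioc, ← integral_Icc_eq_integral_Ioc, key, ← integral_const_mul]
  refine setIntegral_congr_fun measurableSet_Icc fun θ hθ => ?_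
  simp only [smul_eq_mul]
  rw [abs_of_nonneg (by have := hsin θ hθ; have := hcos θ hθ; positivity)]
  ring

end Kahane

/-- Kahane interpolation bound: Let `K ⊂ ℝ^d` be compact, `ρ` a finite
Borel measure on `K`, `X, Y` independent centered continuous Gaussian fields on `K`.
For `t ∈ [0,1]` set `Z_t(x) = √t·X(x) + √(1−t)·Y(x)`,
`W_t = ∫_K exp(Z_t(x) − ½E[Z_t(x)²]) ρ(dx)` and `φ(t) = E[F(W_t)]` for a `C²` function
`F` such that `F, F', F''` have at most polynomial growth on `[0,∞)`. If
`|E[X(x)X(y)] − E[Y(x)Y(y)]| ≤ C` on `K × K`, then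
`|φ(1) − φ(0)| ≤ (C/2)·∫₀¹ E[W_t² · |F''(W_t)|] dt`. -/
theorem stmt_15 {d : ℕ} {Ω : Type*} [MeasureSpace Ω] [IsProbabilityMeasure (ℙ : Measure Ω)]
    (K : Set (EuclideanSpace ℝ (Fin d))) (hK : IsCompact K)
    (ρ : Measure (EuclideanSpace ℝ (Fin d))) [IsFiniteMeasure ρ] (hρ : ρ Kᶜ = 0)
    (X Y : EuclideanSpace ℝ (Fin d) → Ω → ℝ)
    (hXmeas : ∀ x, Measurable (X x)) (hYmeas : ∀ x, Measurable (Y x))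
    (hXcont : ∀ᵐ ω, ContinuousOn (fun x => X x ω) K)
    (hYcont : ∀ᵐ ω, ContinuousOn (fun x => Y x ω) K)
    (hXgauss : ∀ (n : ℕ) (x : Fin n → EuclideanSpace ℝ (Fin d)), (∀ i, x i ∈ K) →
      ∀ a : Fin n → ℝ, ∃ v : NNReal,
        Measure.map (fun ω => ∑ i, a i * X (x i) ω) ℙ = gaussianReal 0 v)
    (hYgauss : ∀ (n : ℕ) (x : Fin n → EuclideanSpace ℝ (Fin d)), (∀ i, x i ∈ K) →
      ∀ a : Fin n → ℝ, ∃ v : NNReal,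
        Measure.map (fun ω => ∑ i, a i * Y (x i) ω) ℙ = gaussianReal 0 v)
    (hIndep : IndepFun (fun ω => fun x => X x ω) (fun ω => fun x => Y x ω) ℙ)
    (Z : ℝ → EuclideanSpace ℝ (Fin d) → Ω → ℝ)
    (hZ : ∀ t x ω, Z t x ω = Real.sqrt t * X x ω + Real.sqrt (1 - t) * Y x ω)
    (W : ℝ → Ω → ℝ)
    (hW : ∀ t ω, W t ω = ∫ x in K, Real.exp (Z t x ω - (∫ ω', (Z t x ω') ^ 2) / 2) ∂ρ)
    (F : ℝ → ℝ) (hF : ContDiff ℝ 2 F)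
    (hFgrowth : ∃ A > (0:ℝ), ∃ N : ℕ, ∀ u : ℝ, 0 ≤ u →
      |F u| ≤ A * (1 + u ^ N) ∧ |deriv F u| ≤ A * (1 + u ^ N) ∧
        |deriv (deriv F) u| ≤ A * (1 + u ^ N))
    (φ : ℝ → ℝ) (hφ : ∀ t, φ t = ∫ ω, F (W t ω))
    (C : ℝ) (hC : 0 < C)
    (hcov : ∀ x ∈ K, ∀ y ∈ K,
      |(∫ ω, X x ω * X y ω) - ∫ ω, Y x ω * Y y ω| ≤ C) :
    |φ 1 - φ 0| ≤ (C / 2) * ∫ t in (0:ℝ)..1, ∫ ω, (W t ω) ^ 2 * |deriv (deriv F) (W t ω)| := by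
  rcases K.eq_empty_or_nonempty with rfl | hKne
  -- On an empty `K` every `W t` vanishes, so both sides are zero.
  · simp [hφ, hW]
  have hXg : Kahane.IsGaussField ℙ K X := ⟨hXmeas, hXcont, hXgauss⟩
  have hYg : Kahane.IsGaussField ℙ K Y := ⟨hYmeas, hYcont, hYgauss⟩
  obtain ⟨A, hA, N, hg⟩ := hFgrowth
  set a : EuclideanSpace ℝ (Fin d) → ℝ := fun x => ∫ ω, X x ω * X x ω with ha
  set b : EuclideanSpace ℝ (Fin d) → ℝ := fun x => ∫ ω, Y x ω * Y x ω with hb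
  have hF' : ContDiff ℝ 1 (deriv F) := ((contDiff_succ_iff_deriv (n := 1)).1 hF).2.2
  have main := Kahane.field_interp (ρ := ρ.restrict K) (a := a) (b := b) hK hKne
    (ae_restrict_mem hK.measurableSet) hXg hYg hIndep (fun _ => rfl) (fun _ => rfl)
    (F := F) (F₁ := deriv F) (F₂ := deriv (deriv F))
    (fun u => (hF.differentiable (by norm_num) u).hasDerivAt)
    (fun u => (hF'.differentiable (by norm_num) u).hasDerivAt)
    (hF'.continuous_deriv le_rfl) hA.le (fun u hu => (hg u hu).1) (fun u hu => (hg u hu).2.1)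
    (fun u hu => (hg u hu).2.2) hcov
  -- On the quarter circle the square roots of `sin² θ` and `1 - sin² θ` are `sin θ` and `cos θ`, and
  -- independence gives the variance of `Z` on `K`.
  have hWθ : ∀ θ ∈ Set.Icc 0 (Real.pi / 2), ∀ ω,
      W (Real.sin θ ^ 2) ω = Kahane.fieldW (ρ.restrict K) X Y a b θ ω := by
    intro θ hθ ω
    have hs : Real.sqrt (Real.sin θ ^ 2) = Real.sin θ := Real.sqrt_sq
      (Real.sin_nonneg_of_nonneg_of_le_pi hθ.1 (by linarith [hθ.2, Real.pi_pos]))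
    have hc : Real.sqrt (1 - Real.sin θ ^ 2) = Real.cos θ := by
      rw [← Real.cos_sq', Real.sqrt_sq
        (Real.cos_nonneg_of_neg_pi_div_two_le_of_le (by linarith [hθ.1, Real.pi_pos]) hθ.2)]
    rw [hW, Kahane.fieldW]
    refine setIntegral_congr_fun hK.measurableSet fun x hx => ?_
    have hvar : ∫ ω', Z (Real.sin θ ^ 2) x ω' ^ 2 =
        Real.sin θ ^ 2 * a x + Real.cos θ ^ 2 * b x := by
      have e : ∀ ω', Z (Real.sin θ ^ 2) x ω' ^ 2 = Real.sin θ ^ 2 * (X x ω' * X x ω') +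
          Real.cos θ ^ 2 * (Y x ω' * Y x ω') +
          2 * Real.sin θ * Real.cos θ * (X x ω' * Y x ω') := fun ω' => by
        rw [hZ, hs, hc]; ring
      simp_rw [e]
      have i1 : Integrable (fun ω => X x ω * X x ω) :=
        (hXg.memLp_two hx).integrable_mul (hXg.memLp_two hx)
      have i2 : Integrable (fun ω => Y x ω * Y x ω) :=
        (hYg.memLp_two hx).integrable_mul (hYg.memLp_two hx)
      have i3 : Integrable (fun ω => X x ω * Y x ω) :=
        (hXg.memLp_two hx).integrable_mul (hYg.memLp_two hx)
      have i4 : Integrable (fun ω => Real.sin θ ^ 2 * (X x ω * X x ω) +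
          Real.cos θ ^ 2 * (Y x ω * Y x ω)) := (i1.const_mul _).add (i2.const_mul _)
      rw [integral_add i4 (i3.const_mul _), integral_add (i1.const_mul _) (i2.const_mul _),
        integral_const_mul, integral_const_mul, integral_const_mul,
        Kahane.pair_cross hXg hYg hIndep hx, mul_zero, add_zero]
    rw [hvar, hZ, hs, hc]
  have hpi : (0 : ℝ) ≤ Real.pi / 2 := by positivity
  have h1 := hWθ (Real.pi / 2) (Set.right_mem_Icc.2 hpi)
  have h0 := hWθ 0 (Set.left_mem_Icc.2 hpi)
  rw [Real.sin_pi_div_two, one_pow] at h1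
  rw [Real.sin_zero, zero_pow two_ne_zero] at h0
  rw [hφ, hφ]
  simp only [h1, h0]
  refine main.trans (le_of_eq ?_)
  rw [← Kahane.integral_sin_sq_subst]
  refine intervalIntegral.integral_congr fun θ hθ => ?_
  rw [Set.uIcc_of_le hpi] at hθ
  simp only [hWθ θ hθ]
end
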